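/- Let p ∈ (0,1) be fixed. For each n, let d(n) ∈ ℕ and α = α(n) ∈ ℝ^{d(n)} be a vector of nonnegative entries. If (‖α‖₂/‖α‖₃)⁶ / n³ → 0 as n → ∞, then the total variation distance between the distribution of the Erdős–Rényi random graph G(n,p) and the distribution of the anisotropic random geometric graph G(n,p,α) converges to 1. -/

import Mathlib

open MeasureTheory ProbabilityTheory Real Filter
open scoped Classical ENNReal NNReal

noncomputable section

/-- Euclidean inner product on `Fin d → ℝ`. -/
def dotp {d : ℕ} (x y : Fin d → ℝ) : ℝ := ∑ i, x i * y i

/-- The `q`-norm of a vector `α ∈ ℝ^d`. -/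
def nrm {d : ℕ} (q : ℕ) (α : Fin d → ℝ) : ℝ := (∑ i, α i ^ q) ^ ((1 : ℝ) / q)

/-- The centered Gaussian measure `N(0, D_α)` on `ℝ^d`, `D_α = diag α`. -/
def gaussPi (d : ℕ) (α : Fin d → ℝ) : Measure (Fin d → ℝ) :=
  Measure.pi fun i => gaussianReal 0 (Real.toNNReal (α i))

/-- The law of `n` i.i.d. samples from `N(0, D_α)`. -/
def sampleMeasure (n d : ℕ) (α : Fin d → ℝ) : Measure (Fin n → Fin d → ℝ) :=
  Measure.pi fun _ => gaussPi d α

/-- `t` is the `p`-th upper quantile of `⟨X₁, X₂⟩` for `X₁, X₂` i.i.d. `N(0, D_α)`. -/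
def IsThreshold (d : ℕ) (α : Fin d → ℝ) (p t : ℝ) : Prop :=
  ((gaussPi d α).prod (gaussPi d α)) {xy | t ≤ dotp xy.1 xy.2} = ENNReal.ofReal p

instance (n : ℕ) : MeasurableSpace (SimpleGraph (Fin n)) := ⊤

/-- The anisotropic random geometric graph `G(n, p, α)`, with threshold `t = t_{p,α}`. -/
def geomGraph (n d : ℕ) (α : Fin d → ℝ) (t : ℝ) : Measure (SimpleGraph (Fin n)) :=
  Measure.map (fun X => SimpleGraph.fromRel fun i j => t ≤ dotp (X i) (X j))
    (sampleMeasure n d α)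

/-- The Erdős–Rényi random graph `G(n, p)`. -/
def erGraph (n : ℕ) (p : ℝ) : Measure (SimpleGraph (Fin n)) :=
  Measure.map (fun x => SimpleGraph.fromRel fun i j => x s(i, j) ≤ p)
    (Measure.pi fun _ : Sym2 (Fin n) => volume.restrict (Set.Icc (0 : ℝ) 1))

/-- Total variation distance between two measures. -/
def tvDist {Ω : Type*} [MeasurableSpace Ω] (μ ν : Measure Ω) : ℝ :=
  ⨆ s : {s : Set Ω // MeasurableSet s}, |(μ s.1).toReal - (ν s.1).toReal|

/-!
By scaling we may assume `‖α‖₂ = 1`, so that the hypothesis reads `n³‖α‖₃⁶ → ∞`. Centre every edge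
indicator by `p`, and let `W` be the sum, over the triples of vertices, of the products of the
weights along the triangle. Under `G(n, p)` it has mean `0` and variance of order `n³`. Under
`G(n, p, α)`, an expansion of bivariate normal orthant probabilities in the correlation shows that
if all `αᵢ` are small then its mean is at least of order `n³‖α‖₃³` and its variance is at most of
order `n³ + n⁵‖α‖₄⁴`. Since `‖α‖₄ ≤ ‖α‖₃`, Chebyshev's inequality shows that thresholding `W`
distinguishes the two graphs.

If instead some `αᵢ` is bounded below, then the signs of the `i`-th coordinates of the samples are
correlated with the centred edge weights, at the scale `n²`. The fourth power of this correlation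
is at most `n⁴` times the weighted number of four-cycles, a statistic of order `n⁴` here but only of
order `n³` in mean under `G(n, p)`, so Markov's inequality distinguishes the graphs.
-/

local notation "ϕ" => gaussianPDFReal 0 1

/-- The upper tail `Φ̄(s) = P(g ≥ s)` of a standard normal variable `g`; its density is the
local notation `ϕ`. -/
def gaussianTail (s : ℝ) : ℝ := (gaussianReal 0 1).real (Set.Ici s)

section StandardNormal

lemma stdGaussianPDF_eq : ϕ = fun s => (√(2 * π))⁻¹ * exp (-s ^ 2 / 2) := by
  ext s
  simp [gaussianPDFReal]

lemma inv_sqrt_two_pi_le_one : (√(2 * π))⁻¹ ≤ 1 := by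
  refine inv_le_one_of_one_le₀ ?_
  rw [Real.one_le_sqrt]
  linarith [Real.pi_gt_three]

lemma stdGaussianPDF_pos (s : ℝ) : 0 < ϕ s := gaussianPDFReal_pos 0 1 s one_ne_zero

lemma stdGaussianPDF_le_of_abs_le {s r : ℝ} (h : |s| ≤ |r|) : ϕ r ≤ ϕ s := by
  have := sq_le_sq.2 h
  simp only [stdGaussianPDF_eq]
  gcongr

lemma stdGaussianPDF_le_one (s : ℝ) : ϕ s ≤ 1 := by
  refine (stdGaussianPDF_le_of_abs_le (s := 0) (by simp)).trans ?_
  simpa [stdGaussianPDF_eq] using inv_sqrt_two_pi_le_one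

lemma hasDerivAt_stdGaussianPDF (s : ℝ) : HasDerivAt ϕ (-s * ϕ s) s := by
  rw [stdGaussianPDF_eq]
  have h : HasDerivAt (fun s : ℝ => -s ^ 2 / 2) (-s) s := by
    convert! ((hasDerivAt_pow 2 s).neg).div_const 2 using 1
    simp
    ring
  convert! (h.exp).const_mul ((√(2 * π))⁻¹) using 1
  ring

lemma abs_mul_stdGaussianPDF_le_one (s : ℝ) : |s| * ϕ s ≤ 1 := by
  have h_exp : |s| ≤ exp (s ^ 2 / 2) := by
    have := Real.add_one_le_exp (s ^ 2 / 2)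
    nlinarith [sq_nonneg (|s| - 1), sq_abs s]
  calc |s| * ϕ s ≤ exp (s ^ 2 / 2) * (1 * exp (-s ^ 2 / 2)) := by
        simp only [stdGaussianPDF_eq]
        gcongr
        exact inv_sqrt_two_pi_le_one
    _ = 1 := by rw [one_mul, ← Real.exp_add, neg_div, add_neg_cancel, Real.exp_zero]

lemma abs_stdGaussianPDF_sub_le (a b : ℝ) : |ϕ a - ϕ b| ≤ |a - b| := by
  have h := Convex.norm_image_sub_le_of_norm_hasDerivWithin_le (f := ϕ)
    (f' := fun s => -s * ϕ s) (s := Set.univ) (C := 1) (x := b) (y := a)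
    (fun x _ => (hasDerivAt_stdGaussianPDF x).hasDerivWithinAt)
    (fun x _ => by
      rw [Real.norm_eq_abs, abs_mul, abs_neg, abs_of_pos (stdGaussianPDF_pos x)]
      exact abs_mul_stdGaussianPDF_le_one x) convex_univ (Set.mem_univ _) (Set.mem_univ _)
  simpa using h

lemma continuous_stdGaussianPDF : Continuous ϕ := by
  rw [stdGaussianPDF_eq]
  fun_prop

lemma tendsto_stdGaussianPDF_atTop : Tendsto ϕ atTop (nhds 0) := by
  have h_sq : Tendsto (fun s : ℝ => s ^ 2 / 2) atTop atTop :=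
    (tendsto_pow_atTop two_ne_zero).atTop_div_const (by norm_num)
  have h := (Real.tendsto_exp_neg_atTop_nhds_zero.comp h_sq).const_mul (√(2 * π))⁻¹
  rw [mul_zero] at h
  simpa [stdGaussianPDF_eq, Function.comp_def, neg_div] using h

lemma gaussianTail_nonneg (s : ℝ) : 0 ≤ gaussianTail s := measureReal_nonneg

lemma gaussianTail_le_one (s : ℝ) : gaussianTail s ≤ 1 := measureReal_le_one

lemma gaussianTail_sub (a b : ℝ) : gaussianTail a - gaussianTail b = ∫ x in a..b, ϕ x := by
  have h_tail (s : ℝ) : gaussianTail s = ∫ x in Set.Ioi s, ϕ x := by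
    rw [gaussianTail, Measure.real, gaussianReal_apply_eq_integral _ one_ne_zero,
      ENNReal.toReal_ofReal, integral_Ici_eq_integral_Ioi]
    exact setIntegral_nonneg measurableSet_Ici fun x _ => gaussianPDFReal_nonneg _ _ _
  have h_int := integrable_gaussianPDFReal 0 1
  rw [h_tail, h_tail]
  exact intervalIntegral.integral_Ioi_sub_Ioi' h_int.integrableOn h_int.integrableOn

lemma abs_gaussianTail_sub_le (a b : ℝ) : |gaussianTail a - gaussianTail b| ≤ |a - b| := by
  have h := intervalIntegral.norm_integral_le_of_norm_le_const (f := ϕ) (a := a) (b := b) (C := 1)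
    fun x _ => by
      rw [Real.norm_eq_abs, abs_of_pos (stdGaussianPDF_pos x)]
      exact stdGaussianPDF_le_one x
  rw [gaussianTail_sub, abs_sub_comm a b]
  simpa using h

lemma continuous_gaussianTail : Continuous gaussianTail :=
  (LipschitzWith.of_dist_le' (K := 1) fun a b => by
    simpa [Real.dist_eq] using abs_gaussianTail_sub_le a b).continuous

lemma abs_gaussianTail_taylor_le (s u : ℝ) :
    |gaussianTail (s - u) - gaussianTail s - ϕ s * u| ≤ u ^ 2 := by
  have h_eq : gaussianTail (s - u) - gaussianTail s - ϕ s * u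
      = ∫ x in (s - u)..s, (ϕ x - ϕ s) := by
    rw [gaussianTail_sub, intervalIntegral.integral_sub
      (continuous_stdGaussianPDF.intervalIntegrable _ _) (by simp)]
    simp [mul_comm]
  have h_near (x : ℝ) (hx : x ∈ Set.uIoc (s - u) s) : ‖ϕ x - ϕ s‖ ≤ |u| := by
    have h_dist := Set.abs_sub_right_of_mem_uIcc (Set.uIoc_subset_uIcc hx)
    rw [sub_sub_cancel, abs_sub_comm] at h_dist
    exact (abs_stdGaussianPDF_sub_le x s).trans h_dist
  rw [h_eq]
  refine (intervalIntegral.norm_integral_le_of_norm_le_const h_near).trans_eq ?_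
  rw [sub_sub_cancel, ← sq, sq_abs]

lemma integral_Ici_id_gaussianReal (a : ℝ) : ∫ x in Set.Ici a, x ∂gaussianReal 0 1 = ϕ a := by
  have h_int : Integrable fun x : ℝ => x * ϕ x := by
    have h := (memLp_id_gaussianReal (μ := 0) (v := 1) 1).integrable le_rfl
    rw [gaussianReal_of_var_ne_zero _ one_ne_zero,
      integrable_withDensity_iff_integrable_smul' (measurable_gaussianPDF _ _)
        (ae_of_all _ fun _ => gaussianPDF_lt_top)] at h
    simpa [mul_comm] using h
  have h_ind : (fun x => ϕ x • (Set.Ici a).indicator (fun x => x) x)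
      = (Set.Ici a).indicator fun x => x * ϕ x := by
    ext x
    by_cases hx : x ∈ Set.Ici a <;> simp [hx, mul_comm]
  rw [← integral_indicator measurableSet_Ici, integral_gaussianReal_eq_integral_smul one_ne_zero,
    h_ind, integral_indicator measurableSet_Ici, integral_Ici_eq_integral_Ioi,
    integral_Ioi_of_hasDerivAt_of_tendsto' (f := fun x => -ϕ x) (m := 0)
      (fun x _ => by simpa using! (hasDerivAt_stdGaussianPDF x).neg) h_int.integrableOn
      (by simpa using tendsto_stdGaussianPDF_atTop.neg)]
  ring

lemma integral_sq_gaussianReal (v : ℝ≥0) : ∫ x, x ^ 2 ∂gaussianReal 0 v = v := by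
  have h := variance_fun_id_gaussianReal (μ := 0) (v := v)
  rw [variance_eq_integral (by fun_prop), integral_id_gaussianReal] at h
  simpa using h

lemma gaussianReal_sq_eq_map (σ : ℝ) :
    gaussianReal 0 (σ ^ 2).toNNReal = (gaussianReal 0 1).map (σ * ·) := by
  rw [gaussianReal_map_const_mul]
  congr 1
  · simp
  · ext
    simp [sq_nonneg]

lemma gaussianReal_real_Ici {σ : ℝ} (hσ : 0 < σ) (t : ℝ) :
    (gaussianReal 0 (σ ^ 2).toNNReal).real (Set.Ici t) = gaussianTail (t / σ) := by
  rw [gaussianReal_sq_eq_map, map_measureReal_apply (by fun_prop) measurableSet_Ici, gaussianTail]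
  congr 1
  ext x
  simp [div_le_iff₀' hσ]

end StandardNormal

lemma measureReal_prod_apply {α β : Type*} [MeasurableSpace α] [MeasurableSpace β]
    {μ : Measure α} [IsProbabilityMeasure μ] {ν : Measure β} [IsProbabilityMeasure ν]
    {s : Set (α × β)} (hs : MeasurableSet s) :
    (μ.prod ν).real s = ∫ x, ν.real (Prod.mk x ⁻¹' s) ∂μ := by
  rw [measureReal_def, Measure.prod_apply hs]
  exact (integral_toReal (measurable_measure_prodMk_left hs).aemeasurable
    (ae_of_all _ fun _ => measure_lt_top _ _)).symm

section BivariateNormal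

variable {Ω : Type*} [MeasurableSpace Ω] {P : Measure Ω} {U V : Ω → ℝ}

lemma hasGaussianLaw_sub_const_mul (h : HasGaussianLaw (fun ω => (U ω, V ω)) P) (r : ℝ) :
    HasGaussianLaw (fun ω => (U ω, V ω - r * U ω)) P := by
  simpa using h.map_fun ((ContinuousLinearMap.fst ℝ ℝ ℝ).prod
    (ContinuousLinearMap.snd ℝ ℝ ℝ - r • ContinuousLinearMap.fst ℝ ℝ ℝ))

lemma map_eq_gaussianReal_of_centered (h : HasGaussianLaw U P) (h0 : P[U] = 0) :
    P.map U = gaussianReal 0 Var[U; P].toNNReal := by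
  rw [h.map_eq_gaussianReal, h0]

variable [IsProbabilityMeasure P]

lemma covariance_sub_const_mul (h : HasGaussianLaw (fun ω => (U ω, V ω)) P) (r : ℝ) :
    cov[U, fun ω => V ω - r * U ω; P] = cov[U, V; P] - r * Var[U; P] := by
  have hU := h.fst.memLp_two
  rw [covariance_fun_sub_right hU h.snd.memLp_two (hU.const_mul r),
    covariance_const_mul_right, covariance_self hU.aemeasurable]

lemma variance_sub_const_mul (h : HasGaussianLaw (fun ω => (U ω, V ω)) P) (r : ℝ) :
    Var[fun ω => V ω - r * U ω; P] = Var[V; P] - 2 * r * cov[U, V; P] + r ^ 2 * Var[U; P] := by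
  have hU := h.fst.memLp_two
  rw [variance_fun_sub h.snd.memLp_two (hU.const_mul r), variance_const_mul,
    covariance_const_mul_right, covariance_comm]
  ring

lemma indepFun_sub_covariance_mul (h : HasGaussianLaw (fun ω => (U ω, V ω)) P)
    (hU : Var[U; P] = 1) : IndepFun U (fun ω => V ω - cov[U, V; P] * U ω) P :=
  (hasGaussianLaw_sub_const_mul h _).indepFun_of_covariance_eq_zero <| by
    rw [covariance_sub_const_mul h, hU, mul_one, sub_self]

/-- Given `U`, the variable `V` is normal with mean `ρU` and variance `1 - ρ²`. -/
lemma measureReal_le_and_le_eq_setIntegral (h : HasGaussianLaw (fun ω => (U ω, V ω)) P)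
    (hU0 : P[U] = 0) (hV0 : P[V] = 0) (hU : Var[U; P] = 1) (hV : Var[V; P] = 1)
    (hρ : cov[U, V; P] ^ 2 < 1) (a b : ℝ) :
    P.real {ω | a ≤ U ω ∧ b ≤ V ω}
      = ∫ u in Set.Ici a, gaussianTail ((b - cov[U, V; P] * u) / √(1 - cov[U, V; P] ^ 2))
          ∂gaussianReal 0 1 := by
  set ρ := cov[U, V; P] with hρ_def
  have hr : 0 < √(1 - ρ ^ 2) := Real.sqrt_pos.2 (by linarith)
  set W : Ω → ℝ := fun ω => V ω - ρ * U ω with hW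
  have hUW : HasGaussianLaw (fun ω => (U ω, W ω)) P := hasGaussianLaw_sub_const_mul h ρ
  have hW0 : P[W] = 0 := by
    rw [hW, integral_sub h.snd.integrable (h.fst.integrable.const_mul ρ), integral_const_mul,
      hU0, hV0]
    ring
  have hWvar : Var[W; P] = √(1 - ρ ^ 2) ^ 2 := by
    rw [variance_sub_const_mul h, hU, hV, ← hρ_def, Real.sq_sqrt (by linarith)]
    ring
  have h_law : P.map (fun ω => (U ω, W ω))
      = (gaussianReal 0 1).prod (gaussianReal 0 (√(1 - ρ ^ 2) ^ 2).toNNReal) := by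
    rw [(indepFun_iff_map_prod_eq_prod_map_map hUW.fst.aemeasurable hUW.snd.aemeasurable).1
      (indepFun_sub_covariance_mul h hU), map_eq_gaussianReal_of_centered hUW.fst hU0,
      map_eq_gaussianReal_of_centered hUW.snd hW0, hU, hWvar, Real.toNNReal_one]
  have hS : MeasurableSet {q : ℝ × ℝ | a ≤ q.1 ∧ b - ρ * q.1 ≤ q.2} := by measurability
  have h_set : {ω | a ≤ U ω ∧ b ≤ V ω}
      = (fun ω => (U ω, W ω)) ⁻¹' {q : ℝ × ℝ | a ≤ q.1 ∧ b - ρ * q.1 ≤ q.2} := by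
    ext ω
    simp [hW]
  rw [h_set, measureReal_def, ← Measure.map_apply_of_aemeasurable hUW.aemeasurable hS, h_law,
    ← measureReal_def, measureReal_prod_apply hS, ← integral_indicator measurableSet_Ici]
  congr 1
  ext u
  by_cases hu : a ≤ u
  · simp [hu, ← gaussianReal_real_Ici hr, Set.Ici]
  · simp [hu]

lemma inv_sqrt_one_sub_sq_sub_one_mem_Icc {ρ : ℝ} (hρ : |ρ| ≤ 1 / 2) :
    (√(1 - ρ ^ 2))⁻¹ - 1 ∈ Set.Icc 0 (ρ ^ 2) := by
  have hρ_sq : ρ ^ 2 ≤ 1 / 4 := by nlinarith [sq_abs ρ, abs_nonneg ρ]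
  set r := √(1 - ρ ^ 2)
  have hr_sq : r ^ 2 = 1 - ρ ^ 2 := Real.sq_sqrt (by linarith)
  have hr_ge : 3 / 4 ≤ r := Real.le_sqrt_of_sq_le (by linarith)
  have hr_le : r ≤ 1 := Real.sqrt_le_one.2 (by linarith [sq_nonneg ρ])
  refine ⟨sub_nonneg.2 ((one_le_inv₀ (by linarith)).2 hr_le), ?_⟩
  rw [← one_div, sub_le_iff_le_add, div_le_iff₀ (by linarith)]
  nlinarith

lemma abs_gaussianTail_div_sqrt_taylor_le {ρ : ℝ} (hρ : |ρ| ≤ 1 / 2) (b u : ℝ) :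
    |gaussianTail ((b - ρ * u) / √(1 - ρ ^ 2)) - (gaussianTail b + ϕ b * ρ * u)|
      ≤ ρ ^ 2 * (2 + b ^ 2 + 5 * u ^ 2) := by
  have hρ_sq : ρ ^ 2 ≤ 1 / 4 := by nlinarith [sq_abs ρ, abs_nonneg ρ]
  have hr : √(1 - ρ ^ 2) ≠ 0 := (Real.sqrt_pos.2 (by linarith)).ne'
  obtain ⟨q, hq⟩ : ∃ q, q = (√(1 - ρ ^ 2))⁻¹ - 1 := ⟨_, rfl⟩
  obtain ⟨hq_nonneg, hq_le⟩ := hq ▸ inv_sqrt_one_sub_sq_sub_one_mem_Icc hρ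
  have hϕ := stdGaussianPDF_pos b
  set w := ρ * u * (1 + q) - b * q with hw
  have h_arg : (b - ρ * u) / √(1 - ρ ^ 2) = b - w := by
    rw [hw, hq]
    field_simp
    ring
  have h_linear : |ϕ b * (w - ρ * u)| ≤ ρ ^ 2 * (2 + u ^ 2) := by
    have h_factor : ϕ b * (w - ρ * u) = q * (ϕ b * (ρ * u) - b * ϕ b) := by rw [hw]; ring
    have h_first : |ϕ b * (ρ * u)| ≤ 1 * (1 / 2 * |u|) := by
      rw [abs_mul, abs_mul, abs_of_pos hϕ]
      gcongr
      exact stdGaussianPDF_le_one b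
    have h_second : |b * ϕ b| ≤ 1 := by
      rw [abs_mul, abs_of_pos hϕ]
      exact abs_mul_stdGaussianPDF_le_one b
    rw [h_factor, abs_mul, abs_of_nonneg hq_nonneg]
    gcongr
    refine (abs_sub _ _).trans ?_
    nlinarith [sq_nonneg (|u| - 1), sq_abs u]
  have h_sq : w ^ 2 ≤ ρ ^ 2 * (b ^ 2 + 4 * u ^ 2) := by
    have h_q1 : (1 + q) ^ 2 ≤ 2 := by nlinarith
    have h_q2 : 2 * q ^ 2 ≤ ρ ^ 2 := by nlinarith
    calc w ^ 2 ≤ 2 * ((1 + q) ^ 2 * (ρ * u) ^ 2) + 2 * q ^ 2 * b ^ 2 := by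
          rw [hw]; nlinarith [sq_nonneg (ρ * u * (1 + q) + b * q)]
      _ ≤ 2 * (2 * (ρ * u) ^ 2) + ρ ^ 2 * b ^ 2 := by gcongr
      _ = ρ ^ 2 * (b ^ 2 + 4 * u ^ 2) := by ring
  rw [h_arg]
  calc _ = |(gaussianTail (b - w) - gaussianTail b - ϕ b * w) + ϕ b * (w - ρ * u)| := by ring_nf
    _ ≤ w ^ 2 + ρ ^ 2 * (2 + u ^ 2) :=
      (abs_add_le _ _).trans (add_le_add (abs_gaussianTail_taylor_le b w) h_linear)
    _ ≤ _ := by linarith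

lemma integral_Ici_affine_gaussianReal (a c e : ℝ) :
    ∫ u in Set.Ici a, (c + e * u) ∂gaussianReal 0 1 = gaussianTail a * c + e * ϕ a := by
  have h_id : Integrable (fun u : ℝ => u) (gaussianReal 0 1) :=
    (memLp_id_gaussianReal 1).integrable le_rfl
  rw [integral_add (integrable_const c) (h_id.const_mul e).integrableOn, setIntegral_const,
    integral_const_mul, integral_Ici_id_gaussianReal, smul_eq_mul, gaussianTail]

lemma abs_measureReal_le_and_le_sub_le_of_abs_covariance_le
    (h : HasGaussianLaw (fun ω => (U ω, V ω)) P)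
    (hU0 : P[U] = 0) (hV0 : P[V] = 0) (hU : Var[U; P] = 1) (hV : Var[V; P] = 1)
    (hρ : |cov[U, V; P]| ≤ 1 / 2) (a b : ℝ) :
    |P.real {ω | a ≤ U ω ∧ b ≤ V ω}
        - (gaussianTail a * gaussianTail b + cov[U, V; P] * ϕ a * ϕ b)|
      ≤ (7 + b ^ 2) * cov[U, V; P] ^ 2 := by
  rw [measureReal_le_and_le_eq_setIntegral h hU0 hV0 hU hV
    (by nlinarith [sq_abs cov[U, V; P], abs_nonneg cov[U, V; P]])]
  set ρ := cov[U, V; P]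
  have h_sq_int : Integrable (fun u : ℝ => u ^ 2) (gaussianReal 0 1) :=
    (memLp_id_gaussianReal 2).integrable_sq
  have h_id : Integrable (fun u : ℝ => u) (gaussianReal 0 1) :=
    (memLp_id_gaussianReal 1).integrable le_rfl
  have h_bound_int : Integrable (fun u => ρ ^ 2 * (2 + b ^ 2 + 5 * u ^ 2)) (gaussianReal 0 1) :=
    ((integrable_const _).add (h_sq_int.const_mul 5)).const_mul _
  have h_tail_int : Integrable (fun u => gaussianTail ((b - ρ * u) / √(1 - ρ ^ 2)))
      (gaussianReal 0 1) :=
    .of_bound (continuous_gaussianTail.comp (by fun_prop)).aestronglyMeasurable 1 <|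
      ae_of_all _ fun u => by
        rw [Real.norm_eq_abs, abs_of_nonneg (gaussianTail_nonneg _)]
        exact gaussianTail_le_one _
  have h_affine_int : Integrable (fun u => gaussianTail b + ϕ b * ρ * u) (gaussianReal 0 1) :=
    (integrable_const _).add (h_id.const_mul _)
  have h_affine : gaussianTail a * gaussianTail b + ρ * ϕ a * ϕ b
      = ∫ u in Set.Ici a, (gaussianTail b + ϕ b * ρ * u) ∂gaussianReal 0 1 := by
    rw [integral_Ici_affine_gaussianReal]
    ring
  rw [h_affine, ← integral_sub h_tail_int.integrableOn h_affine_int.integrableOn]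
  rw [← Real.norm_eq_abs]
  refine (norm_integral_le_of_norm_le h_bound_int.integrableOn
    (ae_of_all _ fun u => abs_gaussianTail_div_sqrt_taylor_le hρ b u)).trans ?_
  calc ∫ u in Set.Ici a, ρ ^ 2 * (2 + b ^ 2 + 5 * u ^ 2) ∂gaussianReal 0 1
      ≤ ∫ u, ρ ^ 2 * (2 + b ^ 2 + 5 * u ^ 2) ∂gaussianReal 0 1 :=
        setIntegral_le_integral h_bound_int (ae_of_all _ fun u => by positivity)
    _ = (7 + b ^ 2) * ρ ^ 2 := by
        rw [integral_const_mul, integral_add (integrable_const _) (h_sq_int.const_mul 5),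
          integral_const_mul, integral_sq_gaussianReal]
        simp
        ring

lemma abs_measureReal_le_and_le_sub_le (h : HasGaussianLaw (fun ω => (U ω, V ω)) P)
    (hU0 : P[U] = 0) (hV0 : P[V] = 0) (hU : Var[U; P] = 1) (hV : Var[V; P] = 1) (a b : ℝ) :
    |P.real {ω | a ≤ U ω ∧ b ≤ V ω}
        - (gaussianTail a * gaussianTail b + cov[U, V; P] * ϕ a * ϕ b)|
      ≤ (7 + b ^ 2) * cov[U, V; P] ^ 2 := by
  rcases le_or_gt |cov[U, V; P]| (1 / 2) with hρ | hρ
  · exact abs_measureReal_le_and_le_sub_le_of_abs_covariance_le h hU0 hV0 hU hV hρ a b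
  set ρ := cov[U, V; P]
  have h_tails : gaussianTail a * gaussianTail b ≤ 1 :=
    mul_le_one₀ (gaussianTail_le_one a) (gaussianTail_nonneg b) (gaussianTail_le_one b)
  have h_cov : |ρ * ϕ a * ϕ b| ≤ |ρ| := by
    rw [abs_mul, abs_mul, abs_of_pos (stdGaussianPDF_pos a), abs_of_pos (stdGaussianPDF_pos b),
      mul_assoc]
    exact mul_le_of_le_one_right (abs_nonneg ρ) (mul_le_one₀ (stdGaussianPDF_le_one a)
      (stdGaussianPDF_pos b).le (stdGaussianPDF_le_one b))
  have h_nonneg : 0 ≤ P.real {ω | a ≤ U ω ∧ b ≤ V ω} := measureReal_nonneg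
  have h_le_one : P.real {ω | a ≤ U ω ∧ b ≤ V ω} ≤ 1 := measureReal_le_one
  have h_tails' := mul_nonneg (gaussianTail_nonneg a) (gaussianTail_nonneg b)
  rw [abs_le] at h_cov ⊢
  constructor <;> nlinarith [sq_abs ρ, mul_nonneg (sq_nonneg b) (sq_nonneg ρ)]

lemma integral_indicator_Ici_mul_eq (h : HasGaussianLaw (fun ω => (U ω, V ω)) P)
    (hU0 : P[U] = 0) (hV0 : P[V] = 0) (hU : Var[U; P] = 1) (a : ℝ) :
    ∫ ω, (Set.Ici a).indicator 1 (U ω) * V ω ∂P = cov[U, V; P] * ϕ a := by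
  set ρ := cov[U, V; P]
  set I : ℝ → ℝ := (Set.Ici a).indicator 1 with hI
  have hI_meas : Measurable I := measurable_one.indicator measurableSet_Ici
  have hI_aesm : AEStronglyMeasurable (fun ω => I (U ω)) P :=
    (hI_meas.comp_aemeasurable h.fst.aemeasurable).aestronglyMeasurable
  have hI_bound (x : ℝ) : ‖I x‖ ≤ 1 := by
    by_cases hx : x ∈ Set.Ici a <;> simp [hI, hx]
  have h_bdd {f : Ω → ℝ} (hf : Integrable f P) : Integrable (fun ω => I (U ω) * f ω) P :=
    hf.bdd_mul hI_aesm (ae_of_all _ fun _ => hI_bound _)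
  have h_res_int : Integrable (fun ω => V ω - ρ * U ω) P :=
    h.snd.integrable.sub (h.fst.integrable.const_mul ρ)
  have h_res : ∫ ω, I (U ω) * (V ω - ρ * U ω) ∂P = 0 := by
    have h_ind : IndepFun (fun ω => I (U ω)) (fun ω => V ω - ρ * U ω) P :=
      (indepFun_sub_covariance_mul h hU).comp (φ := I) (ψ := id) hI_meas measurable_id
    rw [h_ind.integral_fun_mul_eq_mul_integral hI_aesm h_res_int.aestronglyMeasurable,
      integral_sub h.snd.integrable (h.fst.integrable.const_mul ρ), integral_const_mul, hU0, hV0]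
    simp
  have h_self : ∫ ω, I (U ω) * U ω ∂P = ϕ a := by
    rw [← integral_map (f := fun x => I x * x) h.fst.aemeasurable
      (hI_meas.mul measurable_id).aestronglyMeasurable,
      map_eq_gaussianReal_of_centered h.fst hU0, hU, Real.toNNReal_one,
      ← integral_Ici_id_gaussianReal, ← integral_indicator measurableSet_Ici]
    congr 1 with x
    by_cases hx : x ∈ Set.Ici a <;> simp [hI, hx]
  calc ∫ ω, I (U ω) * V ω ∂P
      = ∫ ω, (I (U ω) * (V ω - ρ * U ω) + ρ * (I (U ω) * U ω)) ∂P := by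
        congr 1 with ω
        ring
    _ = ρ * ϕ a := by
        rw [integral_add (h_bdd h_res_int) ((h_bdd h.fst.integrable).const_mul ρ), h_res,
          integral_const_mul, h_self, zero_add]

end BivariateNormal

section GaussianVector

variable {d : ℕ}

/-- The bilinear form `∑ αᵢ xᵢ yᵢ`, which for nonnegative weights `α` is the covariance of
`⟨x, Z⟩` and `⟨y, Z⟩` when `Z` has law `N(0, D_α)`. -/
def covForm (α x y : Fin d → ℝ) : ℝ := ∑ i, α i * x i * y i

/-- The variance of `g²` for a standard normal variable `g`. -/
def gaussianSqVariance : ℝ := Var[fun x => x ^ 2; gaussianReal 0 1]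

lemma gaussianSqVariance_nonneg : 0 ≤ gaussianSqVariance := variance_nonneg _ _

lemma variance_sq_gaussianReal {v : ℝ} (hv : 0 ≤ v) :
    Var[fun x => x ^ 2; gaussianReal 0 v.toNNReal] = v ^ 2 * gaussianSqVariance := by
  obtain ⟨σ, rfl⟩ : ∃ σ, v = σ ^ 2 := ⟨√v, (Real.sq_sqrt hv).symm⟩
  rw [gaussianReal_sq_eq_map, variance_map (by fun_prop) (by fun_prop), gaussianSqVariance,
    ← variance_const_mul]
  simp [Function.comp_def, mul_pow]

lemma memLp_sq_gaussianReal (v : ℝ≥0) : MemLp (fun x : ℝ => x ^ 2) 2 (gaussianReal 0 v) := by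
  rw [memLp_two_iff_integrable_sq (by fun_prop)]
  have h := (memLp_id_gaussianReal (μ := 0) (v := v) 4).integrable_norm_pow (by norm_num)
  simpa [← pow_mul, (show Even 4 by decide).pow_abs] using h

lemma measurable_dotp_right (x : Fin d → ℝ) : Measurable (dotp x) := by
  unfold dotp
  fun_prop

lemma measurable_dotp : Measurable fun q : (Fin d → ℝ) × (Fin d → ℝ) => dotp q.1 q.2 := by
  unfold dotp
  fun_prop

lemma dotp_comm (x y : Fin d → ℝ) : dotp x y = dotp y x := by
  simp only [dotp, mul_comm]

lemma measurable_covForm (w : Fin d → ℝ) :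
    Measurable fun q : (Fin d → ℝ) × (Fin d → ℝ) => covForm w q.1 q.2 := by
  unfold covForm
  fun_prop

lemma dotp_mul_left (w x y : Fin d → ℝ) : dotp (w * x) y = covForm w x y := rfl

lemma dotp_eq_covForm_one (x y : Fin d → ℝ) : dotp x y = covForm 1 x y := by
  simp [dotp, covForm]

lemma covForm_self_nonneg {w : Fin d → ℝ} (hw : ∀ i, 0 ≤ w i) (x : Fin d → ℝ) :
    0 ≤ covForm w x x :=
  Finset.sum_nonneg fun i _ => by
    rw [mul_assoc]
    exact mul_nonneg (hw i) (mul_self_nonneg _)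

variable (α : Fin d → ℝ)

instance : IsProbabilityMeasure (gaussPi d α) := by
  unfold gaussPi
  infer_instance

lemma measurePreserving_eval_gaussPi (i : Fin d) :
    MeasurePreserving (Function.eval i) (gaussPi d α) (gaussianReal 0 (α i).toNNReal) :=
  measurePreserving_eval (fun i => gaussianReal 0 (α i).toNNReal) i

lemma iIndepFun_eval_gaussPi :
    iIndepFun (fun (i : Fin d) (z : Fin d → ℝ) => z i) (gaussPi d α) :=
  iIndepFun_pi (X := fun _ x => x) fun i => by fun_prop

lemma memLp_eval_gaussPi (i : Fin d) : MemLp (fun z : Fin d → ℝ => z i) 2 (gaussPi d α) :=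
  (memLp_id_gaussianReal 2).comp_measurePreserving (measurePreserving_eval_gaussPi α i)

lemma hasGaussianLaw_gaussPi : HasGaussianLaw (fun z : Fin d → ℝ => z) (gaussPi d α) := by
  refine iIndepFun.hasGaussianLaw (X := fun (i : Fin d) (z : Fin d → ℝ) => z i) (fun i => ⟨?_⟩)
    (iIndepFun_eval_gaussPi α)
  have h_map := (measurePreserving_eval_gaussPi α i).map_eq
  rw [show Function.eval i = fun z : Fin d → ℝ => z i from rfl] at h_map
  rw [h_map]
  infer_instance

lemma hasGaussianLaw_dotp_prodMk (a b : Fin d → ℝ) :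
    HasGaussianLaw (fun z => (dotp a z, dotp b z)) (gaussPi d α) := by
  let L (c : Fin d → ℝ) : (Fin d → ℝ) →L[ℝ] ℝ :=
    ∑ i, c i • ContinuousLinearMap.proj (R := ℝ) (φ := fun _ : Fin d => ℝ) i
  have hL (c z : Fin d → ℝ) : L c z = dotp c z := by simp [L, dotp]
  simpa [hL] using (hasGaussianLaw_gaussPi α).map_fun ((L a).prod (L b))

lemma memLp_dotp (a : Fin d → ℝ) : MemLp (dotp a) 2 (gaussPi d α) :=
  (hasGaussianLaw_dotp_prodMk α a a).fst.memLp_two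

lemma integral_dotp (a : Fin d → ℝ) : ∫ z, dotp a z ∂gaussPi d α = 0 := by
  have h_eval (i : Fin d) : ∫ z, z i ∂gaussPi d α = 0 := by
    have h := integral_map (μ := gaussPi d α) (f := id) (measurable_pi_apply i).aemeasurable
      measurable_id.aestronglyMeasurable
    have h_map := (measurePreserving_eval_gaussPi α i).map_eq
    rw [show Function.eval i = fun z : Fin d → ℝ => z i from rfl] at h_map
    rw [h_map] at h
    simpa using h.symm
  simp only [dotp]
  rw [integral_finsetSum _ fun i _ =>
    ((memLp_eval_gaussPi α i).integrable (by norm_num)).const_mul _]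
  simp [integral_const_mul, h_eval]

variable {α} (hα : ∀ i, 0 ≤ α i)
include hα

lemma covariance_eval_gaussPi (i j : Fin d) :
    cov[fun z : Fin d → ℝ => z i, fun z => z j; gaussPi d α] = if i = j then α i else 0 := by
  split_ifs with h
  · subst h
    rw [covariance_self (measurable_pi_apply i).aemeasurable]
    have h_var := (measurePreserving_eval_gaussPi α i).variance_fun_comp
      (f := fun x => x) (by fun_prop)
    simpa [hα i] using h_var
  · exact ((iIndepFun_eval_gaussPi α).indepFun h).covariance_eq_zero
      (memLp_eval_gaussPi α i) (memLp_eval_gaussPi α j)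

lemma covariance_dotp (a b : Fin d → ℝ) :
    cov[dotp a, dotp b; gaussPi d α] = covForm α a b := by
  unfold dotp
  rw [covariance_fun_sum_fun_sum (fun i => (memLp_eval_gaussPi α i).const_mul _)
    fun i => (memLp_eval_gaussPi α i).const_mul _]
  simp only [covariance_const_mul_left, covariance_const_mul_right, covariance_eval_gaussPi hα]
  simp [covForm, mul_comm, mul_left_comm]

lemma variance_dotp (a : Fin d → ℝ) : Var[dotp a; gaussPi d α] = covForm α a a := by
  rw [← covariance_self (measurable_dotp_right a).aemeasurable, covariance_dotp hα]

lemma integral_dotp_sq (a : Fin d → ℝ) : ∫ z, dotp a z ^ 2 ∂gaussPi d α = covForm α a a := by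
  rw [← variance_dotp hα, variance_eq_integral (measurable_dotp_right a).aemeasurable,
    integral_dotp]
  simp

lemma integral_covForm_self (w : Fin d → ℝ) :
    ∫ x, covForm w x x ∂gaussPi d α = ∑ i, w i * α i := by
  have h_sq (i : Fin d) : ∫ x : Fin d → ℝ, x i * x i ∂gaussPi d α = α i := by
    have h := integral_dotp_sq hα (Pi.single i 1)
    simpa [dotp, covForm, Pi.single_apply, ← sq] using h
  have h_int (i : Fin d) : Integrable (fun x : Fin d → ℝ => x i * x i) (gaussPi d α) :=
    (memLp_eval_gaussPi α i).integrable_mul (memLp_eval_gaussPi α i)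
  simp only [covForm, mul_assoc]
  rw [integral_finsetSum _ fun i _ => (h_int i).const_mul _]
  simp [integral_const_mul, h_sq]

omit hα in
lemma memLp_covForm_self (w : Fin d → ℝ) : MemLp (fun x => covForm w x x) 2 (gaussPi d α) := by
  simp only [covForm, mul_assoc]
  refine memLp_finsetSum _ fun i _ => MemLp.const_mul ?_ _
  simpa [Function.comp_def, sq] using!
    (memLp_sq_gaussianReal _).comp_measurePreserving (measurePreserving_eval_gaussPi α i)

lemma variance_covForm_self (w : Fin d → ℝ) :
    Var[fun x => covForm w x x; gaussPi d α] = gaussianSqVariance * ∑ i, (w i * α i) ^ 2 := by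
  have h_sum : (fun x : Fin d → ℝ => covForm w x x) = ∑ i, fun x => w i * x i ^ 2 := by
    ext x
    simp [covForm, mul_assoc, sq]
  rw [h_sum, gaussPi, variance_sum_pi (X := fun i x => w i * x ^ 2)
    fun i => (memLp_sq_gaussianReal _).const_mul _, Finset.mul_sum]
  refine Finset.sum_congr rfl fun i _ => ?_
  rw [variance_const_mul, variance_sq_gaussianReal (hα i)]
  ring

lemma integral_covForm_self_sub_sq (w : Fin d → ℝ) :
    ∫ x, (covForm w x x - ∑ i, w i * α i) ^ 2 ∂gaussPi d α
      = gaussianSqVariance * ∑ i, (w i * α i) ^ 2 := by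
  rw [← variance_covForm_self hα, variance_eq_integral (memLp_covForm_self w).aemeasurable,
    integral_covForm_self hα]

omit hα in
lemma memLp_covForm_prod (w : Fin d → ℝ) :
    MemLp (fun q : (Fin d → ℝ) × (Fin d → ℝ) => covForm w q.1 q.2) 2
      ((gaussPi d α).prod (gaussPi d α)) := by
  simp only [covForm, mul_assoc]
  refine memLp_finsetSum _ fun i _ => MemLp.const_mul ?_ _
  rw [memLp_two_iff_integrable_sq (by fun_prop)]
  simpa [mul_pow] using (memLp_eval_gaussPi α i).integrable_sq.mul_prod
    (memLp_eval_gaussPi α i).integrable_sq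

lemma integral_covForm_sq (w : Fin d → ℝ) :
    ∫ q, covForm w q.1 q.2 ^ 2 ∂(gaussPi d α).prod (gaussPi d α) = ∑ i, (w i * α i) ^ 2 := by
  have h_inner (x : Fin d → ℝ) :
      ∫ y, covForm w x y ^ 2 ∂gaussPi d α = covForm (α * w ^ 2) x x := by
    refine (integral_dotp_sq hα (w * x)).trans ?_
    simp only [covForm, Pi.mul_apply, Pi.pow_apply]
    exact Finset.sum_congr rfl fun i _ => by ring
  rw [integral_prod _ (memLp_covForm_prod w).integrable_sq]
  simp only [h_inner, integral_covForm_self hα, Pi.mul_apply, Pi.pow_apply]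
  exact Finset.sum_congr rfl fun i _ => by ring

end GaussianVector

section KernelSquare

variable {S : Type*} [MeasurableSpace S] (μ : Measure S) {K : S → S → ℝ}

/-- The square of the integral operator with kernel `K`: its kernel is the mean number of weighted
paths of length two from `x` to `y`. -/
def kernelSquare (K : S → S → ℝ) (x y : S) : ℝ := ∫ z, K x z * K y z ∂μ

/-- The mean weighted number `∫∫∫ K(x, y) K(x, z) K(y, z)` of triangles of a kernel `K`. -/
def triangleMean (K : S → S → ℝ) : ℝ := ∫ q, K q.1 q.2 * kernelSquare μ K q.1 q.2 ∂μ.prod μ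

lemma measurable_kernelSquare [SFinite μ] (hK : Measurable fun q : S × S => K q.1 q.2) :
    Measurable fun q : S × S => kernelSquare μ K q.1 q.2 := by
  have h_prod : Measurable fun r : (S × S) × S => K r.1.1 r.2 * K r.1.2 r.2 :=
    (hK.comp (by fun_prop : Measurable fun r : (S × S) × S => (r.1.1, r.2))).mul
      (hK.comp (by fun_prop : Measurable fun r : (S × S) × S => (r.1.2, r.2)))
  exact h_prod.stronglyMeasurable.integral_prod_right.measurable

lemma abs_kernelSquare_le_one [IsProbabilityMeasure μ] (hK_le : ∀ x y, |K x y| ≤ 1) (x y : S) :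
    |kernelSquare μ K x y| ≤ 1 := by
  have h := norm_integral_le_of_norm_le_const (μ := μ) (f := fun z => K x z * K y z) (C := 1) <|
    ae_of_all _ fun z => by
      rw [Real.norm_eq_abs, abs_mul]
      exact mul_le_one₀ (hK_le x z) (abs_nonneg _) (hK_le y z)
  simpa [kernelSquare] using h

lemma integrable_kernelSquare_sq [IsProbabilityMeasure μ]
    (hK : Measurable fun q : S × S => K q.1 q.2) (hK_le : ∀ x y, |K x y| ≤ 1) :
    Integrable (fun q : S × S => kernelSquare μ K q.1 q.2 ^ 2) (μ.prod μ) :=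
  Integrable.of_bound (C := 1) ((measurable_kernelSquare μ hK).pow_const 2).aestronglyMeasurable
    (ae_of_all _ fun q => by
      rw [norm_pow]
      exact pow_le_one₀ (norm_nonneg _) (abs_kernelSquare_le_one μ hK_le _ _))

lemma integral_mul_sub_le_triangleMean [IsProbabilityMeasure μ]
    (hK : Measurable fun q : S × S => K q.1 q.2) (hK_le : ∀ x y, |K x y| ≤ 1) {A : S × S → ℝ}
    (hA : Integrable A (μ.prod μ)) :
    ∫ q, K q.1 q.2 * A q ∂μ.prod μ - ∫ q, |kernelSquare μ K q.1 q.2 - A q| ∂μ.prod μ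
      ≤ triangleMean μ K := by
  have hH_int : Integrable (fun q : S × S => kernelSquare μ K q.1 q.2) (μ.prod μ) :=
    Integrable.of_bound (C := 1) (measurable_kernelSquare μ hK).aestronglyMeasurable
      (ae_of_all _ fun q => abs_kernelSquare_le_one μ hK_le _ _)
  have h_mul {F : S × S → ℝ} (hF : Integrable F (μ.prod μ)) :
      Integrable (fun q => K q.1 q.2 * F q) (μ.prod μ) :=
    hF.bdd_mul (c := 1) hK.aestronglyMeasurable (ae_of_all _ fun q => hK_le _ _)
  have h_dist : Integrable (fun q => |kernelSquare μ K q.1 q.2 - A q|) (μ.prod μ) :=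
    (hH_int.sub hA).abs
  rw [← integral_sub (h_mul hA) h_dist]
  refine integral_mono ((h_mul hA).sub h_dist) (h_mul hH_int) fun q => ?_
  have h_dev : -|kernelSquare μ K q.1 q.2 - A q|
      ≤ K q.1 q.2 * (kernelSquare μ K q.1 q.2 - A q) := by
    refine neg_le_of_abs_le ?_
    rw [abs_mul]
    exact mul_le_of_le_one_left (abs_nonneg _) (hK_le _ _)
  simp only
  linarith

end KernelSquare

section NearUnitVariance

lemma abs_inv_sqrt_sub_one_le {v : ℝ} (hv : |v - 1| ≤ 1 / 2) : |(√v)⁻¹ - 1| ≤ |v - 1| := by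
  have hv_ge : 1 / 2 ≤ v := by linarith [(abs_le.1 hv).1]
  have h_sq : √v ^ 2 = v := Real.sq_sqrt (by linarith)
  have h_ge : 2 / 3 ≤ √v := Real.le_sqrt_of_sq_le (by linarith)
  have h_factor : (√v)⁻¹ - 1 = (1 - v) / (√v * (1 + √v)) := by
    rw [eq_div_iff (by positivity), ← h_sq, Real.sqrt_sq (by positivity)]
    field_simp
    ring
  rw [h_factor, abs_div, abs_of_pos (by positivity : 0 < √v * (1 + √v)), abs_sub_comm]
  exact div_le_self (abs_nonneg _) (by nlinarith)

lemma abs_mul_stdGaussianPDF_mul_sub_le (t r : ℝ) :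
    |r * ϕ (t * r) - ϕ t| ≤ (1 + |t|) * |r - 1| :=
  calc |r * ϕ (t * r) - ϕ t| = |(r - 1) * ϕ (t * r) + (ϕ (t * r) - ϕ t)| := by ring_nf
    _ ≤ |r - 1| * 1 + |t * r - t| := by
        refine (abs_add_le _ _).trans (add_le_add ?_ (abs_stdGaussianPDF_sub_le _ _))
        rw [abs_mul, abs_of_pos (stdGaussianPDF_pos _)]
        gcongr
        exact stdGaussianPDF_le_one _
    _ = (1 + |t|) * |r - 1| := by
        rw [show t * r - t = t * (r - 1) by ring, abs_mul]
        ring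

lemma abs_mul_stdGaussianPDF_mul_le (t : ℝ) {r : ℝ} (hr : |r - 1| ≤ 1 / 2) :
    |r * ϕ (t * r)| ≤ 3 / 2 := by
  obtain ⟨hr_ge, hr_le⟩ := abs_le.1 hr
  rw [abs_mul, abs_of_pos (stdGaussianPDF_pos _), abs_of_pos (by linarith : 0 < r)]
  nlinarith [stdGaussianPDF_le_one (t * r), stdGaussianPDF_pos (t * r)]

lemma abs_mul_mul_sub_sq_le (t c : ℝ) {r s : ℝ} (hr : |r - 1| ≤ 1 / 2) :
    |c * (r * ϕ (t * r)) * (s * ϕ (t * s)) - ϕ t ^ 2 * c|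
      ≤ 2 * (1 + t ^ 2) * (c ^ 2 + (r - 1) ^ 2 + (s - 1) ^ 2) := by
  set A := r * ϕ (t * r)
  set B := s * ϕ (t * s)
  have h_split : c * A * B - ϕ t ^ 2 * c = c * (A * (B - ϕ t) + (A - ϕ t) * ϕ t) := by ring
  have h_bracket : |A * (B - ϕ t) + (A - ϕ t) * ϕ t|
      ≤ 3 / 2 * ((1 + |t|) * |s - 1|) + (1 + |t|) * |r - 1| * 1 := by
    refine (abs_add_le _ _).trans ?_
    rw [abs_mul A, abs_mul (A - ϕ t), abs_of_pos (stdGaussianPDF_pos t)]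
    gcongr
    · exact abs_mul_stdGaussianPDF_mul_le t hr
    · exact abs_mul_stdGaussianPDF_mul_sub_le t s
    · exact (stdGaussianPDF_pos t).le
    · exact abs_mul_stdGaussianPDF_mul_sub_le t r
    · exact stdGaussianPDF_le_one t
  have h_t : 1 + |t| ≤ 3 / 2 * (1 + t ^ 2) := by nlinarith [sq_abs t, sq_nonneg (|t| - 1)]
  calc _ ≤ |c| * (3 / 2 * ((1 + |t|) * |s - 1|) + (1 + |t|) * |r - 1| * 1) := by
        rw [h_split, abs_mul]
        gcongr
    _ = (1 + |t|) * (3 / 2 * (|c| * |s - 1|) + |c| * |r - 1|) := by ring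
    _ ≤ 3 / 2 * (1 + t ^ 2) * (5 / 4 * (c ^ 2 + (r - 1) ^ 2 + (s - 1) ^ 2)) := by
        gcongr
        nlinarith [sq_nonneg (|c| - |s - 1|), sq_nonneg (|c| - |r - 1|), sq_abs c,
          sq_abs (s - 1), sq_abs (r - 1)]
    _ ≤ _ := by nlinarith [sq_nonneg t, sq_nonneg c, sq_nonneg (r - 1), sq_nonneg (s - 1),
        mul_nonneg (sq_nonneg t) (add_nonneg (sq_nonneg c)
          (add_nonneg (sq_nonneg (r - 1)) (sq_nonneg (s - 1))))]

end NearUnitVariance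

section DotTail

variable {d : ℕ}

/-- The probability `P(⟨x, Z⟩ ≥ t)` for `Z` of law `N(0, D_α)`. -/
def dotpTail (α : Fin d → ℝ) (t : ℝ) (x : Fin d → ℝ) : ℝ := (gaussPi d α).real {y | t ≤ dotp x y}

lemma measurableSet_le_dotp (t : ℝ) (x : Fin d → ℝ) : MeasurableSet {y | t ≤ dotp x y} :=
  measurableSet_le measurable_const (measurable_dotp_right x)

lemma measurableSet_le_dotp_prod (t : ℝ) :
    MeasurableSet {q : (Fin d → ℝ) × (Fin d → ℝ) | t ≤ dotp q.1 q.2} :=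
  measurableSet_le measurable_const measurable_dotp

variable (α : Fin d → ℝ) (t : ℝ)

lemma dotpTail_nonneg (x : Fin d → ℝ) : 0 ≤ dotpTail α t x := measureReal_nonneg

lemma dotpTail_le_one (x : Fin d → ℝ) : dotpTail α t x ≤ 1 := measureReal_le_one

lemma measurable_dotpTail : Measurable (dotpTail α t) :=
  (measurable_measure_prodMk_left (measurableSet_le_dotp_prod t)).ennreal_toReal

lemma memLp_dotpTail : MemLp (dotpTail α t) 2 (gaussPi d α) :=
  MemLp.of_bound (measurable_dotpTail α t).aestronglyMeasurable 1 <| ae_of_all _ fun x => by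
    rw [Real.norm_eq_abs, abs_of_nonneg (dotpTail_nonneg α t x)]
    exact dotpTail_le_one α t x

variable {α t}

lemma IsThreshold.integral_dotpTail {p : ℝ} (hp : 0 ≤ p) (ht : IsThreshold d α p t) :
    ∫ x, dotpTail α t x ∂gaussPi d α = p := by
  have h := congrArg ENNReal.toReal ht
  rw [ENNReal.toReal_ofReal hp, ← measureReal_def,
    measureReal_prod_apply (measurableSet_le_dotp_prod t)] at h
  exact h

lemma covForm_smul_smul (r s : ℝ) (x y : Fin d → ℝ) :
    covForm α (r • x) (s • y) = r * s * covForm α x y := by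
  simp only [covForm, Pi.smul_apply, smul_eq_mul, Finset.mul_sum]
  exact Finset.sum_congr rfl fun i _ => by ring

lemma dotp_smul_left (r : ℝ) (x y : Fin d → ℝ) : dotp (r • x) y = r * dotp x y := by
  simp only [dotp, Pi.smul_apply, smul_eq_mul, Finset.mul_sum, mul_assoc]

lemma covForm_inv_sqrt_smul_self {x : Fin d → ℝ} (hx : 0 < covForm α x x) :
    covForm α ((√(covForm α x x))⁻¹ • x) ((√(covForm α x x))⁻¹ • x) = 1 := by
  rw [covForm_smul_smul, ← mul_inv, Real.mul_self_sqrt hx.le, inv_mul_cancel₀ hx.ne']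

variable (hα : ∀ i, 0 ≤ α i)
include hα

lemma dotpTail_eq_gaussianTail {x : Fin d → ℝ} (hx : 0 < covForm α x x) :
    dotpTail α t x = gaussianTail (t * (√(covForm α x x))⁻¹) := by
  have h_law := map_eq_gaussianReal_of_centered (hasGaussianLaw_dotp_prodMk α x x).fst
    (integral_dotp α x)
  rw [variance_dotp hα, ← Real.sq_sqrt hx.le] at h_law
  rw [← div_eq_mul_inv, ← gaussianReal_real_Ici (Real.sqrt_pos.2 hx), ← h_law,
    map_measureReal_apply (measurable_dotp_right x) measurableSet_Ici]
  rfl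

lemma abs_dotpTail_sub_gaussianTail_le (x : Fin d → ℝ) :
    |dotpTail α t x - gaussianTail t| ≤ (2 + |t|) * |covForm α x x - 1| := by
  rcases le_or_gt |covForm α x x - 1| (1 / 2) with hv | hv
  · rw [dotpTail_eq_gaussianTail hα (by linarith [(abs_le.1 hv).1])]
    refine (abs_gaussianTail_sub_le _ _).trans ?_
    rw [← mul_sub_one, abs_mul]
    exact mul_le_mul (by linarith) (abs_inv_sqrt_sub_one_le hv) (abs_nonneg _) (by positivity)
  · have h_le_one : |dotpTail α t x - gaussianTail t| ≤ 1 :=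
      abs_sub_le_of_nonneg_of_le (dotpTail_nonneg α t x) (dotpTail_le_one α t x)
        (gaussianTail_nonneg t) (gaussianTail_le_one t)
    nlinarith [abs_nonneg t]

lemma abs_orthant_sub_le_of_pos {x y : Fin d → ℝ} {r s : ℝ} (hr : r = (√(covForm α x x))⁻¹)
    (hs : s = (√(covForm α y y))⁻¹) (hx : 0 < covForm α x x) (hy : 0 < covForm α y y) :
    |(gaussPi d α).real {z | t ≤ dotp x z ∧ t ≤ dotp y z} - (dotpTail α t x * dotpTail α t y
        + r * s * covForm α x y * ϕ (t * r) * ϕ (t * s))|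
      ≤ (7 + (t * s) ^ 2) * (r * s * covForm α x y) ^ 2 := by
  rw [dotpTail_eq_gaussianTail hα hx, dotpTail_eq_gaussianTail hα hy, ← hr, ← hs]
  have h_unit_x : covForm α (r • x) (r • x) = 1 := hr ▸ covForm_inv_sqrt_smul_self hx
  have h_unit_y : covForm α (s • y) (s • y) = 1 := hs ▸ covForm_inv_sqrt_smul_self hy
  have hr_pos : 0 < r := hr ▸ by positivity
  have hs_pos : 0 < s := hs ▸ by positivity
  have h_cov : cov[dotp (r • x), dotp (s • y); gaussPi d α] = r * s * covForm α x y := by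
    rw [covariance_dotp hα, covForm_smul_smul]
  have h_event : {z | t * r ≤ dotp (r • x) z ∧ t * s ≤ dotp (s • y) z}
      = {z | t ≤ dotp x z ∧ t ≤ dotp y z} := by
    simp only [dotp_smul_left, mul_comm t, mul_le_mul_iff_right₀ hr_pos,
      mul_le_mul_iff_right₀ hs_pos]
  rw [← h_event, ← h_cov]
  exact abs_measureReal_le_and_le_sub_le
    (hasGaussianLaw_dotp_prodMk α (r • x) (s • y)) (integral_dotp α _) (integral_dotp α _)
    (by rw [variance_dotp hα, h_unit_x]) (by rw [variance_dotp hα, h_unit_y]) (t * r) (t * s)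

lemma abs_orthant_sub_le_of_near_unit {x y : Fin d → ℝ} (hx : |covForm α x x - 1| ≤ 1 / 2)
    (hy : |covForm α y y - 1| ≤ 1 / 2) :
    |(gaussPi d α).real {z | t ≤ dotp x z ∧ t ≤ dotp y z} - dotpTail α t x * dotpTail α t y
        - ϕ t ^ 2 * covForm α x y|
      ≤ 40 * (1 + t ^ 2) * (covForm α x y ^ 2 + (covForm α x x - 1) ^ 2
          + (covForm α y y - 1) ^ 2) := by
  have h_expand := abs_orthant_sub_le_of_pos (t := t) hα (x := x) (y := y) rfl rfl
    (by linarith [(abs_le.1 hx).1]) (by linarith [(abs_le.1 hy).1])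
  have hr_dev := abs_inv_sqrt_sub_one_le hx
  have hs_dev := abs_inv_sqrt_sub_one_le hy
  generalize (√(covForm α x x))⁻¹ = r at *
  generalize (√(covForm α y y))⁻¹ = s at *
  generalize covForm α x y = c at *
  have h_rem : (7 + (t * s) ^ 2) * (r * s * c) ^ 2 ≤ (36 + 12 * t ^ 2) * c ^ 2 := by
    have hr_sq : r ^ 2 ≤ 9 / 4 := by nlinarith [abs_le.1 (hr_dev.trans hx)]
    have hs_sq : s ^ 2 ≤ 9 / 4 := by nlinarith [abs_le.1 (hs_dev.trans hy)]
    calc (7 + (t * s) ^ 2) * (r * s * c) ^ 2 = (7 + t ^ 2 * s ^ 2) * (r ^ 2 * s ^ 2 * c ^ 2) := by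
          ring
      _ ≤ (7 + t ^ 2 * (9 / 4)) * (9 / 4 * (9 / 4) * c ^ 2) := by gcongr
      _ ≤ _ := by nlinarith [sq_nonneg c, mul_nonneg (sq_nonneg t) (sq_nonneg c)]
  have h_main : |c * (r * ϕ (t * r)) * (s * ϕ (t * s)) - ϕ t ^ 2 * c|
      ≤ 2 * (1 + t ^ 2) * (c ^ 2 + (covForm α x x - 1) ^ 2 + (covForm α y y - 1) ^ 2) := by
    refine (abs_mul_mul_sub_sq_le t c (s := s) (hr_dev.trans hx)).trans ?_
    gcongr 2 * (1 + t ^ 2) * (_ + ?_ + ?_)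
    · exact sq_le_sq.2 hr_dev
    · exact sq_le_sq.2 hs_dev
  generalize (gaussPi d α).real _ = P at *
  generalize dotpTail α t x * dotpTail α t y = G at *
  calc _ = |(P - (G + r * s * c * ϕ (t * r) * ϕ (t * s)))
            + (c * (r * ϕ (t * r)) * (s * ϕ (t * s)) - ϕ t ^ 2 * c)| := by congr 1; ring
    _ ≤ (36 + 12 * t ^ 2) * c ^ 2
          + 2 * (1 + t ^ 2) * (c ^ 2 + (covForm α x x - 1) ^ 2 + (covForm α y y - 1) ^ 2) :=
        (abs_add_le _ _).trans (add_le_add (h_expand.trans h_rem) h_main)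
    _ ≤ _ := by nlinarith [sq_nonneg c, mul_nonneg (sq_nonneg t) (sq_nonneg c),
        mul_nonneg (by positivity : 0 ≤ 1 + t ^ 2) (add_nonneg (sq_nonneg (covForm α x x - 1))
          (sq_nonneg (covForm α y y - 1)))]

/-- When a variance is far from `1` the right-hand side exceeds the trivial bound. -/
lemma abs_orthant_sub_le (x y : Fin d → ℝ) :
    |(gaussPi d α).real {z | t ≤ dotp x z ∧ t ≤ dotp y z} - dotpTail α t x * dotpTail α t y
        - ϕ t ^ 2 * covForm α x y|
      ≤ 40 * (1 + t ^ 2) * (covForm α x y ^ 2 + (covForm α x x - 1) ^ 2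
          + (covForm α y y - 1) ^ 2) := by
  by_cases h_near : |covForm α x x - 1| ≤ 1 / 2 ∧ |covForm α y y - 1| ≤ 1 / 2
  · exact abs_orthant_sub_le_of_near_unit hα h_near.1 h_near.2
  have h_far : 1 / 4 ≤ (covForm α x x - 1) ^ 2 + (covForm α y y - 1) ^ 2 := by
    rw [not_and_or, not_le, not_le] at h_near
    rw [← sq_abs (covForm α x x - 1), ← sq_abs (covForm α y y - 1)]
    rcases h_near with h | h <;>
      nlinarith [sq_nonneg |covForm α x x - 1|, sq_nonneg |covForm α y y - 1|]
  have h_prob : |(gaussPi d α).real {z | t ≤ dotp x z ∧ t ≤ dotp y z}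
      - dotpTail α t x * dotpTail α t y| ≤ 1 :=
    abs_sub_le_of_nonneg_of_le measureReal_nonneg measureReal_le_one
      (mul_nonneg (dotpTail_nonneg α t x) (dotpTail_nonneg α t y))
      (mul_le_one₀ (dotpTail_le_one α t x) (dotpTail_nonneg α t y) (dotpTail_le_one α t y))
  have h_cov : |ϕ t ^ 2 * covForm α x y| ≤ 1 + covForm α x y ^ 2 := by
    rw [abs_mul, abs_of_nonneg (sq_nonneg (ϕ t)), ← sq_abs (covForm α x y)]
    nlinarith [pow_le_one₀ (n := 2) (stdGaussianPDF_pos t).le (stdGaussianPDF_le_one t),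
      sq_nonneg (|covForm α x y| - 1), abs_nonneg (covForm α x y)]
  refine (abs_sub _ _).trans ((add_le_add h_prob h_cov).trans ?_)
  nlinarith [sq_nonneg t, sq_nonneg (covForm α x y)]

end DotTail

section ThresholdKernel

variable {d : ℕ} {α : Fin d → ℝ} {p t : ℝ}

/-- The centred edge indicator `1{⟨x, y⟩ ≥ t} - p`. -/
def thresholdKernel (p t : ℝ) (x y : Fin d → ℝ) : ℝ := (Set.Ici t).indicator 1 (dotp x y) - p

lemma thresholdKernel_comm (x y : Fin d → ℝ) :
    thresholdKernel p t x y = thresholdKernel p t y x := by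
  rw [thresholdKernel, dotp_comm, thresholdKernel]

lemma measurable_thresholdKernel :
    Measurable fun q : (Fin d → ℝ) × (Fin d → ℝ) => thresholdKernel p t q.1 q.2 :=
  ((measurable_one.indicator measurableSet_Ici).comp measurable_dotp).sub_const p

lemma abs_indicator_one_sub_le_one {Ω : Type*} (hp : p ∈ Set.Icc 0 1) (s : Set Ω) (z : Ω) :
    |s.indicator 1 z - p| ≤ 1 :=
  abs_sub_le_of_nonneg_of_le (Set.indicator_nonneg (fun _ _ => zero_le_one) _)
    (Set.indicator_le_self' (fun _ _ => zero_le_one) _) hp.1 hp.2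

lemma abs_thresholdKernel_le_one (hp : p ∈ Set.Icc 0 1) (x y : Fin d → ℝ) :
    |thresholdKernel p t x y| ≤ 1 :=
  abs_indicator_one_sub_le_one hp _ _

lemma kernelSquare_thresholdKernel (x y : Fin d → ℝ) :
    kernelSquare (gaussPi d α) (thresholdKernel p t) x y
      = (gaussPi d α).real {z | t ≤ dotp x z ∧ t ≤ dotp y z} - p * dotpTail α t x
        - p * dotpTail α t y + p ^ 2 := by
  set A := {z | t ≤ dotp x z}
  set B := {z | t ≤ dotp y z}
  have hA : MeasurableSet A := measurableSet_le_dotp t x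
  have hB : MeasurableSet B := measurableSet_le_dotp t y
  have h_int {s : Set (Fin d → ℝ)} (hs : MeasurableSet s) (c : ℝ) :
      Integrable (s.indicator fun _ => c) (gaussPi d α) := (integrable_const c).indicator hs
  have h_expand (z : Fin d → ℝ) : thresholdKernel p t x z * thresholdKernel p t y z
      = (A ∩ B).indicator (fun _ => 1) z - A.indicator (fun _ => p) z
        - B.indicator (fun _ => p) z + p ^ 2 := by
    by_cases hx : t ≤ dotp x z <;> by_cases hy : t ≤ dotp y z <;>
      simp [thresholdKernel, A, B, Set.indicator, hx, hy] <;> ring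
  simp only [kernelSquare, h_expand]
  have hAB := h_int (hA.inter hB) 1
  rw [integral_add ?_ (integrable_const _), integral_sub ?_ (h_int hB p),
    integral_sub hAB (h_int hA p), integral_indicator_const _ hA, integral_indicator_const _ hB,
    integral_indicator_const _ (hA.inter hB)]
  rotate_left
  · exact hAB.sub (h_int hA p)
  · exact (hAB.sub (h_int hA p)).sub (h_int hB p)
  simp [dotpTail, A, B, mul_comm p, Set.ofPred_and]

lemma sum_mul_self_sq (α : Fin d → ℝ) : ∑ i, (α i * α i) ^ 2 = ∑ i, α i ^ 4 :=
  Finset.sum_congr rfl fun i _ => by ring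

lemma sq_le_sq_add_two_mul_abs_sub {a b : ℝ} (ha : |a| ≤ 1) : a ^ 2 ≤ b ^ 2 + 2 * |a - b| := by
  have h_cross : a * (a - b) ≤ |a - b| := (le_abs_self _).trans <| by
    rw [abs_mul]
    exact mul_le_of_le_one_left (abs_nonneg _) ha
  nlinarith [sq_nonneg (a - b)]

variable (hα : ∀ i, 0 ≤ α i)
include hα

lemma abs_kernelSquare_thresholdKernel_sub_le (x y : Fin d → ℝ) :
    |kernelSquare (gaussPi d α) (thresholdKernel p t) x y - ϕ t ^ 2 * covForm α x y|
      ≤ 40 * (1 + t ^ 2) * (covForm α x y ^ 2 + (covForm α x x - 1) ^ 2 + (covForm α y y - 1) ^ 2)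
        + ((dotpTail α t x - p) ^ 2 + (dotpTail α t y - p) ^ 2) / 2 := by
  have h_split : kernelSquare (gaussPi d α) (thresholdKernel p t) x y - ϕ t ^ 2 * covForm α x y
      = ((gaussPi d α).real {z | t ≤ dotp x z ∧ t ≤ dotp y z} - dotpTail α t x * dotpTail α t y
          - ϕ t ^ 2 * covForm α x y) + (dotpTail α t x - p) * (dotpTail α t y - p) := by
    rw [kernelSquare_thresholdKernel]
    ring
  have h_amgm : |(dotpTail α t x - p) * (dotpTail α t y - p)|
      ≤ ((dotpTail α t x - p) ^ 2 + (dotpTail α t y - p) ^ 2) / 2 := by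
    rw [abs_le]
    constructor <;> nlinarith [sq_nonneg (dotpTail α t x - p + (dotpTail α t y - p)),
      sq_nonneg (dotpTail α t x - p - (dotpTail α t y - p))]
  rw [h_split]
  exact (abs_add_le _ _).trans (add_le_add (abs_orthant_sub_le hα x y) h_amgm)

variable (h2 : ∑ i, α i ^ 2 = 1)
include h2

lemma integral_covForm_self_sub_one_sq :
    ∫ x, (covForm α x x - 1) ^ 2 ∂gaussPi d α = gaussianSqVariance * ∑ i, α i ^ 4 := by
  have h := integral_covForm_self_sub_sq hα α
  rw [sum_mul_self_sq] at h
  simpa only [← sq, h2] using h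

omit hα h2 in
lemma integrable_covForm_self_sub_one_sq :
    Integrable (fun x => (covForm α x x - 1) ^ 2) (gaussPi d α) :=
  ((memLp_covForm_self α).sub (memLp_const 1)).integrable_sq

lemma integral_dotpTail_sub_sq_le (hp : 0 ≤ p) (ht : IsThreshold d α p t) :
    ∫ x, (dotpTail α t x - p) ^ 2 ∂gaussPi d α
      ≤ 8 * (1 + t ^ 2) * gaussianSqVariance * ∑ i, α i ^ 4 :=
  calc ∫ x, (dotpTail α t x - p) ^ 2 ∂gaussPi d α
      = Var[fun x => dotpTail α t x - gaussianTail t; gaussPi d α] := by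
        rw [variance_sub_const (memLp_dotpTail α t).aestronglyMeasurable,
          variance_eq_integral (memLp_dotpTail α t).aemeasurable, ht.integral_dotpTail hp]
    _ ≤ ∫ x, (dotpTail α t x - gaussianTail t) ^ 2 ∂gaussPi d α :=
        variance_le_expectation_sq ((memLp_dotpTail α t).sub (memLp_const _)).aestronglyMeasurable
    _ ≤ ∫ x, (2 + |t|) ^ 2 * (covForm α x x - 1) ^ 2 ∂gaussPi d α := by
        refine integral_mono ((memLp_dotpTail α t).sub (memLp_const _)).integrable_sq
          (integrable_covForm_self_sub_one_sq.const_mul _) fun x => ?_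
        simp only
        rw [← sq_abs (covForm α x x - 1), ← mul_pow]
        exact sq_le_sq.2 ((abs_dotpTail_sub_gaussianTail_le hα x).trans (le_abs_self _))
    _ = (2 + |t|) ^ 2 * (gaussianSqVariance * ∑ i, α i ^ 4) := by
        rw [integral_const_mul, integral_covForm_self_sub_one_sq hα h2]
    _ ≤ _ := by
        rw [mul_assoc]
        have := gaussianSqVariance_nonneg
        gcongr
        nlinarith [sq_abs t, sq_nonneg (|t| - 1)]

omit hα h2 in
lemma integrable_abs_kernelSquare_thresholdKernel_sub (hp : p ∈ Set.Icc 0 1) :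
    Integrable (fun q : (Fin d → ℝ) × (Fin d → ℝ) =>
      |kernelSquare (gaussPi d α) (thresholdKernel p t) q.1 q.2 - ϕ t ^ 2 * covForm α q.1 q.2|)
      ((gaussPi d α).prod (gaussPi d α)) := by
  refine (Integrable.sub (Integrable.of_bound (C := 1) ?_ ?_) ?_).abs
  · exact (measurable_kernelSquare _ measurable_thresholdKernel).aestronglyMeasurable
  · exact ae_of_all _ fun q => abs_kernelSquare_le_one _ (abs_thresholdKernel_le_one hp) _ _
  · exact ((memLp_covForm_prod α).integrable one_le_two).const_mul _

lemma integral_abs_kernelSquare_thresholdKernel_sub_le (hp : p ∈ Set.Icc 0 1)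
    (ht : IsThreshold d α p t) :
    ∫ q, |kernelSquare (gaussPi d α) (thresholdKernel p t) q.1 q.2 - ϕ t ^ 2 * covForm α q.1 q.2|
        ∂(gaussPi d α).prod (gaussPi d α)
      ≤ (1 + t ^ 2) * (40 + 88 * gaussianSqVariance) * ∑ i, α i ^ 4 := by
  let F (x : Fin d → ℝ) : ℝ :=
    40 * (1 + t ^ 2) * (covForm α x x - 1) ^ 2 + (dotpTail α t x - p) ^ 2 * (1 / 2)
  have h_dev : Integrable (fun x => 40 * (1 + t ^ 2) * (covForm α x x - 1) ^ 2) (gaussPi d α) :=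
    integrable_covForm_self_sub_one_sq.const_mul _
  have h_tail : Integrable (fun x => (dotpTail α t x - p) ^ 2 * (1 / 2)) (gaussPi d α) :=
    ((memLp_dotpTail α t).sub (memLp_const _)).integrable_sq.mul_const _
  have hF : Integrable F (gaussPi d α) := h_dev.add h_tail
  have hF_int : ∫ x, F x ∂gaussPi d α
      ≤ (1 + t ^ 2) * (44 * gaussianSqVariance) * ∑ i, α i ^ 4 := by
    rw [integral_add h_dev h_tail, integral_const_mul, integral_mul_const,
      integral_covForm_self_sub_one_sq hα h2]
    linarith [integral_dotpTail_sub_sq_le hα h2 hp.1 ht]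
  have h_cov := (memLp_covForm_prod (α := α) α).integrable_sq.const_mul (40 * (1 + t ^ 2))
  calc _ ≤ ∫ q, (40 * (1 + t ^ 2) * covForm α q.1 q.2 ^ 2 + F q.1) + F q.2
          ∂(gaussPi d α).prod (gaussPi d α) := by
        refine integral_mono (integrable_abs_kernelSquare_thresholdKernel_sub hp)
          ((h_cov.add (hF.comp_fst _)).add (hF.comp_snd _)) fun q => ?_
        refine (abs_kernelSquare_thresholdKernel_sub_le (p := p) hα q.1 q.2).trans_eq ?_
        simp only [F]
        ring
    _ = 40 * (1 + t ^ 2) * ∑ i, α i ^ 4 + ∫ x, F x ∂gaussPi d α + ∫ x, F x ∂gaussPi d α := by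
        rw [integral_add ?_ (hF.comp_snd _), integral_add h_cov (hF.comp_fst _),
          integral_const_mul, integral_covForm_sq hα, sum_mul_self_sq, integral_fun_fst,
          integral_fun_snd, probReal_univ, one_smul]
        exact h_cov.add (hF.comp_fst _)
    _ ≤ _ := by linarith

lemma integral_kernelSquare_thresholdKernel_sq_le (hp : p ∈ Set.Icc 0 1)
    (ht : IsThreshold d α p t) :
    ∫ q, kernelSquare (gaussPi d α) (thresholdKernel p t) q.1 q.2 ^ 2
        ∂(gaussPi d α).prod (gaussPi d α)
      ≤ (1 + 2 * ((1 + t ^ 2) * (40 + 88 * gaussianSqVariance))) * ∑ i, α i ^ 4 := by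
  have h_err := integral_abs_kernelSquare_thresholdKernel_sub_le hα h2 hp ht
  have h_cov := (memLp_covForm_prod (α := α) α).integrable_sq
  have h_err_int := integrable_abs_kernelSquare_thresholdKernel_sub (α := α) (t := t) hp
  calc _ ≤ ∫ q, covForm α q.1 q.2 ^ 2
            + 2 * |kernelSquare (gaussPi d α) (thresholdKernel p t) q.1 q.2
              - ϕ t ^ 2 * covForm α q.1 q.2| ∂(gaussPi d α).prod (gaussPi d α) := by
        refine integral_mono_of_nonneg (ae_of_all _ fun _ => sq_nonneg _)
          (h_cov.add (h_err_int.const_mul 2)) (ae_of_all _ fun q => ?_)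
        have hH := abs_kernelSquare_le_one (gaussPi d α) (abs_thresholdKernel_le_one (t := t) hp)
          q.1 q.2
        refine (sq_le_sq_add_two_mul_abs_sub hH).trans (add_le_add_left ?_ _)
        rw [mul_pow]
        exact mul_le_of_le_one_left (sq_nonneg _) <| pow_le_one₀ (sq_nonneg _) <|
          pow_le_one₀ (stdGaussianPDF_pos t).le (stdGaussianPDF_le_one t)
    _ = ∑ i, α i ^ 4 + 2 * ∫ q, |kernelSquare (gaussPi d α) (thresholdKernel p t) q.1 q.2
              - ϕ t ^ 2 * covForm α q.1 q.2| ∂(gaussPi d α).prod (gaussPi d α) := by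
        rw [integral_add h_cov (h_err_int.const_mul 2), integral_const_mul,
          integral_covForm_sq hα, sum_mul_self_sq]
    _ ≤ _ := by linarith

omit h2 in
lemma covForm_eq_zero_of_covForm_self_eq_zero {x : Fin d → ℝ} (hx : covForm α x x = 0)
    (y : Fin d → ℝ) : covForm α x y = 0 := by
  have h_terms := (Finset.sum_eq_zero_iff_of_nonneg fun i _ => by
    rw [mul_assoc]
    exact mul_nonneg (hα i) (mul_self_nonneg (x i))).1 hx
  refine Finset.sum_eq_zero fun i hi => ?_
  have h := h_terms i hi
  simp only [mul_eq_zero] at h ⊢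
  tauto

omit h2 in
/-- Both sides vanish when `⟨x, Z⟩` is degenerate, since then `(√0)⁻¹ = 0`. -/
lemma integral_thresholdKernel_mul_covForm (x : Fin d → ℝ) :
    ∫ y, thresholdKernel p t x y * covForm α x y ∂gaussPi d α
      = covForm (α ^ 2) x x * ((√(covForm α x x))⁻¹ * ϕ (t * (√(covForm α x x))⁻¹)) := by
  have h_ind : Integrable (fun y => (Set.Ici t).indicator 1 (dotp x y) * dotp (α * x) y)
      (gaussPi d α) := by
    refine ((memLp_dotp α (α * x)).integrable one_le_two).bdd_mul (c := 1) ?_ ?_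
    · exact ((measurable_one.indicator measurableSet_Ici).comp
        (measurable_dotp_right x)).aestronglyMeasurable
    · exact ae_of_all _ fun y => (norm_indicator_le_norm_self _ _).trans (by simp)
  have h_centre : ∫ y, thresholdKernel p t x y * covForm α x y ∂gaussPi d α
      = ∫ y, (Set.Ici t).indicator 1 (dotp x y) * dotp (α * x) y ∂gaussPi d α := by
    simp only [thresholdKernel, sub_mul, ← dotp_mul_left]
    rw [integral_sub h_ind (((memLp_dotp α (α * x)).integrable one_le_two).const_mul p),
      integral_const_mul, integral_dotp, mul_zero, sub_zero]
  rcases eq_or_ne (covForm α x x) 0 with hx | hx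
  · simp [hx, covForm_eq_zero_of_covForm_self_eq_zero hα hx]
  have hx_pos : 0 < covForm α x x := (covForm_self_nonneg hα x).lt_of_ne' hx
  have h_unit := covForm_inv_sqrt_smul_self hx_pos
  have hr_pos : 0 < (√(covForm α x x))⁻¹ := by positivity
  rw [h_centre]
  generalize (√(covForm α x x))⁻¹ = r at *
  have h_event (y : Fin d → ℝ) : (Set.Ici t).indicator (1 : ℝ → ℝ) (dotp x y)
      = (Set.Ici (t * r)).indicator 1 (dotp (r • x) y) := by
    simp only [Set.indicator, Set.mem_Ici, dotp_smul_left, mul_comm t,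
      mul_le_mul_iff_right₀ hr_pos, Pi.one_apply]
  have h_cov : covForm α (r • x) (α * x) = r * covForm (α ^ 2) x x := by
    simp only [covForm, Pi.smul_apply, Pi.mul_apply, Pi.pow_apply, smul_eq_mul, Finset.mul_sum]
    exact Finset.sum_congr rfl fun i _ => by ring
  simp only [h_event]
  rw [integral_indicator_Ici_mul_eq (hasGaussianLaw_dotp_prodMk α (r • x) (α * x))
    (integral_dotp α _) (integral_dotp α _) (by rw [variance_dotp hα, h_unit]),
    covariance_dotp hα, h_cov]
  ring

omit hα h2 in
lemma le_mul_inv_sqrt_mul_stdGaussianPDF (t : ℝ) {a b v : ℝ} (ha : 0 ≤ a) (hb : b ≤ 1) :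
    ϕ (2 * t) / 2 * (a - (a - b) ^ 2 / 2 - 6 * (v - 1) ^ 2) ≤ a * ((√v)⁻¹ * ϕ (t * (√v)⁻¹)) := by
  have h_half : 0 < ϕ (2 * t) / 2 := half_pos (stdGaussianPDF_pos _)
  by_cases hv : |v - 1| ≤ 1 / 2
  · obtain ⟨hr_ge, hr_le⟩ := abs_le.1 ((abs_inv_sqrt_sub_one_le hv).trans hv)
    have h_pdf : ϕ (2 * t) ≤ ϕ (t * (√v)⁻¹) := stdGaussianPDF_le_of_abs_le <| by
      rw [abs_mul, abs_mul, abs_of_nonneg (by positivity : 0 ≤ (√v)⁻¹), abs_two, mul_comm]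
      gcongr
      linarith
    calc _ ≤ ϕ (2 * t) / 2 * a := by
          gcongr
          nlinarith [sq_nonneg (a - b), sq_nonneg (v - 1)]
      _ = a * (1 / 2 * ϕ (2 * t)) := by ring
      _ ≤ _ := by
          have := stdGaussianPDF_pos (2 * t)
          gcongr
          linarith
  · have h_far : 1 / 4 ≤ (v - 1) ^ 2 := by
      rw [← sq_abs]
      nlinarith [not_le.1 hv]
    have := stdGaussianPDF_pos (t * (√v)⁻¹)
    exact (mul_nonpos_of_nonneg_of_nonpos h_half.le
      (by nlinarith [sq_nonneg (a - b - 1)])).trans (by positivity)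

end ThresholdKernel

section TriangleMean

variable {d : ℕ} {α : Fin d → ℝ} {p t : ℝ}

variable (hα : ∀ i, 0 ≤ α i) (h2 : ∑ i, α i ^ 2 = 1)
include hα h2

lemma le_one_of_sum_sq_eq_one (i : Fin d) : α i ≤ 1 := by
  refine (sq_le_one_iff₀ (hα i)).1 ?_
  rw [← h2]
  exact Finset.single_le_sum (f := fun i => α i ^ 2) (fun j _ => sq_nonneg _) (Finset.mem_univ i)

lemma sum_pow_le_sum_pow_of_sum_sq_eq_one {k l : ℕ} (hkl : k ≤ l) :
    ∑ i, α i ^ l ≤ ∑ i, α i ^ k :=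
  Finset.sum_le_sum fun i _ =>
    pow_le_pow_of_le_one (hα i) (le_one_of_sum_sq_eq_one hα h2 i) hkl

lemma sum_pow_three_le_one : ∑ i, α i ^ 3 ≤ 1 :=
  h2 ▸ sum_pow_le_sum_pow_of_sum_sq_eq_one hα h2 (by norm_num)

omit hα h2 in
lemma integrable_thresholdKernel_mul_covForm (hp : p ∈ Set.Icc 0 1) :
    Integrable (fun q : (Fin d → ℝ) × (Fin d → ℝ) =>
      thresholdKernel p t q.1 q.2 * covForm α q.1 q.2) ((gaussPi d α).prod (gaussPi d α)) :=
  ((memLp_covForm_prod α).integrable one_le_two).bdd_mul (c := 1)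
    measurable_thresholdKernel.aestronglyMeasurable
    (ae_of_all _ fun q => abs_thresholdKernel_le_one hp q.1 q.2)

lemma le_integral_thresholdKernel_mul_covForm (hp : p ∈ Set.Icc 0 1) :
    ϕ (2 * t) / 2 * (∑ i, α i ^ 3 - 7 * gaussianSqVariance * ∑ i, α i ^ 4)
      ≤ ∫ q, thresholdKernel p t q.1 q.2 * covForm α q.1 q.2
          ∂(gaussPi d α).prod (gaussPi d α) := by
  have h_int := integrable_thresholdKernel_mul_covForm (α := α) (t := t) hp
  have h_mean : ∑ i, (α ^ 2) i * α i = ∑ i, α i ^ 3 :=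
    Finset.sum_congr rfl fun i _ => (pow_succ _ _).symm
  have h_var : ∑ i, ((α ^ 2) i * α i) ^ 2 ≤ ∑ i, α i ^ 4 := by
    refine le_trans (Finset.sum_le_sum fun i _ => ?_)
      (sum_pow_le_sum_pow_of_sum_sq_eq_one hα h2 (by norm_num : 4 ≤ 6))
    exact (by simp only [Pi.pow_apply]; ring : ((α ^ 2) i * α i) ^ 2 = α i ^ 6).le
  have h_sq := integral_covForm_self_sub_sq hα (α ^ 2)
  have h_sq_int : Integrable (fun x => (covForm (α ^ 2) x x - ∑ i, α i ^ 3) ^ 2) (gaussPi d α) :=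
    ((memLp_covForm_self _).sub (memLp_const _)).integrable_sq
  have h_form_int := (memLp_covForm_self (α := α) (α ^ 2)).integrable one_le_two
  have h_dev_int := integrable_covForm_self_sub_one_sq (α := α)
  rw [h_mean] at h_sq
  have h_lower_int :
      Integrable (fun x => covForm (α ^ 2) x x - (covForm (α ^ 2) x x - ∑ i, α i ^ 3) ^ 2 / 2)
        (gaussPi d α) := h_form_int.sub (h_sq_int.div_const 2)
  have h_inner_int := h_int.integral_prod_left
  simp only [integral_thresholdKernel_mul_covForm hα] at h_inner_int
  calc _ ≤ ϕ (2 * t) / 2 * (∑ i, α i ^ 3 - gaussianSqVariance * (∑ i, ((α ^ 2) i * α i) ^ 2) / 2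
            - 6 * (gaussianSqVariance * ∑ i, α i ^ 4)) := by
        refine mul_le_mul_of_nonneg_left ?_ (half_pos (stdGaussianPDF_pos _)).le
        have h_scaled := mul_le_mul_of_nonneg_left h_var gaussianSqVariance_nonneg
        have h_nonneg : 0 ≤ gaussianSqVariance * ∑ i, α i ^ 4 :=
          mul_nonneg gaussianSqVariance_nonneg (Finset.sum_nonneg fun i _ => by positivity)
        linarith
    _ = ∫ x, ϕ (2 * t) / 2 * (covForm (α ^ 2) x x - (covForm (α ^ 2) x x - ∑ i, α i ^ 3) ^ 2 / 2
            - 6 * (covForm α x x - 1) ^ 2) ∂gaussPi d α := by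
        rw [integral_const_mul, integral_sub h_lower_int (h_dev_int.const_mul 6),
          integral_sub h_form_int (h_sq_int.div_const 2), integral_div, integral_const_mul, h_sq,
          integral_covForm_self hα, h_mean, integral_covForm_self_sub_one_sq hα h2]
    _ ≤ ∫ x, covForm (α ^ 2) x x * ((√(covForm α x x))⁻¹ * ϕ (t * (√(covForm α x x))⁻¹))
          ∂gaussPi d α :=
        integral_mono ((h_lower_int.sub (h_dev_int.const_mul 6)).const_mul _) h_inner_int fun x =>
          le_mul_inv_sqrt_mul_stdGaussianPDF t (covForm_self_nonneg (fun i => sq_nonneg (α i)) x)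
            (sum_pow_three_le_one hα h2)
    _ = _ := by
        rw [integral_prod _ h_int]
        simp only [integral_thresholdKernel_mul_covForm hα]

lemma le_triangleMean_thresholdKernel (hp : p ∈ Set.Icc 0 1) (ht : IsThreshold d α p t) :
    ϕ t ^ 2 * (ϕ (2 * t) / 2) * ∑ i, α i ^ 3
        - (7 * gaussianSqVariance + (1 + t ^ 2) * (40 + 88 * gaussianSqVariance)) * ∑ i, α i ^ 4
      ≤ triangleMean (gaussPi d α) (thresholdKernel p t) := by
  have h_main := le_integral_thresholdKernel_mul_covForm (t := t) hα h2 hp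
  have h_triangle := integral_mul_sub_le_triangleMean (gaussPi d α)
    (measurable_thresholdKernel (p := p) (t := t)) (abs_thresholdKernel_le_one hp)
    (((memLp_covForm_prod α).integrable one_le_two).const_mul (ϕ t ^ 2))
  simp only [mul_left_comm _ (ϕ t ^ 2), integral_const_mul] at h_triangle
  have h_pdf (s : ℝ) : 0 ≤ ϕ s ∧ ϕ s ≤ 1 := ⟨(stdGaussianPDF_pos s).le, stdGaussianPDF_le_one s⟩
  have h_weight : ϕ t ^ 2 * (ϕ (2 * t) / 2) ≤ 1 :=
    mul_le_one₀ (pow_le_one₀ (h_pdf t).1 (h_pdf t).2) (by linarith [(h_pdf (2 * t)).1])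
      (by linarith [(h_pdf (2 * t)).2])
  have h_sum : 0 ≤ gaussianSqVariance * ∑ i, α i ^ 4 :=
    mul_nonneg gaussianSqVariance_nonneg (Finset.sum_nonneg fun i _ => by positivity)
  calc _ ≤ ϕ t ^ 2 * (ϕ (2 * t) / 2 * (∑ i, α i ^ 3 - 7 * gaussianSqVariance * ∑ i, α i ^ 4))
          - (1 + t ^ 2) * (40 + 88 * gaussianSqVariance) * ∑ i, α i ^ 4 := by
        nlinarith
    _ ≤ _ := sub_le_sub (mul_le_mul_of_nonneg_left h_main (sq_nonneg _))
        (integral_abs_kernelSquare_thresholdKernel_sub_le hα h2 hp ht)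
    _ ≤ _ := h_triangle

omit h2 in
lemma IsThreshold.mul_sq_le (hp : p ∈ Set.Icc 0 1) (ht : IsThreshold d α p t) :
    p * (1 - p) * t ^ 2 ≤ ∑ i, α i ^ 2 := by
  have h_markov := mul_meas_ge_le_integral_of_nonneg (μ := (gaussPi d α).prod (gaussPi d α))
    (f := fun q => dotp q.1 q.2 ^ 2) (ae_of_all _ fun _ => sq_nonneg _)
    (by simpa only [dotp_eq_covForm_one] using (memLp_covForm_prod 1).integrable_sq) (t ^ 2)
  simp only [dotp_eq_covForm_one, integral_covForm_sq hα, Pi.one_apply, one_mul] at h_markov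
  simp only [← dotp_eq_covForm_one] at h_markov
  set P := (gaussPi d α).prod (gaussPi d α)
  have h_prob : P.real {q | t ≤ dotp q.1 q.2} = p := by
    rw [measureReal_def, ht, ENNReal.toReal_ofReal hp.1]
  have h_compl : P.real {q | t ≤ dotp q.1 q.2}ᶜ = 1 - p := by
    rw [probReal_compl_eq_one_sub (measurableSet_le_dotp_prod t), h_prob]
  rcases le_total 0 t with h_t | h_t
  · have h_sub : p ≤ P.real {q | t ^ 2 ≤ dotp q.1 q.2 ^ 2} := h_prob.symm.trans_le <|
      measureReal_mono fun q hq => pow_le_pow_left₀ h_t hq 2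
    have h_p : p * (1 - p) ≤ p := mul_le_of_le_one_right hp.1 (by linarith [hp.1])
    nlinarith [sq_nonneg t]
  · have h_sub : 1 - p ≤ P.real {q | t ^ 2 ≤ dotp q.1 q.2 ^ 2} := h_compl.symm.trans_le <|
      measureReal_mono fun q hq => by
        have h_lt : dotp q.1 q.2 < t := not_le.1 hq
        simp only [Set.mem_ofPred_eq]
        nlinarith
    have h_p : p * (1 - p) ≤ 1 - p := mul_le_of_le_one_left (by linarith [hp.2]) hp.2
    nlinarith [sq_nonneg t]

lemma IsThreshold.sq_le (hp : p ∈ Set.Ioo 0 1) (ht : IsThreshold d α p t) :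
    t ^ 2 ≤ 1 / (p * (1 - p)) := by
  have hp_pos : 0 < p * (1 - p) := mul_pos hp.1 (by linarith [hp.2])
  rw [le_div_iff₀ hp_pos, mul_comm]
  exact h2 ▸ ht.mul_sq_le hα (Set.Ioo_subset_Icc_self hp)

omit hα h2 in
lemma exists_integral_kernelSquare_thresholdKernel_sq_le (hp : p ∈ Set.Ioo 0 1) :
    ∃ C > 0, ∀ (d : ℕ) (α : Fin d → ℝ) (t : ℝ), (∀ i, 0 ≤ α i) → ∑ i, α i ^ 2 = 1 →
      IsThreshold d α p t →
      ∫ q, kernelSquare (gaussPi d α) (thresholdKernel p t) q.1 q.2 ^ 2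
        ∂(gaussPi d α).prod (gaussPi d α) ≤ C * ∑ i, α i ^ 4 := by
  have h_var := gaussianSqVariance_nonneg
  have hp_pos : 0 < p * (1 - p) := mul_pos hp.1 (by linarith [hp.2])
  refine ⟨1 + 2 * ((1 + 1 / (p * (1 - p))) * (40 + 88 * gaussianSqVariance)), by positivity,
    fun d α t hα h2 ht => ?_⟩
  refine (integral_kernelSquare_thresholdKernel_sq_le hα h2 (Set.Ioo_subset_Icc_self hp) ht).trans
    ?_
  gcongr
  exact ht.sq_le hα h2 hp

omit hα h2 in
lemma exists_le_triangleMean_thresholdKernel (hp : p ∈ Set.Ioo 0 1) :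
    ∃ ε > 0, ∃ c > 0, ∀ (d : ℕ) (α : Fin d → ℝ) (t : ℝ), (∀ i, 0 ≤ α i) → ∑ i, α i ^ 2 = 1 →
      IsThreshold d α p t → (∀ i, α i ≤ ε) →
      c * ∑ i, α i ^ 3 ≤ triangleMean (gaussPi d α) (thresholdKernel p t) := by
  have hκ := gaussianSqVariance_nonneg
  have hp_pos : 0 < p * (1 - p) := mul_pos hp.1 (by linarith [hp.2])
  set T := 1 / (p * (1 - p))
  set c := ϕ √T ^ 2 * (ϕ (2 * √T) / 2)
  set D := 7 * gaussianSqVariance + (1 + T) * (40 + 88 * gaussianSqVariance)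
  have hc : 0 < c := mul_pos (pow_pos (stdGaussianPDF_pos _) 2) (half_pos (stdGaussianPDF_pos _))
  have hD : 0 < D := by positivity
  refine ⟨c / (2 * D), by positivity, c / 2, by positivity, fun d α t hα h2 ht h_small => ?_⟩
  have h_cube := Finset.sum_nonneg fun i (_ : i ∈ Finset.univ) => pow_nonneg (hα i) 3
  have h_sum : ∑ i, α i ^ 4 ≤ c / (2 * D) * ∑ i, α i ^ 3 := by
    rw [Finset.mul_sum]
    refine Finset.sum_le_sum fun i _ => ?_
    rw [pow_succ']
    exact mul_le_mul_of_nonneg_right (h_small i) (pow_nonneg (hα i) 3)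
  have h_t : |t| ≤ |√T| := (Real.abs_le_sqrt (ht.sq_le hα h2 hp)).trans (le_abs_self _)
  have h_pdf : c ≤ ϕ t ^ 2 * (ϕ (2 * t) / 2) := by
    have h_two : ϕ (2 * √T) ≤ ϕ (2 * t) := stdGaussianPDF_le_of_abs_le <| by
      rw [abs_mul, abs_mul]
      gcongr
    have := stdGaussianPDF_pos √T
    have := stdGaussianPDF_pos (2 * √T)
    exact mul_le_mul (pow_le_pow_left₀ (by positivity) (stdGaussianPDF_le_of_abs_le h_t) 2)
      (by linarith) (by positivity) (sq_nonneg _)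
  calc c / 2 * ∑ i, α i ^ 3 = c * ∑ i, α i ^ 3 - D * (c / (2 * D) * ∑ i, α i ^ 3) := by
        field_simp
        ring
    _ ≤ ϕ t ^ 2 * (ϕ (2 * t) / 2) * ∑ i, α i ^ 3
          - (7 * gaussianSqVariance + (1 + t ^ 2) * (40 + 88 * gaussianSqVariance))
            * ∑ i, α i ^ 4 := by
        gcongr
        exact add_le_add_right (mul_le_mul_of_nonneg_right
          (add_le_add_right (ht.sq_le hα h2 hp) _) (by positivity)) _
    _ ≤ _ := le_triangleMean_thresholdKernel hα h2 (Set.Ioo_subset_Icc_self hp) ht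

end TriangleMean

section SignCorrelation

variable {d : ℕ} {α : Fin d → ℝ} {p t : ℝ}

lemma measurePreserving_mul_gaussPi (hα : ∀ i, 0 ≤ α i) (c : Fin d → ℝ) :
    MeasurePreserving (fun x => c * x) (gaussPi d α) (gaussPi d (c ^ 2 * α)) := by
  refine measurePreserving_pi (f := fun i x => c i * x) _ _ fun i => ⟨by fun_prop, ?_⟩
  rw [gaussianReal_map_const_mul, mul_zero]
  congr 1
  ext
  simp [hα i, mul_nonneg (sq_nonneg (c i)) (hα i)]

/-- The sign of the `i`-th coordinate; it vanishes at `0` since `0 / 0 = 0`. -/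
def coordSign (i : Fin d) (x : Fin d → ℝ) : ℝ := x i / |x i|

lemma measurable_coordSign (i : Fin d) : Measurable (coordSign i) := by
  unfold coordSign
  fun_prop

lemma abs_coordSign_le_one (i : Fin d) (x : Fin d → ℝ) : |coordSign i x| ≤ 1 := by
  rw [coordSign, abs_div, abs_abs]
  exact div_self_le_one _

lemma iIndepFun_mul_gaussPi_prod :
    iIndepFun (fun (i : Fin d) (q : (Fin d → ℝ) × (Fin d → ℝ)) => q.1 i * q.2 i)
      ((gaussPi d α).prod (gaussPi d α)) := by
  have h_equiv := measurePreserving_arrowProdEquivProdArrow ℝ ℝ (Fin d)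
    (fun i => gaussianReal 0 (α i).toNNReal) (fun i => gaussianReal 0 (α i).toNNReal)
  have h_pi := iIndepFun_pi (X := fun (_ : Fin d) (z : ℝ × ℝ) => z.1 * z.2)
    (μ := fun i => (gaussianReal 0 (α i).toNNReal).prod (gaussianReal 0 (α i).toNNReal))
    fun i => by fun_prop
  rw [iIndepFun_iff_map_fun_eq_pi_map fun i => by fun_prop] at h_pi ⊢
  have h_map (j : Fin d) : Measurable fun q : (Fin d → ℝ) × (Fin d → ℝ) => q.1 j * q.2 j := by
    fun_prop
  unfold gaussPi
  simp only [← h_equiv.map_eq, Measure.map_map (h_map _) h_equiv.measurable,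
    Measure.map_map (measurable_pi_lambda _ h_map) h_equiv.measurable]
  exact h_pi

lemma indepFun_mul_dotp_sub (i : Fin d) :
    IndepFun (fun q : (Fin d → ℝ) × (Fin d → ℝ) => q.1 i * q.2 i)
      (fun q => dotp q.1 q.2 - q.1 i * q.2 i) ((gaussPi d α).prod (gaussPi d α)) := by
  have h := (iIndepFun_mul_gaussPi_prod (α := α)).indepFun_finsetSum_of_notMem
    (fun j => by fun_prop) (Finset.notMem_erase i Finset.univ)
  convert! h.symm using 1
  ext q
  rw [Finset.sum_apply, dotp, ← Finset.sum_erase_add _ _ (Finset.mem_univ i), add_sub_cancel_right]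

/-- The right-hand side symmetrises the edge indicator over the reflection `x i ↦ -x i`, under
which `D = ⟨x, y⟩` loses `2 * w`, `w = x i * y i`. -/
lemma indicator_le_sign_mul_indicator_sub (t D w : ℝ) :
    {q : ℝ × ℝ | |t| + 3 ≤ q.1 ∧ |q.2| ≤ 2}.indicator 1 (w, D - w)
      ≤ w / |w| * ((Set.Ici t).indicator 1 D - (Set.Ici t).indicator 1 (D - 2 * w)) := by
  have := abs_nonneg t
  have := neg_abs_le t
  have := le_abs_self t
  simp only [Set.indicator_apply, Set.mem_ofPred_eq, Set.mem_Ici, Pi.one_apply, abs_le]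
  rcases lt_trichotomy w 0 with hw | rfl | hw
  · rw [abs_of_neg hw, div_neg, div_self hw.ne]
    split_ifs <;> linarith
  · rw [if_neg fun h => by linarith [h.1]]
    simp
  · rw [abs_of_pos hw, div_self hw.ne']
    split_ifs <;> linarith

section

variable (hα : ∀ i, 0 ≤ α i)
include hα

lemma integral_coordSign_mul_thresholdKernel (hp : p ∈ Set.Icc 0 1) (i : Fin d) :
    2 * ∫ q, coordSign i q.1 * coordSign i q.2 * thresholdKernel p t q.1 q.2
        ∂(gaussPi d α).prod (gaussPi d α)
      = ∫ q, q.1 i * q.2 i / |q.1 i * q.2 i| * ((Set.Ici t).indicator 1 (dotp q.1 q.2) -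
          (Set.Ici t).indicator 1 (dotp q.1 q.2 - 2 * (q.1 i * q.2 i)))
        ∂(gaussPi d α).prod (gaussPi d α) := by
  set F : (Fin d → ℝ) × (Fin d → ℝ) → ℝ :=
    fun q => coordSign i q.1 * coordSign i q.2 * thresholdKernel p t q.1 q.2
  set c : Fin d → ℝ := Function.update 1 i (-1)
  have h_flip : MeasurePreserving (Prod.map (c * ·) id)
      ((gaussPi d α).prod (gaussPi d α)) ((gaussPi d α).prod (gaussPi d α)) := by
    have hc : c ^ 2 * α = α := by
      ext j
      rcases eq_or_ne j i with rfl | hj <;> simp [c, *]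
    have h := measurePreserving_mul_gaussPi hα c
    rw [hc] at h
    exact h.prod (.id _)
  have hF : Integrable F ((gaussPi d α).prod (gaussPi d α)) :=
    Integrable.of_bound (((((measurable_coordSign i).comp measurable_fst).mul
      ((measurable_coordSign i).comp measurable_snd)).mul
      measurable_thresholdKernel).aestronglyMeasurable) 1 <| ae_of_all _ fun q => by
        rw [norm_eq_abs, abs_mul, abs_mul]
        exact mul_le_one₀ (mul_le_one₀ (abs_coordSign_le_one i _) (abs_nonneg _)
          (abs_coordSign_le_one i _)) (abs_nonneg _) (abs_thresholdKernel_le_one hp _ _)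
  have h_dotp (x y : Fin d → ℝ) : dotp (c * x) y = dotp x y - 2 * (x i * y i) := by
    simp only [dotp, ← Finset.add_sum_erase _ _ (Finset.mem_univ i)]
    rw [Finset.sum_congr rfl fun j hj => by
      rw [Pi.mul_apply, show c j = 1 by simp [c, Finset.ne_of_mem_erase hj], one_mul]]
    simp [c]
    ring
  have h_int := h_flip.integrable_comp_of_integrable hF
  calc 2 * ∫ q, F q ∂(gaussPi d α).prod (gaussPi d α)
      = ∫ q, F q ∂(gaussPi d α).prod (gaussPi d α)
        + ∫ q, F (Prod.map (c * ·) id q) ∂(gaussPi d α).prod (gaussPi d α) := by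
        rw [← integral_map h_flip.aemeasurable (h_flip.map_eq.symm ▸ hF.1), h_flip.map_eq, two_mul]
    _ = ∫ q, (F q + F (Prod.map (c * ·) id q)) ∂(gaussPi d α).prod (gaussPi d α) :=
        (integral_add hF h_int).symm
    _ = _ := integral_congr_ae <| ae_of_all _ fun q => by
        simp only [F, Prod.map_fst, Prod.map_snd, id, thresholdKernel, h_dotp]
        simp [coordSign, c, abs_mul]
        ring

lemma half_le_measureReal_abs_dotp_sub_le_two (h2 : ∑ i, α i ^ 2 ≤ 1) (i : Fin d) :
    1 / 2 ≤ ((gaussPi d α).prod (gaussPi d α)).real {q | |dotp q.1 q.2 - q.1 i * q.2 i| ≤ 2} := by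
  set w : Fin d → ℝ := 1 - Pi.single i 1
  have h_form (q : (Fin d → ℝ) × (Fin d → ℝ)) :
      dotp q.1 q.2 - q.1 i * q.2 i = covForm w q.1 q.2 := by
    simp [dotp, covForm, w, sub_mul, Finset.sum_sub_distrib, Pi.single_apply]
  have h_sq : ∫ q, covForm w q.1 q.2 ^ 2 ∂(gaussPi d α).prod (gaussPi d α) ≤ 1 := by
    rw [integral_covForm_sq hα]
    refine (Finset.sum_le_sum fun j _ => ?_).trans h2
    rcases eq_or_ne j i with rfl | hj
    · simp [w, sq_nonneg]
    · simp [w, hj]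
  have h_markov := mul_meas_ge_le_integral_of_nonneg (ae_of_all _ fun q => sq_nonneg _)
    (memLp_covForm_prod w).integrable_sq 4 (μ := (gaussPi d α).prod (gaussPi d α))
  have h_compl := measureReal_mono (μ := (gaussPi d α).prod (gaussPi d α))
    (s₁ := {q | |dotp q.1 q.2 - q.1 i * q.2 i| ≤ 2}ᶜ) (s₂ := {q | 4 ≤ covForm w q.1 q.2 ^ 2})
    fun q hq => by
      simp only [Set.mem_compl_iff, Set.mem_ofPred_eq, not_le, h_form] at hq ⊢
      rw [← sq_abs]
      nlinarith
  rw [probReal_compl_eq_one_sub] at h_compl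
  · linarith
  · simp only [h_form]
    exact measurableSet_le (measurable_covForm w).abs measurable_const

omit hα in
lemma measureReal_le_eval_gaussPi {i : Fin d} (hi : 0 < α i) (s : ℝ) :
    (gaussPi d α).real {x | s ≤ x i} = gaussianTail (s / √(α i)) := by
  rw [← gaussianReal_real_Ici (sqrt_pos.2 hi), sq_sqrt hi.le,
    ← (measurePreserving_eval_gaussPi α i).measureReal_preimage
      measurableSet_Ici.nullMeasurableSet]
  rfl

omit hα in
lemma gaussianTail_sq_le_measureReal_mul {s : ℝ} (hs : 0 ≤ s) {i : Fin d} (hi : 0 < α i) :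
    gaussianTail (s / √(α i)) ^ 2
      ≤ ((gaussPi d α).prod (gaussPi d α)).real {q | s ^ 2 ≤ q.1 i * q.2 i} := by
  rw [← measureReal_le_eval_gaussPi hi, sq, ← measureReal_prod_prod]
  refine measureReal_mono fun q hq => ?_
  rw [Set.mem_ofPred_eq, sq]
  exact mul_le_mul hq.1 hq.2 hs (hs.trans hq.1)

end

lemma gaussianTail_pos (s : ℝ) : 0 < gaussianTail s := by
  refine ENNReal.toReal_pos (fun h => ?_) (measure_ne_top _ _)
  simpa using gaussianReal_absolutelyContinuous' 0 one_ne_zero h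

lemma antitone_gaussianTail : Antitone gaussianTail := fun _ _ h =>
  measureReal_mono (Set.Ici_subset_Ici.2 h)

lemma le_integral_coordSign_mul_thresholdKernel (hα : ∀ i, 0 ≤ α i) (h2 : ∑ i, α i ^ 2 ≤ 1)
    (hp : p ∈ Set.Icc 0 1) {i : Fin d} (hi : 0 < α i) :
    1 / 4 * gaussianTail (√(|t| + 3) / √(α i)) ^ 2
      ≤ ∫ q, coordSign i q.1 * coordSign i q.2 * thresholdKernel p t q.1 q.2
          ∂(gaussPi d α).prod (gaussPi d α) := by
  set P := (gaussPi d α).prod (gaussPi d α)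
  have h_tail := gaussianTail_sq_le_measureReal_mul (sqrt_nonneg (|t| + 3)) hi
  rw [sq_sqrt (by positivity)] at h_tail
  set E : Set ((Fin d → ℝ) × (Fin d → ℝ)) := {q | |t| + 3 ≤ q.1 i * q.2 i}
  set E' : Set ((Fin d → ℝ) × (Fin d → ℝ)) := {q | |dotp q.1 q.2 - q.1 i * q.2 i| ≤ 2}
  have hw : Measurable fun q : (Fin d → ℝ) × (Fin d → ℝ) => q.1 i * q.2 i := by fun_prop
  have hE : MeasurableSet (E ∩ E') := (measurableSet_le measurable_const hw).inter
    (measurableSet_le (measurable_dotp.sub hw).abs measurable_const)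
  have h_indep : P.real (E ∩ E') = P.real E * P.real E' := by
    simp only [measureReal_def, ← ENNReal.toReal_mul]
    exact congrArg _ ((indepFun_mul_dotp_sub i).measure_inter_preimage_eq_mul (Set.Ici (|t| + 3))
      {r | |r| ≤ 2} measurableSet_Ici (measurableSet_le measurable_id.abs measurable_const))
  have h_ind {D : (Fin d → ℝ) × (Fin d → ℝ) → ℝ} (hD : Measurable D) :
      Integrable (fun q => (Set.Ici t).indicator (1 : ℝ → ℝ) (D q)) P :=
    (integrable_const 1).indicator (hD measurableSet_Ici)
  have h_half := half_le_measureReal_abs_dotp_sub_le_two hα h2 i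
  have h_edge : P.real (E ∩ E') ≤ ∫ q, q.1 i * q.2 i / |q.1 i * q.2 i| *
      ((Set.Ici t).indicator 1 (dotp q.1 q.2) -
        (Set.Ici t).indicator 1 (dotp q.1 q.2 - 2 * (q.1 i * q.2 i))) ∂P := by
    rw [← integral_indicator_one hE]
    exact integral_mono ((integrable_const 1).indicator hE)
      (((h_ind measurable_dotp).sub (h_ind (measurable_dotp.sub (hw.const_mul 2)))).bdd_mul
        (hw.div hw.abs).aestronglyMeasurable (c := 1) (ae_of_all _ fun q => by
          simpa only [norm_div, norm_eq_abs, abs_abs] using div_self_le_one _))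
      fun q => indicator_le_sign_mul_indicator_sub t (dotp q.1 q.2) (q.1 i * q.2 i)
  rw [h_indep, ← integral_coordSign_mul_thresholdKernel hα hp] at h_edge
  nlinarith [mul_le_mul h_tail h_half (by norm_num) measureReal_nonneg]

lemma exists_le_integral_coordSign_mul_thresholdKernel (hp : p ∈ Set.Ioo 0 1) {ε : ℝ}
    (hε : 0 < ε) :
    ∃ β > 0, ∀ (d : ℕ) (α : Fin d → ℝ) (t : ℝ) (i : Fin d), (∀ i, 0 ≤ α i) →
      ∑ i, α i ^ 2 = 1 → IsThreshold d α p t → ε ≤ α i →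
      β ≤ ∫ q, coordSign i q.1 * coordSign i q.2 * thresholdKernel p t q.1 q.2
        ∂(gaussPi d α).prod (gaussPi d α) := by
  refine ⟨1 / 4 * gaussianTail (√(√(1 / (p * (1 - p))) + 3) / √ε) ^ 2,
    mul_pos (by norm_num) (pow_pos (gaussianTail_pos _) 2), fun d α t i hα h2 ht hi => ?_⟩
  refine le_trans ?_ (le_integral_coordSign_mul_thresholdKernel hα h2.le
    (Set.Ioo_subset_Icc_self hp) (hε.trans_le hi))
  have h_t : |t| ≤ √(1 / (p * (1 - p))) := Real.abs_le_sqrt (ht.sq_le hα h2 hp)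
  refine mul_le_mul_of_nonneg_left (pow_le_pow_left₀ (gaussianTail_nonneg _)
    (antitone_gaussianTail ?_) 2) (by norm_num)
  have := sqrt_pos.2 hε
  gcongr

end SignCorrelation

section ProductMeasure

variable {ι κ S : Type*} [Fintype ι] [Fintype κ] [MeasurableSpace S]

section Resampling

variable [DecidableEq ι] {μ : Measure S} [IsProbabilityMeasure μ]

lemma measurePreserving_update_pi (μ : Measure S) [IsProbabilityMeasure μ] (a : ι) :
    MeasurePreserving (fun q : (ι → S) × S => Function.update q.1 a q.2)
      ((Measure.pi fun _ => μ).prod μ) (Measure.pi fun _ => μ) := by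
  have h_meas : Measurable fun q : (ι → S) × S => Function.update q.1 a q.2 :=
    measurable_update'
  refine ⟨h_meas, (Measure.pi_eq fun s hs => ?_).symm⟩
  have h_preimage : (fun q : (ι → S) × S => Function.update q.1 a q.2) ⁻¹' Set.univ.pi s
      = Set.univ.pi (Function.update s a Set.univ) ×ˢ s a := by
    ext q
    simp only [Set.mem_preimage, Set.mem_univ_pi, Set.mem_prod,
      Function.forall_update_iff q.1 (p := fun i x => x ∈ s i),
      Function.forall_update_iff s (p := fun i u => q.1 i ∈ u), Set.mem_univ, true_and]
    exact and_comm
  rw [Measure.map_apply h_meas (MeasurableSet.univ_pi hs), h_preimage, Measure.prod_prod,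
    Measure.pi_pi, ← Finset.prod_erase_mul _ _ (Finset.mem_univ a),
    ← Finset.prod_erase_mul (a := a) _ _ (Finset.mem_univ a), Function.update_self, measure_univ,
    mul_one]
  congr 1
  refine Finset.prod_congr rfl fun i hi => ?_
  rw [Function.update_of_ne (Finset.ne_of_mem_erase hi)]

lemma integral_pi_eq_integral_update {F : (ι → S) → ℝ}
    (hF : Integrable F (Measure.pi fun _ => μ)) (a : ι) :
    ∫ X, F X ∂(Measure.pi fun _ => μ)
      = ∫ X, ∫ z, F (Function.update X a z) ∂μ ∂(Measure.pi fun _ => μ) := by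
  have h := measurePreserving_update_pi μ a
  calc ∫ X, F X ∂(Measure.pi fun _ => μ)
      = ∫ q, F (Function.update q.1 a q.2) ∂(Measure.pi fun _ => μ).prod μ := by
        rw [← integral_map h.aemeasurable (h.map_eq.symm ▸ hF.1), h.map_eq]
    _ = _ := integral_prod _ (h.integrable_comp_of_integrable hF)

lemma integral_pi_mul_eq_integral_update_mul {F G : (ι → S) → ℝ} (a : ι)
    (hFG : Integrable (fun X => F X * G X) (Measure.pi fun _ => μ))
    (hG : ∀ X z, G (Function.update X a z) = G X) :
    ∫ X, F X * G X ∂(Measure.pi fun _ => μ)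
      = ∫ X, (∫ z, F (Function.update X a z) ∂μ) * G X ∂(Measure.pi fun _ => μ) := by
  rw [integral_pi_eq_integral_update hFG a]
  simp only [hG, integral_mul_const]

end Resampling

variable (μ : Measure S) [IsProbabilityMeasure μ]

lemma measurePreserving_comp_embedding (v : κ ↪ ι) :
    MeasurePreserving (fun X : ι → S => X ∘ v) (Measure.pi fun _ => μ)
      (Measure.pi fun _ => μ) := by
  refine ⟨by fun_prop, ?_⟩
  have h_indep : iIndepFun (fun (k : κ) (X : ι → S) => X (v k)) (Measure.pi fun _ => μ) :=
    (iIndepFun_pi (X := fun _ x => x) fun _ => aemeasurable_id).precomp v.injective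
  refine ((iIndepFun_iff_map_fun_eq_pi_map fun k =>
    (measurable_pi_apply (v k)).aemeasurable).1 h_indep).trans ?_
  congr 1 with k : 1
  exact (measurePreserving_eval (fun _ : ι => μ) (v k)).map_eq

lemma integral_comp_embedding (v : κ ↪ ι) {g : (κ → S) → ℝ} (hg : Measurable g) :
    ∫ X : ι → S, g (X ∘ v) ∂(Measure.pi fun _ => μ) = ∫ y, g y ∂(Measure.pi fun _ => μ) := by
  have h := measurePreserving_comp_embedding μ v
  rw [← h.map_eq, integral_map h.aemeasurable hg.aestronglyMeasurable]

/-- The embedding of `Fin 2` with values `a` and `b`. -/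
def pairEmbedding {a b : ι} (hab : a ≠ b) : Fin 2 ↪ ι :=
  ⟨![a, b], by simpa [Function.Injective, Fin.forall_fin_two] using ⟨hab, hab.symm⟩⟩

lemma integral_pi_pair {g : S × S → ℝ} (hg : Measurable g) {a b : ι} (hab : a ≠ b) :
    ∫ X, g (X a, X b) ∂(Measure.pi fun _ => μ) = ∫ q, g q ∂μ.prod μ := by
  have h := (measurePreserving_finTwoArrow μ).comp
    (measurePreserving_comp_embedding μ (pairEmbedding hab))
  rw [← h.map_eq, integral_map h.aemeasurable hg.aestronglyMeasurable]
  rfl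

lemma integral_pi_pair_mul_le {P : S × S → ℝ} (hP : Measurable P) (hP_le : ∀ q, |P q| ≤ 1)
    {a b a' b' : ι} (hab : a ≠ b) (hab' : a' ≠ b') :
    ∫ X, P (X a, X b) * P (X a', X b') ∂(Measure.pi fun _ => μ) ≤ ∫ q, P q ^ 2 ∂μ.prod μ := by
  have h_mem (c c' : ι) : MemLp (fun X : ι → S => P (X c, X c')) 2 (Measure.pi fun _ => μ) :=
    MemLp.of_bound (hP.comp (by fun_prop)).aestronglyMeasurable 1 (ae_of_all _ fun _ => hP_le _)
  have h_half (c c' : ι) :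
      Integrable (fun X : ι → S => P (X c, X c') ^ 2 / 2) (Measure.pi fun _ => μ) :=
    (h_mem c c').integrable_sq.div_const 2
  calc ∫ X, P (X a, X b) * P (X a', X b') ∂(Measure.pi fun _ => μ)
      ≤ ∫ X, (P (X a, X b) ^ 2 / 2 + P (X a', X b') ^ 2 / 2) ∂(Measure.pi fun _ => μ) :=
        integral_mono ((h_mem a b).integrable_mul (h_mem a' b')) ((h_half a b).add (h_half a' b'))
          fun X => by linarith [two_mul_le_add_sq (P (X a, X b)) (P (X a', X b'))]
    _ = ∫ q, P q ^ 2 ∂μ.prod μ := by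
        rw [integral_add (h_half a b) (h_half a' b'), integral_div, integral_div,
          integral_pi_pair μ (hP.pow_const 2) hab, integral_pi_pair μ (hP.pow_const 2) hab',
          add_halves]

omit [Fintype κ] in
lemma indepFun_comp_embedding {g : (κ → S) → ℝ} (hg : Measurable g) {v w : κ ↪ ι}
    (hvw : Disjoint (Set.range v) (Set.range w)) :
    IndepFun (fun X : ι → S => g (X ∘ v)) (fun X => g (X ∘ w)) (Measure.pi fun _ => μ) := by
  have h_indep : iIndepFun (fun (i : ι) (X : ι → S) => X i) (Measure.pi fun _ => μ) :=
    iIndepFun_pi (X := fun _ x => x) fun _ => aemeasurable_id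
  have := Fintype.ofInjective v v.injective
  have h_disj : Disjoint (Finset.univ.map v) (Finset.univ.map w) := by
    rw [← Finset.disjoint_coe]
    simpa using hvw
  exact (h_indep.indepFun_finset _ _ h_disj fun i => measurable_pi_apply i).comp
    (φ := fun Y => g fun k => Y ⟨v k, by simp⟩) (ψ := fun Y => g fun k => Y ⟨w k, by simp⟩)
    (hg.comp (measurable_pi_lambda _ fun _ => measurable_pi_apply _))
    (hg.comp (measurable_pi_lambda _ fun _ => measurable_pi_apply _))

end ProductMeasure

section EmbeddingCount

variable {ι κ : Type*} [Fintype ι] [Fintype κ]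

omit [Fintype ι] [Fintype κ] in
lemma exists_apply_notMem_range [Finite κ] {v w : κ ↪ ι} (hvw : Set.range v ≠ Set.range w) :
    ∃ i, v i ∉ Set.range w := by
  by_contra! h
  refine hvw (Set.eq_of_subset_of_ncard_le (Set.range_subset_iff.2 h) ?_ (Set.finite_range w))
  rw [Set.ncard_range_of_injective v.injective, Set.ncard_range_of_injective w.injective]

lemma card_embedding_le_pow : Fintype.card (κ ↪ ι) ≤ Fintype.card ι ^ Fintype.card κ := by
  rw [Fintype.card_embedding_eq]
  exact Nat.descFactorial_le_pow _ _

lemma card_filter_range_eq_le (v : κ ↪ ι) :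
    (Finset.univ.filter fun w : κ ↪ ι => Set.range v = Set.range w).card
      ≤ (Fintype.card κ).factorial := by
  have h_sub : (Finset.univ.filter fun w : κ ↪ ι => Set.range v = Set.range w)
      ⊆ Finset.univ.image fun σ : κ ↪ κ => σ.trans v := by
    intro w hw
    have h_range (k : κ) : ∃ l, v l = w k := by
      rw [← Set.mem_range, (Finset.mem_filter.1 hw).2]
      exact Set.mem_range_self k
    choose σ hσ using h_range
    have hσ_inj : Function.Injective σ := fun k l hkl =>
      w.injective (by rw [← hσ k, ← hσ l, hkl])
    exact Finset.mem_image.2 ⟨⟨σ, hσ_inj⟩, Finset.mem_univ _, DFunLike.ext _ _ hσ⟩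
  refine (Finset.card_le_card h_sub).trans (Finset.card_image_le.trans_eq ?_)
  rw [Finset.card_univ, Fintype.card_embedding_eq, Nat.descFactorial_self]

lemma card_filter_apply_eq_apply_le (i j : κ) :
    (Finset.univ.filter fun vw : (κ ↪ ι) × (κ ↪ ι) => vw.1 i = vw.2 j).card
      ≤ Fintype.card ι ^ (2 * Fintype.card κ - 1) := by
  let f (vw : (κ ↪ ι) × (κ ↪ ι)) : (κ → ι) × ({k // k ≠ j} → ι) := (vw.1, fun k => vw.2 k)
  have hf_inj : Set.InjOn f
      (Finset.univ.filter fun vw : (κ ↪ ι) × (κ ↪ ι) => vw.1 i = vw.2 j) := by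
    rintro ⟨v, w⟩ hvw ⟨v', w'⟩ hvw' h
    simp only [Finset.coe_filter, Finset.mem_univ, true_and, Set.mem_ofPred_eq] at hvw hvw'
    obtain rfl : v = v' := DFunLike.coe_injective (congrArg Prod.fst h)
    refine Prod.ext rfl (DFunLike.ext _ _ fun k => ?_)
    by_cases hk : k = j
    · rw [hk, ← hvw, hvw']
    · exact congrFun (congrArg Prod.snd h) ⟨k, hk⟩
  refine (Finset.card_le_card_of_injOn f (fun _ _ => Finset.mem_univ _) hf_inj).trans_eq ?_
  have h_pos : 0 < Fintype.card κ := Fintype.card_pos_iff.2 ⟨j⟩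
  rw [Finset.card_univ, Fintype.card_prod, Fintype.card_fun, Fintype.card_fun,
    Fintype.card_subtype_compl, Fintype.card_subtype_eq, ← pow_add]
  congr 1
  omega

omit [Fintype ι] in
lemma le_sum_ite_add_ite {c M : ℝ} {v w : κ ↪ ι} (hM : 0 ≤ M) (hc_le : c ≤ 1)
    (hc_range : Set.range v ≠ Set.range w → c ≤ M)
    (hc_disjoint : Disjoint (Set.range v) (Set.range w) → c ≤ 0) :
    c ≤ (∑ i, ∑ j, if v i = w j then 1 else 0) * M
      + if Set.range v = Set.range w then 1 else 0 := by
  have h_nonneg : 0 ≤ ∑ i, ∑ j, if v i = w j then (1 : ℝ) else 0 := by positivity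
  by_cases h_range : Set.range v = Set.range w
  · rw [if_pos h_range]
    nlinarith
  rw [if_neg h_range, add_zero]
  by_cases h_disj : Disjoint (Set.range v) (Set.range w)
  · exact (hc_disjoint h_disj).trans (by positivity)
  obtain ⟨_, ⟨i, rfl⟩, j, hij⟩ := Set.not_disjoint_iff.1 h_disj
  refine (hc_range h_range).trans (le_mul_of_one_le_left hM ?_)
  calc (1 : ℝ) = if v i = w j then 1 else 0 := (if_pos hij.symm).symm
    _ ≤ ∑ j, if v i = w j then (1 : ℝ) else 0 :=
        Finset.single_le_sum (f := fun j => if v i = w j then (1 : ℝ) else 0)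
          (fun _ _ => by positivity) (Finset.mem_univ j)
    _ ≤ ∑ i, ∑ j, if v i = w j then (1 : ℝ) else 0 :=
        Finset.single_le_sum (f := fun i => ∑ j, if v i = w j then (1 : ℝ) else 0)
          (fun _ _ => by positivity) (Finset.mem_univ i)

lemma sum_sum_ite_apply_eq_le :
    ∑ v : κ ↪ ι, ∑ w : κ ↪ ι, ∑ i, ∑ j, (if v i = w j then (1 : ℝ) else 0)
      ≤ Fintype.card κ ^ 2 * Fintype.card ι ^ (2 * Fintype.card κ - 1) := by
  calc ∑ v : κ ↪ ι, ∑ w : κ ↪ ι, ∑ i, ∑ j, (if v i = w j then (1 : ℝ) else 0)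
      = ∑ i, ∑ j,
          ((Finset.univ.filter fun vw : (κ ↪ ι) × (κ ↪ ι) => vw.1 i = vw.2 j).card : ℝ) := by
        rw [← Fintype.sum_prod_type', Finset.sum_comm]
        refine Finset.sum_congr rfl fun i _ => ?_
        rw [Finset.sum_comm]
        simp only [Finset.sum_boole]
    _ ≤ ∑ _i : κ, ∑ _j : κ, (Fintype.card ι : ℝ) ^ (2 * Fintype.card κ - 1) :=
        Finset.sum_le_sum fun i _ => Finset.sum_le_sum fun j _ =>
          mod_cast card_filter_apply_eq_apply_le i j
    _ = _ := by
        simp only [Finset.sum_const, Finset.card_univ, nsmul_eq_mul]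
        ring

lemma sum_sum_ite_range_eq_le :
    ∑ v : κ ↪ ι, ∑ w : κ ↪ ι, (if Set.range v = Set.range w then (1 : ℝ) else 0)
      ≤ (Fintype.card κ).factorial * Fintype.card ι ^ Fintype.card κ := by
  calc ∑ v : κ ↪ ι, ∑ w : κ ↪ ι, (if Set.range v = Set.range w then (1 : ℝ) else 0)
      ≤ ∑ _v : κ ↪ ι, ((Fintype.card κ).factorial : ℝ) :=
        Finset.sum_le_sum fun v _ => by
          rw [Finset.sum_boole]
          exact mod_cast card_filter_range_eq_le v
    _ ≤ _ := by
        rw [Finset.sum_const, Finset.card_univ, nsmul_eq_mul, mul_comm]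
        gcongr
        exact mod_cast card_embedding_le_pow

lemma sum_sum_embedding_le {c : (κ ↪ ι) → (κ ↪ ι) → ℝ} {M : ℝ} (hM : 0 ≤ M)
    (hc_le : ∀ v w, c v w ≤ 1)
    (hc_range : ∀ v w : κ ↪ ι, Set.range v ≠ Set.range w → c v w ≤ M)
    (hc_disjoint : ∀ v w : κ ↪ ι, Disjoint (Set.range v) (Set.range w) → c v w ≤ 0) :
    ∑ v, ∑ w, c v w ≤ Fintype.card κ ^ 2 * Fintype.card ι ^ (2 * Fintype.card κ - 1) * M
      + (Fintype.card κ).factorial * Fintype.card ι ^ Fintype.card κ := by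
  calc ∑ v, ∑ w, c v w
      ≤ ∑ v : κ ↪ ι, ∑ w : κ ↪ ι, ((∑ i, ∑ j, if v i = w j then 1 else 0) * M
          + if Set.range v = Set.range w then 1 else 0) :=
        Finset.sum_le_sum fun v _ => Finset.sum_le_sum fun w _ =>
          le_sum_ite_add_ite hM (hc_le v w) (hc_range v w) (hc_disjoint v w)
    _ = (∑ v : κ ↪ ι, ∑ w : κ ↪ ι, ∑ i, ∑ j, if v i = w j then 1 else 0) * M
          + ∑ v : κ ↪ ι, ∑ w : κ ↪ ι, if Set.range v = Set.range w then 1 else 0 := by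
        simp only [Finset.sum_add_distrib, Finset.sum_mul]
    _ ≤ _ := add_le_add
        (mul_le_mul_of_nonneg_right sum_sum_ite_apply_eq_le hM) sum_sum_ite_range_eq_le

end EmbeddingCount

section EmbeddingSum

variable {ι κ S : Type*} [Fintype ι] [Fintype κ] [MeasurableSpace S]

/-- The sum of `g` over all tuples of samples with distinct indices: the (unnormalised) U-statistic
with kernel `g`. -/
def embeddingSum (g : (κ → S) → ℝ) (X : ι → S) : ℝ := ∑ v : κ ↪ ι, g (X ∘ v)

variable (μ : Measure S) [IsProbabilityMeasure μ] {g : (κ → S) → ℝ}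

omit [Fintype κ] in
lemma memLp_comp_embedding (hg : Measurable g) (hg_le : ∀ y, |g y| ≤ 1) (v : κ ↪ ι) :
    MemLp (fun X : ι → S => g (X ∘ v)) 2 (Measure.pi fun _ => μ) :=
  MemLp.of_bound (hg.comp (by fun_prop)).aestronglyMeasurable 1 (ae_of_all _ fun _ => hg_le _)

omit [Fintype κ] in
lemma integral_mul_comp_embedding_le_one (hg_le : ∀ y, |g y| ≤ 1) (v w : κ ↪ ι) :
    ∫ X : ι → S, g (X ∘ v) * g (X ∘ w) ∂(Measure.pi fun _ => μ) ≤ 1 := by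
  have h := norm_integral_le_of_norm_le_const (μ := Measure.pi fun _ : ι => μ)
    (f := fun X : ι → S => g (X ∘ v) * g (X ∘ w)) (C := 1) <| ae_of_all _ fun X => by
      rw [norm_mul]
      exact mul_le_one₀ (hg_le _) (norm_nonneg _) (hg_le _)
  exact (le_abs_self _).trans (by simpa using h)

lemma memLp_embeddingSum (hg : Measurable g) (hg_le : ∀ y, |g y| ≤ 1) :
    MemLp (embeddingSum g) 2 (Measure.pi fun _ : ι => μ) :=
  memLp_finsetSum _ fun v _ => memLp_comp_embedding μ hg hg_le v

lemma integral_embeddingSum (hg : Measurable g) (hg_le : ∀ y, |g y| ≤ 1) :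
    ∫ X : ι → S, embeddingSum g X ∂(Measure.pi fun _ => μ)
      = (Fintype.card ι).descFactorial (Fintype.card κ) * ∫ y, g y ∂(Measure.pi fun _ => μ) := by
  simp only [embeddingSum]
  rw [integral_finsetSum _ fun v _ => (memLp_comp_embedding μ hg hg_le v).integrable one_le_two]
  simp only [integral_comp_embedding μ _ hg, Finset.sum_const, Finset.card_univ,
    Fintype.card_embedding_eq, nsmul_eq_mul]

lemma variance_embeddingSum_le (hg : Measurable g) (hg_le : ∀ y, |g y| ≤ 1) {M : ℝ} (hM : 0 ≤ M)
    (h_range : ∀ v w : κ ↪ ι, Set.range v ≠ Set.range w →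
      ∫ X : ι → S, g (X ∘ v) * g (X ∘ w) ∂(Measure.pi fun _ => μ) ≤ M) :
    Var[embeddingSum g; Measure.pi fun _ : ι => μ]
      ≤ Fintype.card κ ^ 2 * Fintype.card ι ^ (2 * Fintype.card κ - 1) * M
        + (Fintype.card κ).factorial * Fintype.card ι ^ Fintype.card κ := by
  have h_mem := memLp_comp_embedding (ι := ι) μ hg hg_le
  have h_cov (v w : κ ↪ ι) : cov[fun X : ι → S => g (X ∘ v), fun X => g (X ∘ w);
        Measure.pi fun _ => μ]
      ≤ ∫ X : ι → S, g (X ∘ v) * g (X ∘ w) ∂(Measure.pi fun _ => μ) := by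
    rw [covariance_eq_sub (h_mem v) (h_mem w), integral_comp_embedding μ v hg,
      integral_comp_embedding μ w hg]
    exact sub_le_self _ (mul_self_nonneg _)
  have h_var : Var[embeddingSum g; Measure.pi fun _ : ι => μ] = ∑ v : κ ↪ ι, ∑ w : κ ↪ ι,
      cov[fun X : ι → S => g (X ∘ v), fun X => g (X ∘ w); Measure.pi fun _ => μ] :=
    variance_fun_sum h_mem
  rw [h_var]
  exact sum_sum_embedding_le hM
    (fun v w => (h_cov v w).trans (integral_mul_comp_embedding_le_one μ hg_le v w))
    (fun v w h => (h_cov v w).trans (h_range v w h))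
    fun v w h => ((indepFun_comp_embedding μ hg h).covariance_eq_zero (h_mem v) (h_mem w)).le

end EmbeddingSum

section TriangleWeight

variable {S : Type*}

/-- The product of the weights of the three edges of a triangle of a kernel (or matrix) `K`. -/
def triangleWeight (K : S → S → ℝ) (y : Fin 3 → S) : ℝ := ∏ i, K (y i) (y (i + 1))

variable {K : S → S → ℝ}

lemma abs_triangleWeight_le_one (hK_le : ∀ x y, |K x y| ≤ 1) (y : Fin 3 → S) :
    |triangleWeight K y| ≤ 1 := by
  rw [triangleWeight, Finset.abs_prod]
  exact Finset.prod_le_one (fun _ _ => abs_nonneg _) fun _ _ => hK_le _ _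

lemma triangleWeight_update (hK_symm : ∀ x y, K x y = K y x) (y : Fin 3 → S) (i : Fin 3) (z : S) :
    triangleWeight K (Function.update y i z)
      = K (y (i + 1)) (y (i + 2)) * (K (y (i + 1)) z * K (y (i + 2)) z) := by
  rw [triangleWeight, Fin.prod_univ_three]
  fin_cases i <;> simp [Function.update, hK_symm z] <;> ring

variable [MeasurableSpace S] {ι : Type*} [Fintype ι]

lemma measurable_triangleWeight (hK : Measurable fun q : S × S => K q.1 q.2) :
    Measurable (triangleWeight K) :=
  Finset.measurable_fun_prod _ fun i _ =>
    hK.comp (f := fun y : Fin 3 → S => (y i, y (i + 1))) (by fun_prop)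

variable (μ : Measure S) [IsProbabilityMeasure μ]

omit [IsProbabilityMeasure μ] in
lemma integral_triangleWeight_update (hK_symm : ∀ x y, K x y = K y x) (y : Fin 3 → S)
    (i : Fin 3) :
    ∫ z, triangleWeight K (Function.update y i z) ∂μ
      = K (y (i + 1)) (y (i + 2)) * kernelSquare μ K (y (i + 1)) (y (i + 2)) := by
  simp only [triangleWeight_update hK_symm, integral_const_mul, kernelSquare]

lemma integral_triangleWeight (hK : Measurable fun q : S × S => K q.1 q.2)
    (hK_symm : ∀ x y, K x y = K y x) (hK_le : ∀ x y, |K x y| ≤ 1) :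
    ∫ y, triangleWeight K y ∂(Measure.pi fun _ => μ) = triangleMean μ K := by
  have h_int : Integrable (triangleWeight K) (Measure.pi fun _ => μ) :=
    Integrable.of_bound (C := 1) (measurable_triangleWeight hK).aestronglyMeasurable
      (ae_of_all _ (abs_triangleWeight_le_one hK_le))
  rw [integral_pi_eq_integral_update h_int 2]
  simp only [integral_triangleWeight_update μ hK_symm]
  exact integral_pi_pair μ (hK.mul (measurable_kernelSquare μ hK)) (by decide)

lemma integral_triangleWeight_mul (hK : Measurable fun q : S × S => K q.1 q.2)
    (hK_symm : ∀ x y, K x y = K y x) (hK_le : ∀ x y, |K x y| ≤ 1) {v : Fin 3 ↪ ι} {i : Fin 3}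
    {G : (ι → S) → ℝ} (hG : Integrable G (Measure.pi fun _ => μ))
    (hG_update : ∀ X z, G (Function.update X (v i) z) = G X) :
    ∫ X, triangleWeight K (X ∘ v) * G X ∂(Measure.pi fun _ => μ)
      = ∫ X, K (X (v (i + 1))) (X (v (i + 2)))
          * kernelSquare μ K (X (v (i + 1))) (X (v (i + 2))) * G X ∂(Measure.pi fun _ => μ) := by
  have h_int : Integrable (fun X => triangleWeight K (X ∘ v) * G X) (Measure.pi fun _ => μ) :=
    hG.bdd_mul (c := 1)
      ((measurable_triangleWeight hK).comp (f := fun X : ι → S => X ∘ v)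
        (by fun_prop)).aestronglyMeasurable
      (ae_of_all _ fun _ => abs_triangleWeight_le_one hK_le _)
  rw [integral_pi_mul_eq_integral_update_mul (v i) h_int hG_update]
  simp only [Function.update_comp_eq_of_injective _ v.injective,
    integral_triangleWeight_update μ hK_symm, Function.comp_apply]

lemma integral_triangleWeight_mul_le (hK : Measurable fun q : S × S => K q.1 q.2)
    (hK_symm : ∀ x y, K x y = K y x) (hK_le : ∀ x y, |K x y| ≤ 1) {v w : Fin 3 ↪ ι}
    (hvw : Set.range v ≠ Set.range w) :
    ∫ X : ι → S, triangleWeight K (X ∘ v) * triangleWeight K (X ∘ w) ∂(Measure.pi fun _ => μ)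
      ≤ ∫ q, kernelSquare μ K q.1 q.2 ^ 2 ∂μ.prod μ := by
  obtain ⟨i, hi⟩ := exists_apply_notMem_range hvw
  obtain ⟨j, hj⟩ := exists_apply_notMem_range hvw.symm
  let P (q : S × S) : ℝ := K q.1 q.2 * kernelSquare μ K q.1 q.2
  have hP : Measurable P := hK.mul (measurable_kernelSquare μ hK)
  have hP_le (q : S × S) : |P q| ≤ |kernelSquare μ K q.1 q.2| := by
    rw [abs_mul]
    exact mul_le_of_le_one_left (abs_nonneg _) (hK_le _ _)
  have hP_le_one (q : S × S) : |P q| ≤ 1 := (hP_le q).trans (abs_kernelSquare_le_one μ hK_le _ _)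
  have hP_int (a b : ι) : Integrable (fun X : ι → S => P (X a, X b)) (Measure.pi fun _ => μ) :=
    Integrable.of_bound (C := 1) (hP.comp (by fun_prop)).aestronglyMeasurable
      (ae_of_all _ fun _ => hP_le_one _)
  have h_ne (k : Fin 3) : v k ≠ w j := fun h => hj ⟨k, h⟩
  have h_succ (k : Fin 3) : k + 1 ≠ k + 2 := by decide +revert
  calc ∫ X : ι → S, triangleWeight K (X ∘ v) * triangleWeight K (X ∘ w) ∂(Measure.pi fun _ => μ)
      = ∫ X, P (X (v (i + 1)), X (v (i + 2))) * triangleWeight K (X ∘ w)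
          ∂(Measure.pi fun _ => μ) :=
        integral_triangleWeight_mul μ hK hK_symm hK_le
          ((memLp_comp_embedding μ (measurable_triangleWeight hK)
            (abs_triangleWeight_le_one hK_le) w).integrable one_le_two)
          fun X z => by rw [Function.update_comp_eq_of_notMem_range _ _ hi]
    _ = ∫ X, P (X (w (j + 1)), X (w (j + 2))) * P (X (v (i + 1)), X (v (i + 2)))
          ∂(Measure.pi fun _ => μ) := by
        simp only [mul_comm (P (_, _)) (triangleWeight K _)]
        exact integral_triangleWeight_mul μ hK hK_symm hK_le (hP_int _ _) fun X z => by
          simp only [Function.update_of_ne (h_ne _)]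
    _ ≤ ∫ q, P q ^ 2 ∂μ.prod μ :=
        integral_pi_pair_mul_le μ hP hP_le_one (w.injective.ne (h_succ j))
          (v.injective.ne (h_succ i))
    _ ≤ ∫ q, kernelSquare μ K q.1 q.2 ^ 2 ∂μ.prod μ :=
        integral_mono_of_nonneg (ae_of_all _ fun _ => sq_nonneg _)
          (integrable_kernelSquare_sq μ hK hK_le) (ae_of_all _ fun q => sq_le_sq.2 (hP_le q))

/-- The sum of the weights of all labelled triangles of the weighted graph with weights `A`, which
is six times the signed triangle count of the literature. -/
def triangleCount (A : ι → ι → ℝ) : ℝ := ∑ v : Fin 3 ↪ ι, triangleWeight A v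

lemma variance_triangleCount_le (hK : Measurable fun q : S × S => K q.1 q.2)
    (hK_symm : ∀ x y, K x y = K y x) (hK_le : ∀ x y, |K x y| ≤ 1) :
    Var[fun X : ι → S => triangleCount fun u v => K (X u) (X v); Measure.pi fun _ => μ]
      ≤ 9 * Fintype.card ι ^ 5 * ∫ q, kernelSquare μ K q.1 q.2 ^ 2 ∂μ.prod μ
        + 6 * Fintype.card ι ^ 3 := by
  have h := variance_embeddingSum_le (ι := ι) μ (measurable_triangleWeight hK)
    (abs_triangleWeight_le_one hK_le) (integral_nonneg fun _ => sq_nonneg _)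
    fun v w => integral_triangleWeight_mul_le μ hK hK_symm hK_le
  norm_num [Nat.factorial] at h
  exact h

end TriangleWeight

section FourCycleCount

variable {ι : Type*} [Fintype ι]

/-- The weighted number of closed walks of length four in the bipartite graph with weights `A`; for
a symmetric matrix this is the trace of `A ^ 4`. -/
def fourCycleCount (A : ι → ι → ℝ) : ℝ := ∑ b, ∑ b', (∑ a, A a b * A a b') ^ 2

lemma sq_sum_mul_le {κ : Type*} [Fintype κ] {f : κ → ℝ} (hf : ∀ k, |f k| ≤ 1) (g : κ → ℝ) :
    (∑ k, f k * g k) ^ 2 ≤ Fintype.card κ * ∑ k, g k ^ 2 := by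
  refine (Finset.sum_mul_sq_le_sq_mul_sq _ _ _).trans ?_
  gcongr
  calc ∑ k, f k ^ 2 ≤ ∑ _k : κ, (1 : ℝ) :=
        Finset.sum_le_sum fun k _ => (sq_le_one_iff_abs_le_one _).2 (hf k)
    _ = Fintype.card κ := by simp

lemma sum_sum_mul_pow_four_le {f : ι → ℝ} (hf : ∀ u, |f u| ≤ 1) (A : ι → ι → ℝ) :
    (∑ u, ∑ v, f u * f v * A u v) ^ 4 ≤ Fintype.card ι ^ 4 * fourCycleCount A := by
  have h_rows : (∑ u, ∑ v, f u * f v * A u v) ^ 2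
      ≤ Fintype.card ι * ∑ u, (∑ v, f v * A u v) ^ 2 := by
    simpa only [Finset.mul_sum, mul_assoc] using sq_sum_mul_le hf fun u => ∑ v, f v * A u v
  have h_swap : ∑ u, (∑ v, f v * A u v) ^ 2
      = ∑ q : ι × ι, f q.1 * f q.2 * ∑ a, A a q.1 * A a q.2 := by
    simp only [sq, Finset.sum_mul_sum]
    simp only [Fintype.sum_prod_type, Finset.mul_sum]
    rw [Finset.sum_comm]
    refine Finset.sum_congr rfl fun b _ => ?_
    rw [Finset.sum_comm]
    exact Finset.sum_congr rfl fun b' _ => Finset.sum_congr rfl fun a _ => by ring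
  have h_pairs : (∑ u, (∑ v, f v * A u v) ^ 2) ^ 2 ≤ Fintype.card ι ^ 2 * fourCycleCount A := by
    have h := sq_sum_mul_le (f := fun q : ι × ι => f q.1 * f q.2)
      (fun q => by rw [abs_mul]; exact mul_le_one₀ (hf _) (abs_nonneg _) (hf _))
      fun q => ∑ a, A a q.1 * A a q.2
    rw [h_swap]
    simpa [Fintype.sum_prod_type, fourCycleCount, sq] using h
  calc (∑ u, ∑ v, f u * f v * A u v) ^ 4 = ((∑ u, ∑ v, f u * f v * A u v) ^ 2) ^ 2 := by ring
    _ ≤ (Fintype.card ι * ∑ u, (∑ v, f v * A u v) ^ 2) ^ 2 :=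
        pow_le_pow_left₀ (sq_nonneg _) h_rows 2
    _ = Fintype.card ι ^ 2 * (∑ u, (∑ v, f v * A u v) ^ 2) ^ 2 := by ring
    _ ≤ Fintype.card ι ^ 2 * (Fintype.card ι ^ 2 * fourCycleCount A) := by gcongr
    _ = Fintype.card ι ^ 4 * fourCycleCount A := by ring

end FourCycleCount

section IndependentWeights

variable {ε Ω : Type*} [Fintype ε] [MeasurableSpace Ω] {ν : Measure Ω} [IsProbabilityMeasure ν]
  {M : Ω → ℝ} {κ : Type*} [Fintype κ]

lemma integrable_prod_eval (hM : Measurable M) (hM_le : ∀ z, |M z| ≤ 1) (E : κ → ε) :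
    Integrable (fun x : ε → Ω => ∏ k, M (x (E k))) (Measure.pi fun _ => ν) :=
  Integrable.of_bound (C := 1)
    (Finset.measurable_fun_prod _ fun k _ => hM.comp (measurable_pi_apply _)).aestronglyMeasurable
    (ae_of_all _ fun x => by
      rw [norm_prod]
      exact Finset.prod_le_one (fun _ _ => norm_nonneg _) fun _ _ => hM_le _)

lemma integral_prod_eval_le_one (hM : Measurable M) (hM_le : ∀ z, |M z| ≤ 1) (E : κ → ε) :
    ∫ x : ε → Ω, ∏ k, M (x (E k)) ∂(Measure.pi fun _ => ν) ≤ 1 := by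
  calc ∫ x : ε → Ω, ∏ k, M (x (E k)) ∂(Measure.pi fun _ => ν)
      ≤ ∫ _x : ε → Ω, (1 : ℝ) ∂(Measure.pi fun _ => ν) :=
        integral_mono (integrable_prod_eval hM hM_le E) (integrable_const 1) fun x => by
          refine (le_abs_self _).trans ?_
          rw [Finset.abs_prod]
          exact Finset.prod_le_one (fun _ _ => abs_nonneg _) fun _ _ => hM_le _
    _ = 1 := by simp

lemma integral_prod_eval_eq_zero (hM : Measurable M) (hM_le : ∀ z, |M z| ≤ 1)
    (hM_mean : ∫ z, M z ∂ν = 0) (E : κ → ε) {k₀ : κ} (h_ne : ∀ k ≠ k₀, E k ≠ E k₀) :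
    ∫ x : ε → Ω, ∏ k, M (x (E k)) ∂(Measure.pi fun _ => ν) = 0 := by
  have h_int := integrable_prod_eval (ν := ν) hM hM_le E
  simp only [← Finset.mul_prod_erase Finset.univ _ (Finset.mem_univ k₀)] at h_int ⊢
  rw [integral_pi_mul_eq_integral_update_mul (F := fun x => M (x (E k₀))) (E k₀) h_int]
  · simp [hM_mean]
  · exact fun x z => Finset.prod_congr rfl fun k hk => by
      rw [Function.update_of_ne (h_ne k (Finset.ne_of_mem_erase hk))]

end IndependentWeights

section RandomWeights

variable {ι Ω : Type*} {M : Ω → ℝ}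

/-- The `i`-th edge of the triangle with vertices `v`. -/
def triangleEdge (v : Fin 3 ↪ ι) (i : Fin 3) : Sym2 ι := s(v i, v (i + 1))

lemma triangleEdge_injective (v : Fin 3 ↪ ι) : Function.Injective (triangleEdge v) := by
  intro i j hij
  simp only [triangleEdge, Sym2.eq_iff, v.apply_eq_iff_eq] at hij
  revert i j
  decide

lemma exists_triangleEdge_ne {v w : Fin 3 ↪ ι} (hvw : Set.range v ≠ Set.range w) :
    ∃ i, ∀ j, triangleEdge w j ≠ triangleEdge v i := by
  obtain ⟨i, hi⟩ := exists_apply_notMem_range hvw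
  refine ⟨i, fun j hj => hi ?_⟩
  rcases Sym2.eq_iff.1 hj with ⟨h, -⟩ | ⟨-, h⟩
  · exact ⟨_, h⟩
  · exact ⟨_, h⟩

lemma triangleWeight_mul_triangleWeight (x : Sym2 ι → Ω) (v w : Fin 3 ↪ ι) :
    triangleWeight (fun u u' => M (x s(u, u'))) v * triangleWeight (fun u u' => M (x s(u, u'))) w
      = ∏ k, M (x (Sum.elim (triangleEdge v) (triangleEdge w) k)) := by
  rw [Fintype.prod_sum_type]
  rfl

/-- The matrix `A` with its diagonal replaced by zero. -/
def offDiag (A : ι → ι → ℝ) (u v : ι) : ℝ := if u = v then 0 else A u v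

/-- The product of the weights of the edges of the closed walk `a b a' b'`. -/
def fourCycleWeight (A : ι → ι → ℝ) (a a' b b' : ι) : ℝ := (A a b * A a b') * (A a' b * A a' b')

/-- The edges of the closed walk `a b a' b'`, in the order used by `fourCycleWeight`. -/
def fourCycleEdge (a a' b b' : ι) : Fin 4 → Sym2 ι := ![s(a, b), s(a, b'), s(a', b), s(a', b')]

lemma fourCycleEdge_ne_zero {a a' b b' : ι} (haa : a ≠ a') (hbb : b ≠ b') (hab : a ≠ b)
    (hab' : a ≠ b') :
    ∀ k ≠ 0, fourCycleEdge a a' b b' k ≠ fourCycleEdge a a' b b' 0 := by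
  intro k hk
  fin_cases k <;> simp_all [fourCycleEdge, eq_comm]

lemma fourCycleWeight_edge (x : Sym2 ι → Ω) (a a' b b' : ι) :
    fourCycleWeight (fun u v => M (x s(u, v))) a a' b b'
      = ∏ k, M (x (fourCycleEdge a a' b b' k)) := by
  simp [fourCycleWeight, fourCycleEdge, Fin.prod_univ_four, mul_assoc]

lemma fourCycleWeight_offDiag (A : ι → ι → ℝ) (a a' b b' : ι) :
    fourCycleWeight (offDiag A) a a' b b'
      = if a ≠ b ∧ a ≠ b' ∧ a' ≠ b ∧ a' ≠ b' then fourCycleWeight A a a' b b' else 0 := by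
  unfold fourCycleWeight offDiag
  split_ifs <;> simp_all

variable [Fintype ι]

lemma fourCycleCount_eq_sum (A : ι → ι → ℝ) :
    fourCycleCount A = ∑ b, ∑ b', ∑ a, ∑ a', fourCycleWeight A a a' b b' := by
  simp only [fourCycleCount, sq, Finset.sum_mul_sum, fourCycleWeight]

variable [MeasurableSpace Ω] {ν : Measure Ω} [IsProbabilityMeasure ν]

lemma integral_triangleWeight_mul_eq_zero (hM : Measurable M) (hM_le : ∀ z, |M z| ≤ 1)
    (hM_mean : ∫ z, M z ∂ν = 0) {v w : Fin 3 ↪ ι} (hvw : Set.range v ≠ Set.range w) :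
    ∫ x : Sym2 ι → Ω, triangleWeight (fun u u' => M (x s(u, u'))) v
      * triangleWeight (fun u u' => M (x s(u, u'))) w ∂(Measure.pi fun _ => ν) = 0 := by
  obtain ⟨i, hi⟩ := exists_triangleEdge_ne hvw
  simp only [triangleWeight_mul_triangleWeight]
  refine integral_prod_eval_eq_zero hM hM_le hM_mean _ (k₀ := Sum.inl i) ?_
  rintro (j | j) hj
  · exact (triangleEdge_injective v).ne fun h => hj (congrArg Sum.inl h)
  · exact hi j

lemma integrable_triangleWeight_mul (hM : Measurable M) (hM_le : ∀ z, |M z| ≤ 1)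
    (v w : Fin 3 ↪ ι) :
    Integrable (fun x : Sym2 ι → Ω => triangleWeight (fun u u' => M (x s(u, u'))) v
      * triangleWeight (fun u u' => M (x s(u, u'))) w) (Measure.pi fun _ => ν) := by
  simp only [triangleWeight_mul_triangleWeight]
  exact integrable_prod_eval hM hM_le _

lemma integrable_triangleCount_sq (hM : Measurable M) (hM_le : ∀ z, |M z| ≤ 1) :
    Integrable (fun x : Sym2 ι → Ω => triangleCount (fun u v => M (x s(u, v))) ^ 2)
      (Measure.pi fun _ => ν) := by
  simp only [triangleCount, sq, Finset.sum_mul_sum]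
  exact integrable_finsetSum _ fun v _ => integrable_finsetSum _ fun w _ =>
    integrable_triangleWeight_mul hM hM_le v w

lemma integral_triangleCount_sq_le (hM : Measurable M) (hM_le : ∀ z, |M z| ≤ 1)
    (hM_mean : ∫ z, M z ∂ν = 0) :
    ∫ x : Sym2 ι → Ω, triangleCount (fun u v => M (x s(u, v))) ^ 2 ∂(Measure.pi fun _ => ν)
      ≤ 6 * Fintype.card ι ^ 3 := by
  have h_int := integrable_triangleWeight_mul (ι := ι) (ν := ν) hM hM_le
  have h_le (v w : Fin 3 ↪ ι) : ∫ x : Sym2 ι → Ω, triangleWeight (fun u u' => M (x s(u, u'))) v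
      * triangleWeight (fun u u' => M (x s(u, u'))) w ∂(Measure.pi fun _ => ν)
      ≤ if Set.range v = Set.range w then 1 else 0 := by
    split_ifs with h
    · simp only [triangleWeight_mul_triangleWeight]
      exact integral_prod_eval_le_one hM hM_le _
    · exact (integral_triangleWeight_mul_eq_zero hM hM_le hM_mean h).le
  simp only [triangleCount, sq, Finset.sum_mul_sum]
  rw [integral_finsetSum _ fun v _ => integrable_finsetSum _ fun w _ => h_int v w]
  simp only [integral_finsetSum _ fun w _ => h_int _ w]
  refine (Finset.sum_le_sum fun v _ => Finset.sum_le_sum fun w _ => h_le v w).trans ?_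
  simpa [Nat.factorial] using sum_sum_ite_range_eq_le (ι := ι) (κ := Fin 3)

lemma integrable_fourCycleWeight (hM : Measurable M) (hM_le : ∀ z, |M z| ≤ 1) (a a' b b' : ι) :
    Integrable (fun x : Sym2 ι → Ω => fourCycleWeight (offDiag fun u v => M (x s(u, v))) a a' b b')
      (Measure.pi fun _ => ν) := by
  simp only [fourCycleWeight_offDiag, fourCycleWeight_edge]
  split_ifs
  · exact integrable_prod_eval hM hM_le _
  · exact integrable_zero _ _ _

lemma integral_fourCycleWeight_le (hM : Measurable M) (hM_le : ∀ z, |M z| ≤ 1)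
    (hM_mean : ∫ z, M z ∂ν = 0) (a a' b b' : ι) :
    ∫ x : Sym2 ι → Ω, fourCycleWeight (offDiag fun u v => M (x s(u, v))) a a' b b'
        ∂(Measure.pi fun _ => ν)
      ≤ (if a = a' then 1 else 0) + if b = b' then 1 else 0 := by
  have h_le := integral_prod_eval_le_one (ν := ν) hM hM_le (fourCycleEdge a a' b b')
  simp only [fourCycleWeight_offDiag, fourCycleWeight_edge]
  by_cases h : a ≠ b ∧ a ≠ b' ∧ a' ≠ b ∧ a' ≠ b'
  · simp only [if_pos h]
    split_ifs with haa hbb hbb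
    · linarith
    · linarith
    · linarith
    · exact (integral_prod_eval_eq_zero hM hM_le hM_mean _
        (fourCycleEdge_ne_zero haa hbb h.1 h.2.1)).trans_le (by norm_num)
  · simp only [if_neg h, integral_zero]
    positivity

lemma integrable_fourCycleCount_offDiag (hM : Measurable M) (hM_le : ∀ z, |M z| ≤ 1) :
    Integrable (fun x : Sym2 ι → Ω => fourCycleCount (offDiag fun u v => M (x s(u, v))))
      (Measure.pi fun _ => ν) := by
  simp only [fourCycleCount_eq_sum]
  exact integrable_finsetSum _ fun b _ => integrable_finsetSum _ fun b' _ =>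
    integrable_finsetSum _ fun a _ => integrable_finsetSum _ fun a' _ =>
      integrable_fourCycleWeight hM hM_le a a' b b'

lemma integral_fourCycleCount_offDiag_le (hM : Measurable M) (hM_le : ∀ z, |M z| ≤ 1)
    (hM_mean : ∫ z, M z ∂ν = 0) :
    ∫ x : Sym2 ι → Ω, fourCycleCount (offDiag fun u v => M (x s(u, v))) ∂(Measure.pi fun _ => ν)
      ≤ 2 * Fintype.card ι ^ 3 := by
  have h_a' := integrable_fourCycleWeight (ι := ι) (ν := ν) hM hM_le
  have h_a (b b' a : ι) := integrable_finsetSum Finset.univ fun a' _ => h_a' a a' b b'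
  have h_b' (b b' : ι) := integrable_finsetSum Finset.univ fun a _ => h_a b b' a
  have h_b (b : ι) := integrable_finsetSum Finset.univ fun b' _ => h_b' b b'
  simp only [fourCycleCount_eq_sum]
  rw [integral_finsetSum _ fun b _ => h_b b]
  simp only [integral_finsetSum _ fun b' _ => h_b' _ b', integral_finsetSum _ fun a _ => h_a _ _ a,
    integral_finsetSum _ fun a' _ => h_a' _ a' _ _]
  calc _ ≤ ∑ b : ι, ∑ b' : ι, ∑ a : ι, ∑ a' : ι,
        ((if a = a' then (1 : ℝ) else 0) + if b = b' then 1 else 0) :=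
        Finset.sum_le_sum fun b _ => Finset.sum_le_sum fun b' _ => Finset.sum_le_sum fun a _ =>
          Finset.sum_le_sum fun a' _ => integral_fourCycleWeight_le hM hM_le hM_mean a a' b b'
    _ = 2 * Fintype.card ι ^ 3 := by
        simp [Finset.sum_add_distrib]
        ring

end RandomWeights

section PairStatistic

variable {ι S : Type*} [Fintype ι]

lemma sum_embedding_fin_two (A : ι → ι → ℝ) :
    ∑ v : Fin 2 ↪ ι, A (v 0) (v 1) = ∑ u, ∑ v, offDiag A u v := by
  calc ∑ v : Fin 2 ↪ ι, A (v 0) (v 1)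
      = ∑ q ∈ Finset.univ.filter fun q : ι × ι => q.1 ≠ q.2, A q.1 q.2 := by
        refine Finset.sum_nbij (fun v => (v 0, v 1)) (fun v _ => ?_) (fun v _ w _ hvw => ?_)
          (fun q hq => ?_) fun _ _ => rfl
        · simp
        · rw [Prod.mk.injEq] at hvw
          exact DFunLike.ext _ _ (Fin.forall_fin_two.2 hvw)
        · rw [Finset.mem_coe, Finset.mem_filter] at hq
          exact ⟨pairEmbedding hq.2, by simp, rfl⟩
    _ = ∑ u, ∑ v, offDiag A u v := by
        rw [Finset.sum_filter, Fintype.sum_prod_type]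
        simp only [offDiag, ne_eq, ite_not]

/-- The contribution of a pair of samples to the correlation of the kernel `K` with `f ⊗ f`. -/
def pairWeight (f : S → ℝ) (K : S → S → ℝ) (y : Fin 2 → S) : ℝ := f (y 0) * f (y 1) * K (y 0) (y 1)

variable {f : S → ℝ} {K : S → S → ℝ}

lemma abs_pairWeight_le_one (hf_le : ∀ x, |f x| ≤ 1) (hK_le : ∀ x y, |K x y| ≤ 1) (y : Fin 2 → S) :
    |pairWeight f K y| ≤ 1 := by
  rw [pairWeight, abs_mul, abs_mul]
  exact mul_le_one₀ (mul_le_one₀ (hf_le _) (abs_nonneg _) (hf_le _)) (abs_nonneg _) (hK_le _ _)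

lemma embeddingSum_pairWeight (X : ι → S) :
    embeddingSum (pairWeight f K) X
      = ∑ u, ∑ v, f (X u) * f (X v) * offDiag (fun u v => K (X u) (X v)) u v := by
  calc embeddingSum (pairWeight f K) X
      = ∑ u, ∑ v, offDiag (fun u v => f (X u) * f (X v) * K (X u) (X v)) u v :=
        sum_embedding_fin_two fun u v => f (X u) * f (X v) * K (X u) (X v)
    _ = _ := by simp only [offDiag, mul_ite, mul_zero]

lemma embeddingSum_pairWeight_pow_four_le (hf_le : ∀ x, |f x| ≤ 1) (X : ι → S) :
    embeddingSum (pairWeight f K) X ^ 4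
      ≤ Fintype.card ι ^ 4 * fourCycleCount (offDiag fun u v => K (X u) (X v)) := by
  rw [embeddingSum_pairWeight]
  exact sum_sum_mul_pow_four_le (fun u => hf_le (X u)) _

variable [MeasurableSpace S]

lemma measurable_pairWeight (hf : Measurable f) (hK : Measurable fun q : S × S => K q.1 q.2) :
    Measurable (pairWeight f K) :=
  ((hf.comp (measurable_pi_apply 0)).mul (hf.comp (measurable_pi_apply 1))).mul
    (hK.comp (f := fun y : Fin 2 → S => (y 0, y 1)) (by fun_prop))

variable (μ : Measure S) [IsProbabilityMeasure μ]

lemma integral_pairWeight (hf : Measurable f) (hK : Measurable fun q : S × S => K q.1 q.2) :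
    ∫ y, pairWeight f K y ∂(Measure.pi fun _ => μ)
      = ∫ q, f q.1 * f q.2 * K q.1 q.2 ∂(μ.prod μ) :=
  integral_pi_pair μ (g := fun q : S × S => f q.1 * f q.2 * K q.1 q.2)
    (((hf.comp measurable_fst).mul (hf.comp measurable_snd)).mul hK) zero_ne_one

lemma variance_embeddingSum_pairWeight_le (hf : Measurable f) (hf_le : ∀ x, |f x| ≤ 1)
    (hK : Measurable fun q : S × S => K q.1 q.2) (hK_le : ∀ x y, |K x y| ≤ 1) :
    Var[embeddingSum (pairWeight f K); Measure.pi fun _ : ι => μ] ≤ 6 * Fintype.card ι ^ 3 := by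
  have h_one := abs_pairWeight_le_one hf_le hK_le
  have h_var := variance_embeddingSum_le (ι := ι) μ (measurable_pairWeight hf hK) h_one zero_le_one
    fun v w _ => integral_mul_comp_embedding_le_one μ h_one v w
  have h_card : (Fintype.card ι : ℝ) ^ 2 ≤ Fintype.card ι ^ 3 := mod_cast by
    rcases Nat.eq_zero_or_pos (Fintype.card ι) with h | h
    · simp [h]
    · exact Nat.pow_le_pow_right h (by norm_num)
  norm_num [Nat.factorial] at h_var
  linarith

end PairStatistic

section TotalVariation

variable {Ω : Type*} [MeasurableSpace Ω] {μ ν : Measure Ω} [IsProbabilityMeasure μ]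
  [IsProbabilityMeasure ν]

lemma abs_toReal_sub_toReal_le_one (s : Set Ω) : |(μ s).toReal - (ν s).toReal| ≤ 1 :=
  abs_sub_le_of_nonneg_of_le ENNReal.toReal_nonneg measureReal_le_one ENNReal.toReal_nonneg
    measureReal_le_one

lemma tvDist_le_one : tvDist μ ν ≤ 1 :=
  have : Nonempty {s : Set Ω // MeasurableSet s} := ⟨⟨∅, MeasurableSet.empty⟩⟩
  ciSup_le fun s => abs_toReal_sub_toReal_le_one s.1

lemma one_sub_le_tvDist {s : Set Ω} (hs : MeasurableSet s) {a b : ℝ} (hμ : μ.real s ≤ a)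
    (hν : ν.real sᶜ ≤ b) : 1 - (a + b) ≤ tvDist μ ν := by
  calc 1 - (a + b) ≤ -(μ.real s - ν.real s) := by
        linarith [probReal_compl_eq_one_sub (μ := ν) hs]
    _ ≤ |μ.real s - ν.real s| := neg_le_abs _
    _ ≤ tvDist μ ν :=
        le_ciSup (f := fun s : {s : Set Ω // MeasurableSet s} =>
          |(μ s.1).toReal - (ν s.1).toReal|)
          ⟨1, Set.forall_mem_range.2 fun s => abs_toReal_sub_toReal_le_one s.1⟩ ⟨s, hs⟩

omit [IsProbabilityMeasure μ] in
lemma measureReal_le_integral_div {X : Ω → ℝ} (hX : Integrable X μ) (h_nonneg : ∀ ω, 0 ≤ X ω)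
    {c : ℝ} (hc : 0 < c) : μ.real {ω | c ≤ X ω} ≤ (∫ ω, X ω ∂μ) / c := by
  rw [le_div_iff₀' hc]
  exact mul_meas_ge_le_integral_of_nonneg (ae_of_all _ h_nonneg) hX c

lemma measureReal_lt_le_variance_div {X : Ω → ℝ} (hX : MemLp X 2 μ) {c : ℝ} (hc : 0 < c)
    (h_mean : 2 * c ≤ ∫ ω, X ω ∂μ) : μ.real {ω | X ω < c} ≤ Var[X; μ] / c ^ 2 := by
  have h_sub : {ω | X ω < c} ⊆ {ω | c ≤ |X ω - ∫ ω, X ω ∂μ|} := fun ω (hω : X ω < c) => by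
    rw [Set.mem_ofPred_eq, abs_sub_comm]
    exact le_trans (by linarith) (le_abs_self _)
  exact ENNReal.toReal_le_of_le_ofReal (div_nonneg (variance_nonneg _ _) (sq_nonneg _))
    ((measure_mono h_sub).trans (meas_ge_le_variance_div_sq hX hc))

end TotalVariation

section RandomGraph

variable {n : ℕ} {p : ℝ}

/-- The adjacency matrix of `G` with `p` subtracted from its off-diagonal entries. -/
def centredAdj (p : ℝ) (G : SimpleGraph (Fin n)) : Fin n → Fin n → ℝ :=
  offDiag fun u v => (if G.Adj u v then 1 else 0) - p

/-- The centred indicator that the edge with uniform label `u` belongs to `G(n, p)`. -/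
def edgeWeight (p u : ℝ) : ℝ := (Set.Iic p).indicator 1 u - p

lemma measurable_edgeWeight : Measurable (edgeWeight p) :=
  (measurable_one.indicator measurableSet_Iic).sub_const p

lemma abs_edgeWeight_le_one (hp : p ∈ Set.Icc 0 1) (u : ℝ) : |edgeWeight p u| ≤ 1 :=
  abs_indicator_one_sub_le_one hp _ _

instance : IsProbabilityMeasure (volume.restrict (Set.Icc (0 : ℝ) 1)) := ⟨by simp⟩

lemma integral_edgeWeight (hp : p ∈ Set.Icc (0 : ℝ) 1) :
    ∫ u in Set.Icc (0 : ℝ) 1, edgeWeight p u = 0 := by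
  have h_inter : Set.Iic p ∩ Set.Icc 0 1 = Set.Icc 0 p := by
    ext u
    simp only [Set.mem_inter_iff, Set.mem_Iic, Set.mem_Icc]
    grind
  simp only [edgeWeight]
  rw [integral_sub (f := (Set.Iic p).indicator 1)
      ((integrable_const (1 : ℝ)).indicator measurableSet_Iic) (integrable_const p),
    integral_indicator_one measurableSet_Iic, measureReal_restrict_apply measurableSet_Iic, h_inter]
  simp [hp.1]

lemma measurable_simpleGraph {Ω : Type*} [MeasurableSpace Ω] {F : Ω → SimpleGraph (Fin n)}
    (hF : ∀ i j, MeasurableSet {ω | (F ω).Adj i j}) : Measurable F := by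
  refine measurable_to_countable' fun G => ?_
  have h_eq : F ⁻¹' {G} = ⋂ i, ⋂ j, {ω | (F ω).Adj i j ↔ G.Adj i j} := by
    ext ω
    simp [SimpleGraph.ext_iff, funext_iff]
  rw [h_eq]
  exact .iInter fun i => .iInter fun j => (hF i j).iff (.const _)

lemma measurable_fromRel {Ω : Type*} [MeasurableSpace Ω] {r : Ω → Fin n → Fin n → Prop}
    (hr : ∀ i j, MeasurableSet {ω | r ω i j}) :
    Measurable fun ω => SimpleGraph.fromRel (r ω) := by
  refine measurable_simpleGraph fun i j => ?_
  simp only [SimpleGraph.fromRel_adj]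
  exact (MeasurableSet.const _).inter ((hr i j).union (hr j i))

lemma measurable_erGraph : Measurable fun x : Sym2 (Fin n) → ℝ =>
    SimpleGraph.fromRel fun i j => x s(i, j) ≤ p :=
  measurable_fromRel fun _ _ => measurableSet_le (measurable_pi_apply _) measurable_const

lemma measurable_geomGraph {d : ℕ} {t : ℝ} : Measurable fun X : Fin n → Fin d → ℝ =>
    SimpleGraph.fromRel fun i j => t ≤ dotp (X i) (X j) :=
  measurable_fromRel fun _ _ => measurableSet_le measurable_const (by unfold dotp; fun_prop)

lemma centredAdj_fromRel {r : Fin n → Fin n → Prop} (hr : ∀ i j, r i j ↔ r j i) :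
    centredAdj p (SimpleGraph.fromRel r)
      = offDiag fun u v => (if r u v then 1 else 0) - p := by
  ext u v
  by_cases huv : u = v <;> simp [centredAdj, offDiag, huv, hr v u]

lemma centredAdj_erGraph (x : Sym2 (Fin n) → ℝ) :
    centredAdj p (SimpleGraph.fromRel fun i j => x s(i, j) ≤ p)
      = offDiag fun u v => edgeWeight p (x s(u, v)) := by
  rw [centredAdj_fromRel fun _ _ => by rw [Sym2.eq_swap]]
  simp [edgeWeight, Set.indicator_apply]

lemma centredAdj_geomGraph {d : ℕ} {t : ℝ} (X : Fin n → Fin d → ℝ) :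
    centredAdj p (SimpleGraph.fromRel fun i j => t ≤ dotp (X i) (X j))
      = offDiag fun u v => thresholdKernel p t (X u) (X v) := by
  rw [centredAdj_fromRel fun _ _ => by rw [dotp_comm]]
  simp [thresholdKernel, Set.indicator_apply]

instance : IsProbabilityMeasure (erGraph n p) :=
  Measure.isProbabilityMeasure_map measurable_erGraph.aemeasurable

instance {d : ℕ} {α : Fin d → ℝ} : IsProbabilityMeasure (sampleMeasure n d α) :=
  inferInstanceAs (IsProbabilityMeasure (Measure.pi fun _ => gaussPi d α))

instance {d : ℕ} {α : Fin d → ℝ} {t : ℝ} : IsProbabilityMeasure (geomGraph n d α t) :=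
  Measure.isProbabilityMeasure_map measurable_geomGraph.aemeasurable

lemma erGraph_real (s : Set (SimpleGraph (Fin n))) :
    (erGraph n p).real s
      = (Measure.pi fun _ : Sym2 (Fin n) => volume.restrict (Set.Icc (0 : ℝ) 1)).real
        ((fun x => SimpleGraph.fromRel fun i j => x s(i, j) ≤ p) ⁻¹' s) :=
  map_measureReal_apply measurable_erGraph trivial

end RandomGraph

section Detection

lemma div_pow_le_descFactorial {n k : ℕ} (hkn : k ≤ n) :
    ((n : ℝ) / k) ^ k ≤ n.descFactorial k := by
  rcases k.eq_zero_or_pos with rfl | hk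
  · simp
  have h_le : n ≤ k * (n + 1 - k) := by
    obtain ⟨m, rfl⟩ := Nat.exists_eq_add_of_le hkn
    rw [show k + m + 1 - k = m + 1 by omega]
    nlinarith
  calc ((n : ℝ) / k) ^ k ≤ ((n + 1 - k : ℕ) : ℝ) ^ k := by
        gcongr
        rw [div_le_iff₀' (by positivity)]
        exact_mod_cast h_le
    _ ≤ n.descFactorial k := by exact_mod_cast Nat.pow_sub_le_descFactorial n k

lemma triangleCount_offDiag {ι : Type*} [Fintype ι] (A : ι → ι → ℝ) :
    triangleCount (offDiag A) = triangleCount A := by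
  refine Finset.sum_congr rfl fun v _ => Finset.prod_congr rfl fun i _ => if_neg ?_
  exact v.injective.ne (by decide +revert)

lemma fourCycleCount_nonneg {ι : Type*} [Fintype ι] (A : ι → ι → ℝ) : 0 ≤ fourCycleCount A :=
  Finset.sum_nonneg fun _ _ => Finset.sum_nonneg fun _ _ => sq_nonneg _

section Sample

variable {ι S : Type*} [Fintype ι] [MeasurableSpace S] (μ : Measure S) [IsProbabilityMeasure μ]
  {K : S → S → ℝ}

lemma measureReal_triangleCount_lt_le (hK : Measurable fun q : S × S => K q.1 q.2)
    (hK_symm : ∀ x y, K x y = K y x) (hK_le : ∀ x y, |K x y| ≤ 1) (hι : 3 ≤ Fintype.card ι)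
    {m : ℝ} (hm : 0 < m) (h_mean : m ≤ triangleMean μ K) :
    (Measure.pi fun _ => μ).real
        {X : ι → S | triangleCount (fun u v => K (X u) (X v)) < Fintype.card ι ^ 3 * m / 54}
      ≤ (9 * Fintype.card ι ^ 5 * ∫ q, kernelSquare μ K q.1 q.2 ^ 2 ∂μ.prod μ
          + 6 * Fintype.card ι ^ 3) / (Fintype.card ι ^ 3 * m / 54) ^ 2 := by
  have h_fact := div_pow_le_descFactorial hι
  refine (measureReal_lt_le_variance_div (memLp_embeddingSum μ (measurable_triangleWeight hK)
    (abs_triangleWeight_le_one hK_le)) (by positivity) ?_).trans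
    (div_le_div_of_nonneg_right (variance_triangleCount_le μ hK hK_symm hK_le) (sq_nonneg _))
  rw [integral_embeddingSum μ (measurable_triangleWeight hK) (abs_triangleWeight_le_one hK_le),
    integral_triangleWeight μ hK hK_symm hK_le, Fintype.card_fin]
  calc 2 * (Fintype.card ι ^ 3 * m / 54) = ((Fintype.card ι : ℝ) / 3) ^ 3 * m := by ring
    _ ≤ (Fintype.card ι).descFactorial 3 * triangleMean μ K := by
        gcongr
        exact_mod_cast h_fact

lemma measureReal_fourCycleCount_lt_le {f : S → ℝ} (hf : Measurable f) (hf_le : ∀ x, |f x| ≤ 1)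
    (hK : Measurable fun q : S × S => K q.1 q.2) (hK_le : ∀ x y, |K x y| ≤ 1)
    (hι : 2 ≤ Fintype.card ι) {β : ℝ} (hβ : 0 < β)
    (h_mean : β ≤ ∫ q, f q.1 * f q.2 * K q.1 q.2 ∂μ.prod μ) :
    (Measure.pi fun _ => μ).real {X : ι → S |
        fourCycleCount (offDiag fun u v => K (X u) (X v)) < (Fintype.card ι * β / 8) ^ 4}
      ≤ 6 * Fintype.card ι ^ 3 / (Fintype.card ι ^ 2 * β / 8) ^ 2 := by
  have h_fact := div_pow_le_descFactorial hι
  have hg := measurable_pairWeight hf hK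
  have hg_le := abs_pairWeight_le_one hf_le hK_le
  have h_sub : {X : ι → S |
        fourCycleCount (offDiag fun u v => K (X u) (X v)) < (Fintype.card ι * β / 8) ^ 4}
      ⊆ {X | embeddingSum (pairWeight f K) X < Fintype.card ι ^ 2 * β / 8} := fun X hX => by
    refine lt_of_pow_lt_pow_left₀ (b := Fintype.card ι ^ 2 * β / 8) 4 (by positivity) ?_
    calc embeddingSum (pairWeight f K) X ^ 4
        ≤ Fintype.card ι ^ 4 * fourCycleCount (offDiag fun u v => K (X u) (X v)) :=
          embeddingSum_pairWeight_pow_four_le hf_le X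
      _ < Fintype.card ι ^ 4 * (Fintype.card ι * β / 8) ^ 4 := by
          gcongr
          exact hX
      _ = (Fintype.card ι ^ 2 * β / 8) ^ 4 := by ring
  refine (measureReal_mono h_sub).trans <| (measureReal_lt_le_variance_div
    (c := Fintype.card ι ^ 2 * β / 8) (memLp_embeddingSum μ hg hg_le) (by positivity) ?_).trans
    (div_le_div_of_nonneg_right (variance_embeddingSum_pairWeight_le μ hf hf_le hK hK_le)
      (sq_nonneg _))
  rw [integral_embeddingSum μ hg hg_le, integral_pairWeight μ hf hK, Fintype.card_fin]
  calc 2 * (Fintype.card ι ^ 2 * β / 8) = ((Fintype.card ι : ℝ) / 2) ^ 2 * β := by ring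
    _ ≤ (Fintype.card ι).descFactorial 2 * ∫ q, f q.1 * f q.2 * K q.1 q.2 ∂μ.prod μ := by
        gcongr
        exact_mod_cast h_fact

end Sample

variable {n : ℕ} {p c : ℝ}

lemma erGraph_real_le_triangleCount_le (hp : p ∈ Set.Icc (0 : ℝ) 1) (hc : 0 < c) :
    (erGraph n p).real {G | c ≤ triangleCount (centredAdj p G)} ≤ 6 * n ^ 3 / c ^ 2 := by
  have hE_le := abs_edgeWeight_le_one hp
  rw [erGraph_real]
  simp only [Set.preimage_ofPred_eq, centredAdj_erGraph, triangleCount_offDiag]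
  refine (measureReal_mono fun x (hx : c ≤ _) => pow_le_pow_left₀ hc.le hx 2).trans <|
    (measureReal_le_integral_div (integrable_triangleCount_sq measurable_edgeWeight hE_le)
      (fun _ => sq_nonneg _) (by positivity)).trans ?_
  gcongr
  simpa using integral_triangleCount_sq_le (ι := Fin n) measurable_edgeWeight hE_le
    (integral_edgeWeight hp)

lemma erGraph_real_le_fourCycleCount_le (hp : p ∈ Set.Icc (0 : ℝ) 1) (hc : 0 < c) :
    (erGraph n p).real {G | c ≤ fourCycleCount (centredAdj p G)} ≤ 2 * n ^ 3 / c := by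
  have hE_le := abs_edgeWeight_le_one hp
  rw [erGraph_real]
  simp only [Set.preimage_ofPred_eq, centredAdj_erGraph]
  refine (measureReal_le_integral_div
    (integrable_fourCycleCount_offDiag measurable_edgeWeight hE_le)
    (fun _ => fourCycleCount_nonneg _) hc).trans ?_
  gcongr
  simpa using integral_fourCycleCount_offDiag_le (ι := Fin n) measurable_edgeWeight hE_le
    (integral_edgeWeight hp)

variable {d : ℕ} {α : Fin d → ℝ} {t : ℝ}

lemma geomGraph_real (s : Set (SimpleGraph (Fin n))) :
    (geomGraph n d α t).real s = (sampleMeasure n d α).real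
      ((fun X => SimpleGraph.fromRel fun i j => t ≤ dotp (X i) (X j)) ⁻¹' s) :=
  map_measureReal_apply measurable_geomGraph trivial

lemma one_sub_le_tvDist_of_le_triangleMean (hp : p ∈ Set.Icc (0 : ℝ) 1) (hn : 3 ≤ n) {m q : ℝ}
    (hm : 0 < m) (h_mean : m ≤ triangleMean (gaussPi d α) (thresholdKernel p t))
    (hq : ∫ x, kernelSquare (gaussPi d α) (thresholdKernel p t) x.1 x.2 ^ 2
      ∂(gaussPi d α).prod (gaussPi d α) ≤ q) :
    1 - 2916 * (12 / (n ^ 3 * m ^ 2) + 9 * q / (n * m ^ 2))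
      ≤ tvDist (erGraph n p) (geomGraph n d α t) := by
  have h_er := erGraph_real_le_triangleCount_le (n := n) (c := n ^ 3 * m / 54) hp (by positivity)
  have h_geom : (geomGraph n d α t).real {G | n ^ 3 * m / 54 ≤ triangleCount (centredAdj p G)}ᶜ
      ≤ (9 * n ^ 5 * q + 6 * n ^ 3) / (n ^ 3 * m / 54) ^ 2 := by
    rw [geomGraph_real, sampleMeasure]
    simp only [Set.compl_ofPred, Set.preimage_ofPred_eq, not_le, centredAdj_geomGraph,
      triangleCount_offDiag]
    have h := measureReal_triangleCount_lt_le (ι := Fin n) (gaussPi d α)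
      (measurable_thresholdKernel (p := p) (t := t)) thresholdKernel_comm
      (abs_thresholdKernel_le_one hp) (by simpa using hn) hm h_mean
    rw [Fintype.card_fin] at h
    exact h.trans (by gcongr)
  calc 1 - 2916 * (12 / (n ^ 3 * m ^ 2) + 9 * q / (n * m ^ 2))
      = 1 - (6 * n ^ 3 / (n ^ 3 * m / 54) ^ 2
          + (9 * n ^ 5 * q + 6 * n ^ 3) / (n ^ 3 * m / 54) ^ 2) := by
        field_simp
        ring
    _ ≤ tvDist (erGraph n p) (geomGraph n d α t) :=
        one_sub_le_tvDist MeasurableSpace.measurableSet_top h_er h_geom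

lemma one_sub_le_tvDist_of_le_integral_mul_thresholdKernel (hp : p ∈ Set.Icc (0 : ℝ) 1)
    (hn : 2 ≤ n) {f : (Fin d → ℝ) → ℝ} (hf : Measurable f) (hf_le : ∀ x, |f x| ≤ 1) {β : ℝ}
    (hβ : 0 < β) (h_mean : β ≤ ∫ q, f q.1 * f q.2 * thresholdKernel p t q.1 q.2
      ∂(gaussPi d α).prod (gaussPi d α)) :
    1 - (8192 / β ^ 4 + 384 / β ^ 2) / n ≤ tvDist (erGraph n p) (geomGraph n d α t) := by
  have h_er := erGraph_real_le_fourCycleCount_le (n := n) (c := (n * β / 8) ^ 4) hp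
    (by positivity)
  have h_geom : (geomGraph n d α t).real
      {G | (n * β / 8) ^ 4 ≤ fourCycleCount (centredAdj p G)}ᶜ
      ≤ 6 * n ^ 3 / (n ^ 2 * β / 8) ^ 2 := by
    rw [geomGraph_real, sampleMeasure]
    simp only [Set.compl_ofPred, Set.preimage_ofPred_eq, not_le, centredAdj_geomGraph]
    simpa using measureReal_fourCycleCount_lt_le (ι := Fin n) (gaussPi d α) hf hf_le
      (measurable_thresholdKernel (p := p) (t := t)) (abs_thresholdKernel_le_one hp)
      (by simpa using hn) hβ h_mean
  calc 1 - (8192 / β ^ 4 + 384 / β ^ 2) / n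
      = 1 - (2 * n ^ 3 / (n * β / 8) ^ 4 + 6 * n ^ 3 / (n ^ 2 * β / 8) ^ 2) := by
        field_simp
        ring
    _ ≤ tvDist (erGraph n p) (geomGraph n d α t) :=
        one_sub_le_tvDist MeasurableSpace.measurableSet_top h_er h_geom

end Detection

section Scaling

variable {d : ℕ} {α : Fin d → ℝ} {r t : ℝ}

lemma measurePreserving_smul_gaussPi (hα : ∀ i, 0 ≤ α i) (r : ℝ) :
    MeasurePreserving (fun x => r • x) (gaussPi d α) (gaussPi d (r ^ 2 • α)) :=
  measurePreserving_mul_gaussPi hα fun _ => r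

lemma le_dotp_smul_smul_iff (hr : 0 < r) (x y : Fin d → ℝ) :
    r ^ 2 * t ≤ dotp (r • x) (r • y) ↔ t ≤ dotp x y := by
  rw [dotp_smul_left, dotp_comm, dotp_smul_left, dotp_comm, ← mul_assoc, ← sq]
  exact mul_le_mul_iff_right₀ (by positivity)

lemma IsThreshold.smul {p : ℝ} (ht : IsThreshold d α p t) (hα : ∀ i, 0 ≤ α i) (hr : 0 < r) :
    IsThreshold d (r ^ 2 • α) p (r ^ 2 * t) := by
  have h := measurePreserving_smul_gaussPi hα r
  rw [IsThreshold, ← (h.prod h).measure_preimage (measurableSet_le_dotp_prod _).nullMeasurableSet,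
    Set.preimage_ofPred_eq]
  simpa only [Prod.map_fst, Prod.map_snd, le_dotp_smul_smul_iff hr, IsThreshold] using ht

lemma geomGraph_smul (n : ℕ) (hα : ∀ i, 0 ≤ α i) (hr : 0 < r) :
    geomGraph n d (r ^ 2 • α) (r ^ 2 * t) = geomGraph n d α t := by
  have h : MeasurePreserving (fun (X : Fin n → Fin d → ℝ) i => r • X i) (sampleMeasure n d α)
      (sampleMeasure n d (r ^ 2 • α)) :=
    measurePreserving_pi _ _ fun _ => measurePreserving_smul_gaussPi hα r
  rw [geomGraph, ← h.map_eq, Measure.map_map measurable_geomGraph h.measurable, geomGraph]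
  simp only [Function.comp_def, le_dotp_smul_smul_iff hr]

lemma IsThreshold.ne_zero {p : ℝ} (ht : IsThreshold d α p t) (hp : p ∈ Set.Ioo (0 : ℝ) 1) :
    α ≠ 0 := by
  rintro rfl
  have h_dirac : gaussPi d 0 = Measure.dirac 0 := by
    have h := (measurePreserving_smul_gaussPi (α := (0 : Fin d → ℝ)) (fun _ => le_rfl) 0).map_eq
    simpa [eq_comm] using h
  have h := ht.symm
  rw [h_dirac, Measure.dirac_prod_dirac, Measure.dirac_apply' _ (measurableSet_le_dotp_prod t),
    Set.indicator_apply] at h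
  split_ifs at h
  · exact hp.2.ne (by simpa using h)
  · exact hp.1.not_ge (by simpa using h)

end Scaling

section Norms

variable {d : ℕ} {α : Fin d → ℝ} {q : ℕ}

lemma nrm_pow (hα : ∀ i, 0 ≤ α i) (hq : q ≠ 0) : nrm q α ^ q = ∑ i, α i ^ q := by
  rw [nrm, one_div, Real.rpow_inv_natCast_pow (Finset.sum_nonneg fun i _ => pow_nonneg (hα i) q) hq]

lemma nrm_pos (hα : ∀ i, 0 ≤ α i) (h_ne : α ≠ 0) : 0 < nrm q α := by
  obtain ⟨i, hi⟩ := Function.ne_iff.1 h_ne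
  exact Real.rpow_pos_of_pos (Finset.sum_pos' (fun j _ => pow_nonneg (hα j) q)
    ⟨i, Finset.mem_univ i, pow_pos ((hα i).lt_of_ne' hi) q⟩) _

lemma le_nrm (hα : ∀ i, 0 ≤ α i) (hq : q ≠ 0) (i : Fin d) : α i ≤ nrm q α := by
  have h_nonneg : 0 ≤ ∑ j, α j ^ q := Finset.sum_nonneg fun j _ => pow_nonneg (hα j) q
  refine le_of_pow_le_pow_left₀ hq (Real.rpow_nonneg h_nonneg _) ?_
  rw [nrm_pow hα hq]
  exact Finset.single_le_sum (f := fun j => α j ^ q) (fun j _ => pow_nonneg (hα j) q)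
    (Finset.mem_univ i)

lemma nrm_smul (hα : ∀ i, 0 ≤ α i) (hq : q ≠ 0) {c : ℝ} (hc : 0 ≤ c) :
    nrm q (c • α) = c * nrm q α := by
  simp only [nrm, Pi.smul_apply, smul_eq_mul, mul_pow, ← Finset.mul_sum]
  rw [Real.mul_rpow (pow_nonneg hc q) (Finset.sum_nonneg fun i _ => pow_nonneg (hα i) q), one_div,
    Real.pow_rpow_inv_natCast hc hq]

lemma sum_pow_four_pow_three_le (hα : ∀ i, 0 ≤ α i) :
    (∑ i, α i ^ 4) ^ 3 ≤ (∑ i, α i ^ 3) ^ 4 := by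
  have h_le : ∑ i, α i ^ 4 ≤ nrm 3 α * ∑ i, α i ^ 3 := by
    rw [Finset.mul_sum]
    refine Finset.sum_le_sum fun i _ => ?_
    rw [pow_succ' _ 3]
    exact mul_le_mul_of_nonneg_right (le_nrm hα three_ne_zero i) (pow_nonneg (hα i) 3)
  calc (∑ i, α i ^ 4) ^ 3 ≤ (nrm 3 α * ∑ i, α i ^ 3) ^ 3 := by
        gcongr
    _ = nrm 3 α ^ 3 * (∑ i, α i ^ 3) ^ 3 := mul_pow _ _ 3
    _ = (∑ i, α i ^ 3) ^ 4 := by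
        rw [nrm_pow hα three_ne_zero]
        ring

lemma sum_pow_four_div_le (hα : ∀ i, 0 ≤ α i) (h_pos : 0 < ∑ i, α i ^ 3) {x : ℝ} (hx : 0 < x) :
    (∑ i, α i ^ 4) / (x * (∑ i, α i ^ 3) ^ 2)
      ≤ (1 / (x ^ 3 * (∑ i, α i ^ 3) ^ 2)) ^ ((1 : ℝ) / 3) := by
  rw [one_div (3 : ℝ), Real.le_rpow_inv_iff_of_pos (by positivity) (by positivity) three_pos,
    Real.rpow_ofNat, div_pow, div_le_div_iff₀ (by positivity) (by positivity)]
  calc (∑ i, α i ^ 4) ^ 3 * (x ^ 3 * (∑ i, α i ^ 3) ^ 2)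
      ≤ (∑ i, α i ^ 3) ^ 4 * (x ^ 3 * (∑ i, α i ^ 3) ^ 2) :=
        mul_le_mul_of_nonneg_right (sum_pow_four_pow_three_le hα) (by positivity)
    _ = 1 * (x * (∑ i, α i ^ 3) ^ 2) ^ 3 := by ring

end Norms

section Asymptotics

variable {p : ℝ}

lemma exists_one_sub_le_tvDist_of_forall_le (hp : p ∈ Set.Ioo (0 : ℝ) 1) :
    ∃ ε > 0, ∃ C > 0, ∀ (n d : ℕ) (α : Fin d → ℝ) (t : ℝ), 3 ≤ n → (∀ i, 0 ≤ α i) →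
      ∑ i, α i ^ 2 = 1 → IsThreshold d α p t → (∀ i, α i ≤ ε) →
      1 - C * (1 / (n ^ 3 * (∑ i, α i ^ 3) ^ 2)
          + (1 / (n ^ 3 * (∑ i, α i ^ 3) ^ 2)) ^ ((1 : ℝ) / 3))
        ≤ tvDist (erGraph n p) (geomGraph n d α t) := by
  obtain ⟨ε, hε, c, hc, h_mean⟩ := exists_le_triangleMean_thresholdKernel hp
  obtain ⟨C, hC, h_sq⟩ := exists_integral_kernelSquare_thresholdKernel_sq_le hp
  refine ⟨ε, hε, 2916 * (12 + 9 * C) / c ^ 2, by positivity, fun n d α t hn hα h2 ht h_le => ?_⟩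
  have h_three : 0 < ∑ i, α i ^ 3 := by
    rw [← nrm_pow hα three_ne_zero]
    exact pow_pos (nrm_pos hα (ht.ne_zero hp)) 3
  have h_ratio := sum_pow_four_div_le hα h_three (x := n) (by positivity)
  set s₃ := ∑ i, α i ^ 3
  set s₄ := ∑ i, α i ^ 4
  set ρ := 1 / (n ^ 3 * s₃ ^ 2) with hρ
  have hρ_nonneg : 0 ≤ ρ := by positivity
  have hρ_root : 0 ≤ ρ ^ ((1 : ℝ) / 3) := by positivity
  calc 1 - 2916 * (12 + 9 * C) / c ^ 2 * (ρ + ρ ^ ((1 : ℝ) / 3))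
      ≤ 1 - 2916 / c ^ 2 * (12 * ρ + 9 * C * ρ ^ ((1 : ℝ) / 3)) := by
        rw [mul_div_right_comm, mul_assoc]
        gcongr
        nlinarith [mul_nonneg hC.le hρ_nonneg]
    _ ≤ 1 - 2916 / c ^ 2 * (12 * ρ + 9 * C * (s₄ / (n * s₃ ^ 2))) := by gcongr
    _ = 1 - 2916 * (12 / (n ^ 3 * (c * s₃) ^ 2) + 9 * (C * s₄) / (n * (c * s₃) ^ 2)) := by
        rw [hρ]
        field_simp
    _ ≤ tvDist (erGraph n p) (geomGraph n d α t) :=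
        one_sub_le_tvDist_of_le_triangleMean ⟨hp.1.le, hp.2.le⟩ hn (by positivity)
          (h_mean d α t hα h2 ht h_le) (h_sq d α t hα h2 ht)

lemma exists_one_sub_le_tvDist_of_sum_sq_eq_one (hp : p ∈ Set.Ioo (0 : ℝ) 1) :
    ∃ C > 0, ∀ (n d : ℕ) (α : Fin d → ℝ) (t : ℝ), 3 ≤ n → (∀ i, 0 ≤ α i) →
      ∑ i, α i ^ 2 = 1 → IsThreshold d α p t →
      1 - C * (1 / n + (1 / (n ^ 3 * (∑ i, α i ^ 3) ^ 2)
          + (1 / (n ^ 3 * (∑ i, α i ^ 3) ^ 2)) ^ ((1 : ℝ) / 3)))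
        ≤ tvDist (erGraph n p) (geomGraph n d α t) := by
  obtain ⟨ε, hε, C, hC, h_small⟩ := exists_one_sub_le_tvDist_of_forall_le hp
  obtain ⟨β, hβ, h_sign⟩ := exists_le_integral_coordSign_mul_thresholdKernel hp hε
  set D := 8192 / β ^ 4 + 384 / β ^ 2
  have hD : 0 < D := by positivity
  refine ⟨C + D, by positivity, fun n d α t hn hα h2 ht => ?_⟩
  set R := 1 / (n ^ 3 * (∑ i, α i ^ 3) ^ 2)
    + (1 / (n ^ 3 * (∑ i, α i ^ 3) ^ 2)) ^ ((1 : ℝ) / 3)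
  have hR : 0 ≤ R := by positivity
  by_cases h_le : ∀ i, α i ≤ ε
  · calc 1 - (C + D) * (1 / n + R) ≤ 1 - C * R := by
          gcongr
          · exact le_add_of_nonneg_right hD.le
          · exact le_add_of_nonneg_left (by positivity)
      _ ≤ tvDist (erGraph n p) (geomGraph n d α t) := h_small n d α t hn hα h2 ht h_le
  · obtain ⟨i, hi⟩ := not_forall.1 h_le
    calc 1 - (C + D) * (1 / n + R) ≤ 1 - D * (1 / n) := by
          gcongr
          · exact le_add_of_nonneg_left hC.le
          · exact le_add_of_nonneg_right hR
      _ = 1 - D / n := by rw [mul_one_div]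
      _ ≤ tvDist (erGraph n p) (geomGraph n d α t) :=
          one_sub_le_tvDist_of_le_integral_mul_thresholdKernel ⟨hp.1.le, hp.2.le⟩ (by omega)
            (measurable_coordSign i) (abs_coordSign_le_one i) hβ
            (h_sign d α t i hα h2 ht (not_le.1 hi).le)

lemma exists_one_sub_le_tvDist (hp : p ∈ Set.Ioo (0 : ℝ) 1) :
    ∃ C > 0, ∀ (n d : ℕ) (α : Fin d → ℝ) (t : ℝ), 3 ≤ n → (∀ i, 0 ≤ α i) →
      IsThreshold d α p t →
      1 - C * (1 / n + ((nrm 2 α / nrm 3 α) ^ 6 / n ^ 3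
          + ((nrm 2 α / nrm 3 α) ^ 6 / n ^ 3) ^ ((1 : ℝ) / 3)))
        ≤ tvDist (erGraph n p) (geomGraph n d α t) := by
  obtain ⟨C, hC, h_unit⟩ := exists_one_sub_le_tvDist_of_sum_sq_eq_one hp
  refine ⟨C, hC, fun n d α t hn hα ht => ?_⟩
  have h_two : 0 < nrm 2 α := nrm_pos hα (ht.ne_zero hp)
  set r := √(nrm 2 α)⁻¹
  have hr : 0 < r := by positivity
  have hr_sq : r ^ 2 = (nrm 2 α)⁻¹ := Real.sq_sqrt (by positivity)
  have hα_smul (i : Fin d) : 0 ≤ (r ^ 2 • α) i := mul_nonneg (sq_nonneg r) (hα i)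
  have h_norm : ∑ i, (r ^ 2 • α) i ^ 2 = 1 := by
    rw [← nrm_pow hα_smul two_ne_zero, nrm_smul hα two_ne_zero (sq_nonneg r), hr_sq,
      inv_mul_cancel₀ h_two.ne', one_pow]
  have h_ratio : (nrm 2 α / nrm 3 α) ^ 6 / n ^ 3
      = 1 / (n ^ 3 * (∑ i, (r ^ 2 • α) i ^ 3) ^ 2) := by
    rw [← nrm_pow hα_smul three_ne_zero, nrm_smul hα three_ne_zero (sq_nonneg r), hr_sq]
    field_simp
  rw [h_ratio, ← geomGraph_smul n hα hr]
  exact h_unit n d _ _ hn hα_smul h_norm (ht.smul hα hr)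

end Asymptotics

/-- Theorem 2(a). If `(‖α‖₂/‖α‖₃)⁶ / n³ → 0`, then
`TV(G(n,p), G(n,p,α)) → 1`. -/
theorem tv_tendsto_one (p : ℝ) (hp : p ∈ Set.Ioo (0 : ℝ) 1)
    (d : ℕ → ℕ) (α : (n : ℕ) → Fin (d n) → ℝ)
    (hα : ∀ n i, 0 ≤ α n i)
    (t : ℕ → ℝ) (ht : ∀ n, IsThreshold (d n) (α n) p (t n))
    (hlim : Tendsto (fun n => (nrm 2 (α n) / nrm 3 (α n)) ^ 6 / (n : ℝ) ^ 3)
      atTop (nhds 0)) :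
    Tendsto (fun n => tvDist (erGraph n p) (geomGraph n (d n) (α n) (t n)))
      atTop (nhds 1) := by
  obtain ⟨C, -, h_le⟩ := exists_one_sub_le_tvDist hp
  have h_root := hlim.rpow_const (p := (1 : ℝ) / 3) (Or.inr (by norm_num))
  rw [Real.zero_rpow (by norm_num)] at h_root
  have h_lower := (((tendsto_const_div_atTop_nhds_zero_nat (1 : ℝ)).add
    (hlim.add h_root)).const_mul C).const_sub 1
  simp only [add_zero, mul_zero, sub_zero] at h_lower
  refine tendsto_of_tendsto_of_tendsto_of_le_of_le' h_lower tendsto_const_nhds ?_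
    (.of_forall fun n => tvDist_le_one)
  filter_upwards [eventually_ge_atTop 3] with n hn
  exact h_le n (d n) (α n) (t n) hn (hα n) (ht n)

end
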